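/- Let t₁ < t₂, let c : ℝ × (t₁,t₂) → ℝ be bounded, and let v ≢ 0 be a bounded classical solution of v_t = v_xx + c(x,t)v on ℝ × (t₁,t₂). Then for each t ∈ (t₁,t₂) the zeros of v(·,t) do not accumulate in ℝ. Furthermore: (1) Z[v(·,t)] is nonincreasing in t on (t₁,t₂), and for any t'' < t' in (t₁,t₂), every sign pattern realized by v(·,t') is also realized by v(·,t''); (2) if there exist x' ∈ ℝ and t' ∈ (t₁,t₂) with v(x',t') = v_x(x',t') = 0, then Z[v(·,t)] − 2 ≥ Z[v(·,s)] ≥ 0 for all t ∈ (t₁,t') and s ∈ (t',t₂), whenever Z[v(·,t)] < ∞. -/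

import Mathlib

open Real Filter Topology Set
open scoped Classical

noncomputable section

def SignChanges (w : ℝ → ℝ) (m : ℕ) : Prop :=
  ∃ x : ℕ → ℝ, StrictMono x ∧ ∀ i < m, w (x i) * w (x (i + 1)) < 0

/-- The zero number `Z[w] ∈ {−1, 0, 1, …, ∞}` (Definition 2.1). -/
noncomputable def zeroNumber (w : ℝ → ℝ) : WithBot ℕ∞ :=
  if w = 0 then ⊥
  else ((sSup {k : ℕ∞ | ∃ m : ℕ, k = (m : ℕ∞) ∧ 1 ≤ m ∧ SignChanges w m} : ℕ∞) : WithBot ℕ∞)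

/-- `w` realizes the sign pattern `(ε 0, …, ε (m−1))`. -/
def RealizesPattern (w : ℝ → ℝ) (m : ℕ) (ε : ℕ → ℝ) : Prop :=
  ∃ x : ℕ → ℝ, StrictMono x ∧ ∀ i < m, 0 < ε i * w (x i)

/-!
*Sign patterns.* From a point `(x, t')` where `v` has sign `ε` one can travel back to any earlier
time along a continuous curve `t ↦ γ(t)` on which `v` keeps the sign `ε`, by the maximum principle
on the set of points reachable in this way. Curves of opposite signs cannot cross, so every sign
pattern realized at time `t'` is realized at earlier times.

*Local structure.* Fix `(x₀, t₀)` and let `u_ℓ(y) = v(x₀ + ℓ y, t₀ - ℓ²/2)`. The coefficients `c_j`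
of `u_ℓ` in the orthonormal basis of Hermite polynomials of `L²` of the standard Gaussian measure
satisfy `ℓ c_j' = j c_j - ℓ² φ_j` with `∑ φ_j² ≤ C² H`, where `H = ∑ c_j²`. Up to the perturbation
`c_j² ∼ ℓ^{2 j}`, so one mode `n` asymptotically carries all the energy as `ℓ → 0`, and
`H ≥ κ ℓ^{2 n + 1}`; in particular `v` cannot vanish to infinite order.

*Values at time `t₀`.* By Kato's inequality the value `v(x₀ ± ℓ, t₀)` differs from the Gaussian
average of `v` at time `t₀ - ℓ²/2` by `O(ℓ²)` times the average of `|v|`, and the average is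
controlled by the dominant mode. Hence `v(x₀ ± ℓ, t₀)² ≥ κ' ℓ^{2 n + 1}`, so zeros are isolated
and a solution that is nonzero at some time is nonzero at all later times.

*Multiple zeros.* If `v = v_x = 0` at `(x₀, t₀)`, then `v(x₀ + ℓ, t₀) = O(ℓ²)`, which forces
`n ≥ 2`. The Hermite polynomial of degree `n ≥ 2` realizes both `(+,-)` and `(-,+)`, hence so does
`v` near `x₀` just before `t₀`. One of the two pairs can be inserted into any alternating pattern
realized at time `t₀`, which yields two more sign changes at earlier times.
-/

namespace ZeroNumber

open MeasureTheory ProbabilityTheory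

local notation "γ₁" => gaussianReal 0 1


section Moments

open Polynomial

variable {μ ν : Measure ℝ}

lemma integrable_eval_of_integrableExpSet (hμ : integrableExpSet id μ = univ) (q : ℝ[X]) :
    Integrable (fun y => q.eval y) μ := by
  induction q using Polynomial.induction_on' with
  | add p q hp hq =>
    simp only [eval_add]
    exact hp.add hq
  | monomial n a =>
    have hpow : Integrable (fun y => y ^ n) μ :=
      integrable_pow_of_mem_interior_integrableExpSet (X := id) (by simp [hμ]) n
    simp only [eval_monomial]
    exact hpow.const_mul a

lemma memLp_eval_of_integrableExpSet (hμ : integrableExpSet id μ = univ) (q : ℝ[X]) :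
    MemLp (fun y => q.eval y) 2 μ := by
  rw [memLp_two_iff_integrable_sq (by fun_prop)]
  simp only [← eval_pow]
  exact integrable_eval_of_integrableExpSet hμ (q ^ 2)

lemma memLp_exp_of_integrableExpSet (hμ : integrableExpSet id μ = univ) (t : ℝ) :
    MemLp (fun y => rexp (t * y)) 2 μ := by
  rw [memLp_two_iff_integrable_sq (by fun_prop)]
  have hinteg : Integrable (fun y => rexp (2 * t * y)) μ :=
    (hμ ▸ mem_univ (2 * t) : 2 * t ∈ integrableExpSet id μ)
  refine hinteg.congr (ae_of_all _ fun y => ?_)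
  simp only
  rw [← Real.exp_nat_mul]
  push_cast
  ring_nf

lemma mgf_eq_of_moments_eq (hμ : integrableExpSet id μ = univ) (hν : integrableExpSet id ν = univ)
    (h : ∀ n : ℕ, ∫ y, y ^ n ∂μ = ∫ y, y ^ n ∂ν) : mgf id μ = mgf id ν := by
  have hanalytic : ∀ {ρ : Measure ℝ}, integrableExpSet id ρ = univ →
      AnalyticOnNhd ℝ (mgf id ρ) univ := fun hρ => by
    rw [← interior_univ, ← hρ]
    exact analyticOnNhd_mgf
  refine (hanalytic hμ).eq_of_eventuallyEq (hanalytic hν) (z₀ := 0) ?_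
  have hderiv : ∀ n, iteratedDeriv n (mgf id μ) 0 = iteratedDeriv n (mgf id ν) 0 := fun n => by
    rw [iteratedDeriv_mgf_zero (by simp [hμ]), iteratedDeriv_mgf_zero (by simp [hν])]
    exact h n
  have hseriesμ := (hanalytic hμ 0 (mem_univ _)).hasFPowerSeriesAt
  simp_rw [hderiv] at hseriesμ
  have hdiff := hseriesμ.sub (hanalytic hν 0 (mem_univ _)).hasFPowerSeriesAt
  rw [sub_self] at hdiff
  filter_upwards [hdiff.eventually_eq_zero] with z hz
  simpa [sub_eq_zero] using hz

lemma measure_eq_of_moments_eq [IsFiniteMeasure μ] [IsFiniteMeasure ν]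
    (hμ : integrableExpSet id μ = univ) (hν : integrableExpSet id ν = univ)
    (h : ∀ n : ℕ, ∫ y, y ^ n ∂μ = ∫ y, y ^ n ∂ν) : μ = ν := by
  have hzero : μ = 0 ↔ ν = 0 := by
    have hmass := h 0
    simp only [pow_zero, integral_const, smul_eq_mul, mul_one] at hmass
    rw [← Measure.measure_univ_eq_zero, ← Measure.measure_univ_eq_zero,
      ← measureReal_eq_zero_iff, ← measureReal_eq_zero_iff, hmass]
  refine Measure.ext_of_complexMGF_id_eq (funext fun z => ?_)
  refine eqOn_complexMGF_of_mgf' (mgf_eq_of_moments_eq hμ hν h) hzero ?_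
  change _ ∈ interior _
  simp [hμ]

variable {w : ℝ → ℝ}

lemma integral_withDensity_ofReal (hw : Measurable w) (g : ℝ → ℝ) :
    ∫ y, g y ∂(μ.withDensity fun y => ENNReal.ofReal (w y)) = ∫ y, max (w y) 0 * g y ∂μ := by
  rw [integral_withDensity_eq_integral_toReal_smul (by fun_prop)
    (ae_of_all _ fun _ => ENNReal.ofReal_lt_top)]
  simp [ENNReal.toReal_ofReal']

lemma integrableExpSet_withDensity_ofReal (hμ : integrableExpSet id μ = univ) (hw : Measurable w)
    (hw2 : MemLp w 2 μ) :
    integrableExpSet id (μ.withDensity fun y => ENNReal.ofReal (w y)) = univ := by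
  refine eq_univ_of_forall fun t => ?_
  change Integrable _ _
  rw [integrable_withDensity_iff_integrable_smul' (by fun_prop)
    (ae_of_all _ fun _ => ENNReal.ofReal_lt_top)]
  simp only [ENNReal.toReal_ofReal', smul_eq_mul]
  exact hw2.pos_part.integrable_mul (memLp_exp_of_integrableExpSet hμ t)

lemma max_zero_sub_max_neg_zero (a : ℝ) : max a 0 - max (-a) 0 = a := by
  simpa only [posPart_def, negPart_def] using posPart_sub_negPart a

/- The measures with densities `w⁺` and `w⁻` have the same moments. -/
lemma ae_eq_zero_of_integral_mul_pow_eq_zero [IsFiniteMeasure μ]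
    (hμ : integrableExpSet id μ = univ) (hw : Measurable w) (hw2 : MemLp w 2 μ)
    (h : ∀ n : ℕ, ∫ y, w y * y ^ n ∂μ = 0) : w =ᵐ[μ] 0 := by
  have hinteg : ∀ {u : ℝ → ℝ} (n : ℕ), MemLp u 2 μ →
      Integrable (fun y => max (u y) 0 * y ^ n) μ := fun n hu => by
    simpa only [eval_pow, eval_X, Pi.mul_def] using
      hu.pos_part.integrable_mul (memLp_eval_of_integrableExpSet hμ (X ^ n))
  have hfin : ∀ {u : ℝ → ℝ}, MemLp u 2 μ → ∫⁻ y, ENNReal.ofReal (u y) ∂μ ≠ ⊤ := fun hu =>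
    (hu.integrable (by norm_num)).lintegral_lt_top.ne
  have := isFiniteMeasure_withDensity (hfin hw2)
  have := isFiniteMeasure_withDensity (hfin hw2.neg)
  have hmeasures : μ.withDensity (fun y => ENNReal.ofReal (w y))
      = μ.withDensity fun y => ENNReal.ofReal ((-w) y) := by
    refine measure_eq_of_moments_eq (integrableExpSet_withDensity_ofReal hμ hw hw2)
      (integrableExpSet_withDensity_ofReal hμ hw.neg hw2.neg) fun n => ?_
    rw [integral_withDensity_ofReal hw, integral_withDensity_ofReal hw.neg, ← sub_eq_zero,
      ← integral_sub (hinteg n hw2) (hinteg n hw2.neg)]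
    refine Eq.trans ?_ (h n)
    refine integral_congr_ae (ae_of_all _ fun y => ?_)
    simp only [Pi.neg_apply]
    rw [← sub_mul, max_zero_sub_max_neg_zero]
  have hdensities := (withDensity_eq_iff (by fun_prop) (by fun_prop) (hfin hw2)).1 hmeasures
  filter_upwards [hdensities] with y hy
  have hparts := congrArg ENNReal.toReal hy
  rw [ENNReal.toReal_ofReal', ENNReal.toReal_ofReal', Pi.neg_apply] at hparts
  rw [Pi.zero_apply, ← max_zero_sub_max_neg_zero (w y), hparts, sub_self]

end Moments

section SquareIntegrable

variable {μ : Measure ℝ} {u w : ℝ → ℝ}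

lemma inner_toLp_toLp (hu : MemLp u 2 μ) (hw : MemLp w 2 μ) :
    inner ℝ (hu.toLp u) (hw.toLp w) = ∫ y, u y * w y ∂μ := by
  rw [MeasureTheory.L2.inner_def]
  refine integral_congr_ae ?_
  filter_upwards [hu.coeFn_toLp, hw.coeFn_toLp] with y hy hy'
  simp [hy, hy', mul_comm]

lemma integral_mul_sq_le (hu : MemLp u 2 μ) (hw : MemLp w 2 μ) :
    (∫ y, u y * w y ∂μ) ^ 2 ≤ (∫ y, u y ^ 2 ∂μ) * ∫ y, w y ^ 2 ∂μ := by
  have h := real_inner_mul_inner_self_le (hu.toLp u) (hw.toLp w)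
  simp_rw [inner_toLp_toLp] at h
  simpa only [sq] using h

lemma memLp_two_of_bounded [IsFiniteMeasure μ] {B : ℝ} (hw : Continuous w)
    (hB : ∀ y, |w y| ≤ B) : MemLp w 2 μ :=
  MemLp.of_bound hw.aestronglyMeasurable B (ae_of_all _ hB)

end SquareIntegrable


section GaussianIntegrals

open Polynomial
open scoped NNReal

variable {m : ℝ} {v : ℝ≥0}

lemma hasDerivAt_gaussianPDFReal (m : ℝ) (v : ℝ≥0) (y : ℝ) :
    HasDerivAt (gaussianPDFReal m v) (-((y - m) / v) * gaussianPDFReal m v y) y := by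
  have hexponent : HasDerivAt (fun y : ℝ => -(y - m) ^ 2 / (2 * v)) (-((y - m) / v)) y :=
    ((((hasDerivAt_id y).sub_const m).pow 2).neg.div_const _).congr_deriv (by
      simp only [id, Nat.cast_ofNat, Nat.add_one_sub_one, pow_one, mul_one]
      rw [neg_div, mul_div_mul_left _ _ two_ne_zero])
  exact (hexponent.exp.const_mul (√(2 * π * v))⁻¹).congr_deriv (by rw [gaussianPDFReal]; ring)

lemma continuous_gaussianPDFReal (m : ℝ) (v : ℝ≥0) : Continuous (gaussianPDFReal m v) :=
  continuous_iff_continuousAt.2 fun y => (hasDerivAt_gaussianPDFReal m v y).continuousAt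

lemma integrable_gaussianReal_iff (hv : v ≠ 0) (g : ℝ → ℝ) :
    Integrable g (gaussianReal m v) ↔ Integrable (fun y => gaussianPDFReal m v y * g y) := by
  rw [gaussianReal_of_var_ne_zero m hv,
    integrable_withDensity_iff_integrable_smul' (measurable_gaussianPDF _ _)
      (ae_of_all _ fun _ => gaussianPDF_lt_top)]
  simp [toReal_gaussianPDF]

/- Stein's identity: integration by parts against the Gaussian density. -/
lemma integral_sub_div_mul_gaussianReal (hv : v ≠ 0) {f f' : ℝ → ℝ}
    (hf : ∀ y, HasDerivAt f (f' y) y) (hinteg : Integrable f (gaussianReal m v))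
    (hinteg' : Integrable f' (gaussianReal m v))
    (hmul : Integrable (fun y => (y - m) / v * f y) (gaussianReal m v)) :
    ∫ y, (y - m) / v * f y ∂(gaussianReal m v) = ∫ y, f' y ∂(gaussianReal m v) := by
  have hzero := integral_eq_zero_of_hasDerivAt_of_integrable
    (fun y => ((hasDerivAt_gaussianPDFReal m v y).mul (hf y)).congr_deriv (by ring :
      _ = gaussianPDFReal m v y * (f' y - (y - m) / v * f y)))
    ((integrable_gaussianReal_iff hv _).1 (hinteg'.sub hmul))
    ((integrable_gaussianReal_iff hv _).1 hinteg)
  have hdiff : ∫ y, (f' y - (y - m) / v * f y) ∂(gaussianReal m v) = 0 := by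
    rw [integral_gaussianReal_eq_integral_smul hv]
    exact hzero
  rw [integral_sub hinteg' hmul] at hdiff
  linarith

lemma integrable_eval_gaussianReal (q : ℝ[X]) :
    Integrable (fun y => q.eval y) (gaussianReal m v) :=
  integrable_eval_of_integrableExpSet integrableExpSet_id_gaussianReal q

lemma memLp_eval_gaussianReal (q : ℝ[X]) : MemLp (fun y => q.eval y) 2 (gaussianReal m v) :=
  memLp_eval_of_integrableExpSet integrableExpSet_id_gaussianReal q

lemma integral_eval_X_mul_sub_derivative (q : ℝ[X]) :
    ∫ y, (X * q - derivative q).eval y ∂γ₁ = 0 := by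
  have hinteg : Integrable (fun y => y * q.eval y) γ₁ :=
    (integrable_eval_gaussianReal (X * q)).congr (ae_of_all _ fun y => by simp)
  have hstein := integral_sub_div_mul_gaussianReal (m := 0) one_ne_zero q.hasDerivAt
    (integrable_eval_gaussianReal q) (integrable_eval_gaussianReal _) (by simpa using hinteg)
  simp only [sub_zero, NNReal.coe_one, div_one] at hstein
  simp only [eval_sub, eval_mul, eval_X]
  rw [integral_sub hinteg (integrable_eval_gaussianReal _), hstein, sub_self]

lemma integral_comp_add_gaussianReal (u : ℝ → ℝ) (η : ℝ) :
    ∫ y, u (y + η) ∂γ₁ = ∫ y, u y * rexp (η * y - η ^ 2 / 2) ∂γ₁ := by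
  rw [integral_gaussianReal_eq_integral_smul one_ne_zero,
    integral_gaussianReal_eq_integral_smul one_ne_zero,
    ← integral_add_right_eq_self
      (fun y => gaussianPDFReal 0 1 y • (u y * rexp (η * y - η ^ 2 / 2))) η]
  refine integral_congr_ae (ae_of_all _ fun y => ?_)
  have hexp : rexp (-y ^ 2 / 2) = rexp (-(y + η) ^ 2 / 2) * rexp (η * (y + η) - η ^ 2 / 2) := by
    rw [← Real.exp_add]
    ring_nf
  simp only [gaussianPDFReal, sub_zero, NNReal.coe_one, mul_one, smul_eq_mul, hexp]
  ring

lemma memLp_exp_mul_sub_gaussianReal (η : ℝ) :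
    MemLp (fun y => rexp (η * y - η ^ 2 / 2)) 2 (gaussianReal m v) := by
  simp only [sub_eq_add_neg, Real.exp_add]
  exact (memLp_exp_of_integrableExpSet integrableExpSet_id_gaussianReal η).mul_const _

lemma integral_exp_mul_sub_sq (η : ℝ) :
    ∫ y, rexp (η * y - η ^ 2 / 2) ^ 2 ∂γ₁ = rexp (η ^ 2) := by
  have hmgf := congrFun (mgf_id_gaussianReal (μ := 0) (v := 1)) (2 * η)
  simp only [mgf, id] at hmgf
  have hsq : ∀ y, rexp (η * y - η ^ 2 / 2) ^ 2 = rexp (-η ^ 2) * rexp (2 * η * y) := fun y => by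
    rw [← Real.exp_add, ← Real.exp_nat_mul]
    push_cast
    ring_nf
  simp_rw [hsq]
  rw [integral_const_mul, hmgf, ← Real.exp_add]
  push_cast
  ring_nf

lemma integral_comp_add_sq_le {u : ℝ → ℝ} (hu : MemLp u 2 γ₁) (η : ℝ) :
    (∫ y, u (y + η) ∂γ₁) ^ 2 ≤ rexp (η ^ 2) * ∫ y, u y ^ 2 ∂γ₁ := by
  rw [integral_comp_add_gaussianReal, ← integral_exp_mul_sub_sq, mul_comm]
  exact integral_mul_sq_le hu (memLp_exp_mul_sub_gaussianReal η)

instance isOpenPosMeasure_gaussianReal [NeZero v] : (gaussianReal m v).IsOpenPosMeasure :=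
  (gaussianReal_absolutelyContinuous' m (NeZero.ne v)).isOpenPosMeasure

end GaussianIntegrals

section Hermite

open Polynomial

/-- The `n`-th probabilists' Hermite polynomial with real coefficients. -/
def realHermite (n : ℕ) : ℝ[X] := (hermite n).map (Int.castRingHom ℝ)

lemma realHermite_zero : realHermite 0 = 1 := by simp [realHermite]

lemma realHermite_succ (n : ℕ) :
    realHermite (n + 1) = X * realHermite n - derivative (realHermite n) := by
  simp [realHermite, hermite_succ, derivative_map]

lemma realHermite_monic (n : ℕ) : (realHermite n).Monic := (hermite_monic n).map _

lemma natDegree_realHermite (n : ℕ) : (realHermite n).natDegree = n := by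
  rw [realHermite, (hermite_monic n).natDegree_map, natDegree_hermite]

lemma derivative_realHermite_succ (n : ℕ) :
    derivative (realHermite (n + 1)) = C ((n : ℝ) + 1) * realHermite n := by
  induction n with
  | zero => simp [realHermite_succ, realHermite_zero]
  | succ n ih =>
    rw [realHermite_succ (n + 1), derivative_sub, derivative_mul, ih]
    simp only [derivative_X, derivative_mul, derivative_C]
    push_cast
    simp only [map_add, map_one]
    linear_combination (-(C (n : ℝ)) - 1) * realHermite_succ n

/-- The generator `q ↦ q'' - y q'` of the Ornstein–Uhlenbeck semigroup, acting on polynomials. -/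
def ouGenerator (q : ℝ[X]) : ℝ[X] := derivative (derivative q) - X * derivative q

lemma ouGenerator_realHermite (n : ℕ) :
    ouGenerator (realHermite n) = -(C (n : ℝ) * realHermite n) := by
  have h := derivative_realHermite_succ n
  rw [realHermite_succ, derivative_sub, derivative_mul, derivative_X, map_add, map_one] at h
  rw [ouGenerator]
  linear_combination -h

lemma integral_realHermite_succ_mul (n : ℕ) (q : ℝ[X]) :
    ∫ y, (realHermite (n + 1) * q).eval y ∂γ₁
      = ∫ y, (realHermite n * derivative q).eval y ∂γ₁ := by
  have hsplit : realHermite (n + 1) * q = (X * (realHermite n * q)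
      - derivative (realHermite n * q)) + realHermite n * derivative q := by
    rw [realHermite_succ, derivative_mul]
    ring
  simp_rw [hsplit, eval_add]
  rw [integral_add (integrable_eval_gaussianReal _) (integrable_eval_gaussianReal _),
    integral_eval_X_mul_sub_derivative, zero_add]

lemma integral_realHermite_mul (n : ℕ) (q : ℝ[X]) :
    ∫ y, (realHermite n * q).eval y ∂γ₁ = ∫ y, (derivative^[n] q).eval y ∂γ₁ := by
  induction n generalizing q with
  | zero => simp [realHermite_zero]
  | succ n ih => rw [integral_realHermite_succ_mul, ih, Function.iterate_succ_apply]

lemma integral_realHermite_mul_of_natDegree_lt {n : ℕ} {q : ℝ[X]} (h : q.natDegree < n) :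
    ∫ y, (realHermite n * q).eval y ∂γ₁ = 0 := by
  rw [integral_realHermite_mul, iterate_derivative_eq_zero h]
  simp

lemma iterate_derivative_realHermite (n : ℕ) :
    derivative^[n] (realHermite n) = C (n.factorial : ℝ) := by
  have hdegree : (derivative^[n] (realHermite n)).natDegree ≤ 0 := by
    have := natDegree_iterate_derivative (realHermite n) n
    rw [natDegree_realHermite] at this
    omega
  have hlead : (realHermite n).coeff n = 1 := by
    simpa only [natDegree_realHermite] using (realHermite_monic n).coeff_natDegree
  rw [eq_C_of_natDegree_le_zero hdegree, coeff_iterate_derivative]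
  simp [hlead, Nat.descFactorial_self]

lemma integral_realHermite_mul_self (n : ℕ) :
    ∫ y, (realHermite n * realHermite n).eval y ∂γ₁ = (n.factorial : ℝ) := by
  rw [integral_realHermite_mul, iterate_derivative_realHermite]
  simp

lemma integral_realHermite_comp_add (n : ℕ) (η : ℝ) :
    ∫ y, (realHermite n).eval (y + η) ∂γ₁ = η ^ n := by
  induction n with
  | zero => simp [realHermite_zero]
  | succ n ih =>
    set p := (realHermite n).comp (X + C η) with hp
    have hsplit : ∀ y, (realHermite (n + 1)).eval (y + η)
        = (X * p - derivative p).eval y + η * p.eval y := fun y => by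
      simp [realHermite_succ, hp, derivative_comp]
      ring
    have hmean : ∫ y, p.eval y ∂γ₁ = η ^ n := by simpa [hp] using ih
    simp_rw [hsplit]
    rw [integral_add (integrable_eval_gaussianReal _)
      ((integrable_eval_gaussianReal _).const_mul _), integral_eval_X_mul_sub_derivative,
      integral_const_mul, hmean, zero_add, pow_succ']

lemma span_range_realHermite : Submodule.span ℝ (range realHermite) = ⊤ := by
  let S : Polynomial.Sequence ℝ := ⟨realHermite, fun i => by
    rw [degree_eq_natDegree (realHermite_monic i).ne_zero, natDegree_realHermite]⟩
  refine S.span fun i => ?_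
  change IsUnit (realHermite i).leadingCoeff
  rw [(realHermite_monic i).leadingCoeff]
  exact isUnit_one

/-- The Hermite polynomial of degree `n` normalised in `L²` of the standard Gaussian measure. -/
def normHermite (n : ℕ) : ℝ[X] := C (√(n.factorial : ℝ))⁻¹ * realHermite n

lemma eval_normHermite (n : ℕ) (y : ℝ) :
    (normHermite n).eval y = (√(n.factorial : ℝ))⁻¹ * (realHermite n).eval y := by
  simp [normHermite]

lemma inv_sqrt_factorial_pos (n : ℕ) : 0 < (√(n.factorial : ℝ))⁻¹ := by positivity

lemma normHermite_ne_zero (n : ℕ) : normHermite n ≠ 0 :=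
  mul_ne_zero (C_ne_zero.2 (inv_sqrt_factorial_pos n).ne') (realHermite_monic n).ne_zero

lemma ouGenerator_normHermite (n : ℕ) (y : ℝ) :
    (ouGenerator (normHermite n)).eval y = -(n : ℝ) * (normHermite n).eval y := by
  have h := congrArg (eval y) (ouGenerator_realHermite n)
  simp only [ouGenerator, normHermite, derivative_C_mul, eval_sub, eval_mul, eval_C, eval_X,
    eval_neg] at h ⊢
  linear_combination (√(n.factorial : ℝ))⁻¹ * h

lemma integral_normHermite_comp_add (n : ℕ) (η : ℝ) :
    ∫ y, (normHermite n).eval (y + η) ∂γ₁ = (√(n.factorial : ℝ))⁻¹ * η ^ n := by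
  simp_rw [eval_normHermite]
  rw [integral_const_mul, integral_realHermite_comp_add]

lemma integral_mul_normHermite_of_natDegree_lt {n : ℕ} {q : ℝ[X]} (h : q.natDegree < n) :
    ∫ y, q.eval y * (normHermite n).eval y ∂γ₁ = 0 := by
  have hscale : ∀ y, q.eval y * (normHermite n).eval y
      = (√(n.factorial : ℝ))⁻¹ * (realHermite n * q).eval y := fun y => by
    rw [eval_normHermite, eval_mul]
    ring
  simp_rw [hscale]
  rw [integral_const_mul, integral_realHermite_mul_of_natDegree_lt h, mul_zero]

lemma natDegree_normHermite (n : ℕ) : (normHermite n).natDegree = n := by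
  rw [normHermite, natDegree_C_mul (inv_sqrt_factorial_pos n).ne', natDegree_realHermite]

lemma integral_normHermite_mul_normHermite (i j : ℕ) :
    ∫ y, (normHermite i).eval y * (normHermite j).eval y ∂γ₁ = if i = j then 1 else 0 := by
  rcases lt_trichotomy i j with hij | rfl | hij
  · rw [if_neg hij.ne, integral_mul_normHermite_of_natDegree_lt (by rwa [natDegree_normHermite])]
  · have hsq : ∀ y, (normHermite i).eval y * (normHermite i).eval y
        = (i.factorial : ℝ)⁻¹ * (realHermite i * realHermite i).eval y := fun y => by
      rw [eval_normHermite, eval_mul, mul_mul_mul_comm, ← mul_inv,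
        Real.mul_self_sqrt (Nat.cast_nonneg _)]
    simp_rw [hsq]
    rw [integral_const_mul, integral_realHermite_mul_self, inv_mul_cancel₀ (by positivity)]
    simp
  · simp_rw [mul_comm ((normHermite i).eval _)]
    rw [if_neg hij.ne', integral_mul_normHermite_of_natDegree_lt (by rwa [natDegree_normHermite])]

end Hermite


section HermiteExpansion

open Polynomial

variable {w : ℝ → ℝ}

/-- The `n`-th coefficient of `w` in the orthonormal Hermite basis of `L²` of the standard Gaussian
measure (`0` when the defining integrand is not integrable). -/
def hermiteCoeff (w : ℝ → ℝ) (n : ℕ) : ℝ := ∫ y, w y * (normHermite n).eval y ∂γ₁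

lemma integral_mul_eval_eq_zero_of_hermiteCoeff (hw : MemLp w 2 γ₁)
    (h : ∀ n, hermiteCoeff w n = 0) (q : ℝ[X]) :
    ∫ y, w y * q.eval y ∂γ₁ = 0 := by
  have hinteg : ∀ p : ℝ[X], Integrable (fun y => w y * p.eval y) γ₁ := fun p =>
    hw.integrable_mul (memLp_eval_gaussianReal p)
  have hq : q ∈ Submodule.span ℝ (range realHermite) := span_range_realHermite ▸ Submodule.mem_top
  induction hq using Submodule.span_induction with
  | mem p hp =>
    obtain ⟨n, rfl⟩ := hp
    have hn := h n
    simp_rw [hermiteCoeff, eval_normHermite, mul_left_comm (w _)] at hn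
    rw [integral_const_mul] at hn
    exact (mul_eq_zero.1 hn).resolve_left (inv_sqrt_factorial_pos n).ne'
  | zero => simp
  | add p r _ _ hp hr =>
    simp_rw [eval_add, mul_add]
    rw [integral_add (hinteg _) (hinteg _), hp, hr, add_zero]
  | smul a p _ hp =>
    simp_rw [eval_smul, smul_eq_mul, mul_left_comm (w _)]
    rw [integral_const_mul, hp, mul_zero]

/-- The class of `normHermite n` in `L²` of the standard Gaussian measure. -/
def normHermiteLp (n : ℕ) : Lp ℝ 2 γ₁ := (memLp_eval_gaussianReal (normHermite n)).toLp _

lemma orthonormal_normHermiteLp : Orthonormal ℝ normHermiteLp := by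
  rw [orthonormal_iff_ite]
  intro i j
  rw [normHermiteLp, normHermiteLp, inner_toLp_toLp, integral_normHermite_mul_normHermite]

lemma orthogonal_span_normHermiteLp : (Submodule.span ℝ (range normHermiteLp))ᗮ = ⊥ := by
  refine (Submodule.eq_bot_iff _).2 fun w hw => ?_
  rw [Submodule.mem_orthogonal] at hw
  have hcoeff : ∀ n, hermiteCoeff w n = 0 := fun n => by
    rw [hermiteCoeff, ← inner_toLp_toLp (Lp.memLp w) (memLp_eval_gaussianReal (normHermite n)),
      Lp.toLp_coeFn, real_inner_comm]
    exact hw _ (Submodule.subset_span ⟨n, rfl⟩)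
  refine Lp.eq_zero_iff_ae_eq_zero.2 (ae_eq_zero_of_integral_mul_pow_eq_zero
    integrableExpSet_id_gaussianReal (Lp.stronglyMeasurable w).measurable (Lp.memLp w) fun n => ?_)
  simpa using integral_mul_eval_eq_zero_of_hermiteCoeff (Lp.memLp w) hcoeff (X ^ n)

lemma hasSum_hermiteCoeff_sq (hw : MemLp w 2 γ₁) :
    HasSum (fun j => hermiteCoeff w j ^ 2) (∫ y, w y ^ 2 ∂γ₁) := by
  let b := HilbertBasis.mkOfOrthogonalEqBot orthonormal_normHermiteLp orthogonal_span_normHermiteLp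
  have hb : ∀ n, b n = normHermiteLp n := fun n => by rw [HilbertBasis.coe_mkOfOrthogonalEqBot]
  have hparseval := b.hasSum_inner_mul_inner (hw.toLp w) (hw.toLp w)
  simp_rw [hb, real_inner_comm _ (normHermiteLp _), normHermiteLp, inner_toLp_toLp] at hparseval
  simpa only [hermiteCoeff, sq] using hparseval

lemma sum_hermiteCoeff_sq_le (hw : MemLp w 2 γ₁) (S : Finset ℕ) :
    ∑ j ∈ S, hermiteCoeff w j ^ 2 ≤ ∫ y, w y ^ 2 ∂γ₁ :=
  sum_le_hasSum S (fun _ _ => sq_nonneg _) (hasSum_hermiteCoeff_sq hw)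

lemma integral_sub_hermiteCoeff_mul_sq (hw : MemLp w 2 γ₁) (n : ℕ) :
    ∫ y, (w y - hermiteCoeff w n * (normHermite n).eval y) ^ 2 ∂γ₁
      = ∫ y, w y ^ 2 ∂γ₁ - hermiteCoeff w n ^ 2 := by
  set a := hermiteCoeff w n with ha
  have hexpand : ∀ y, (w y - a * (normHermite n).eval y) ^ 2 = w y ^ 2
      - 2 * a * (w y * (normHermite n).eval y)
      + a ^ 2 * ((normHermite n).eval y * (normHermite n).eval y) := fun y => by ring
  have hcross := (hw.integrable_mul (memLp_eval_gaussianReal (normHermite n))).const_mul (2 * a)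
  have hsquare := ((memLp_eval_gaussianReal (m := 0) (v := 1) (normHermite n)).integrable_mul
    (memLp_eval_gaussianReal (normHermite n))).const_mul (a ^ 2)
  simp only [Pi.mul_apply] at hcross hsquare
  have hdiff : Integrable (fun y => w y ^ 2 - 2 * a * (w y * (normHermite n).eval y)) γ₁ :=
    hw.integrable_sq.sub hcross
  simp_rw [hexpand]
  rw [integral_add hdiff hsquare, integral_sub hw.integrable_sq hcross,
    integral_const_mul, integral_const_mul, ← hermiteCoeff, ← ha,
    integral_normHermite_mul_normHermite]
  simp only [↓reduceIte]
  ring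

lemma exists_affine_mul_nonneg {f : ℝ → ℝ} (hf : ∀ a b, a < b → 0 < f a → 0 ≤ f b) :
    ∃ α β : ℝ, (α ≠ 0 ∨ β ≠ 0) ∧ ∀ y, 0 ≤ (α * y + β) * f y := by
  by_cases hpos : ∃ a, 0 < f a
  · by_cases hbdd : BddBelow {a | 0 < f a}
    · refine ⟨1, -sInf {a | 0 < f a}, Or.inl one_ne_zero, fun y => ?_⟩
      rcases lt_trichotomy y (sInf {a | 0 < f a}) with hy | hy | hy
      · have hnonpos : f y ≤ 0 := not_lt.1 fun h => hy.not_ge (csInf_le hbdd h)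
        exact mul_nonneg_of_nonpos_of_nonpos (by linarith) hnonpos
      · simp [← hy]
      · obtain ⟨a, ha, hay⟩ := exists_lt_of_csInf_lt hpos hy
        exact mul_nonneg (by linarith) (hf a y hay ha)
    · refine ⟨0, 1, Or.inr one_ne_zero, fun y => ?_⟩
      obtain ⟨a, ha, hay⟩ := not_bddBelow_iff.1 hbdd y
      simpa using hf a y hay ha
  · push Not at hpos
    exact ⟨0, -1, Or.inr (by norm_num), fun y => by linarith [hpos y]⟩

lemma eq_zero_of_integral_eval_eq_zero {q : ℝ[X]} (hq : ∀ y, 0 ≤ q.eval y)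
    (hinteg : ∫ y, q.eval y ∂γ₁ = 0) : q = 0 := by
  rw [integral_eq_zero_iff_of_nonneg hq (integrable_eval_gaussianReal q)] at hinteg
  have hzero := (Continuous.ae_eq_iff_eq γ₁ (by fun_prop) continuous_const).1 hinteg
  exact Polynomial.funext fun y => (congrFun hzero y).trans eval_zero.symm

lemma exists_pos_lt_neg_of_orthogonal_affine {p : ℝ[X]} (hp : p ≠ 0)
    (horth : ∀ α β : ℝ, ∫ y, ((C α * X + C β) * p).eval y ∂γ₁ = 0) :
    ∃ a b : ℝ, a < b ∧ 0 < p.eval a ∧ p.eval b < 0 := by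
  by_contra! hcon
  obtain ⟨α, β, hαβ, hnonneg⟩ := exists_affine_mul_nonneg hcon
  have hzero := eq_zero_of_integral_eval_eq_zero (by simpa using hnonneg) (horth α β)
  have haffine := (mul_eq_zero.1 hzero).resolve_right hp
  have hα := congrArg (fun q => q.coeff 1) haffine
  have hβ := congrArg (fun q => q.coeff 0) haffine
  simp only [coeff_add, coeff_C_mul, coeff_X_one, coeff_C_succ, coeff_X_zero, coeff_C_zero,
    coeff_zero] at hα hβ
  grind

lemma exists_sign_change_normHermite {n : ℕ} (hn : 2 ≤ n) {e : ℝ} (he : e ≠ 0) :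
    ∃ a b : ℝ, a < b ∧ 0 < e * (normHermite n).eval a ∧ e * (normHermite n).eval b < 0 := by
  have horth : ∀ α β : ℝ, ∫ y, ((C α * X + C β) * (C e * normHermite n)).eval y ∂γ₁ = 0 := by
    intro α β
    have hmul : ∀ y, ((C α * X + C β) * (C e * normHermite n)).eval y
        = e * ((C α * X + C β).eval y * (normHermite n).eval y) := fun y => by
      simp only [eval_mul, eval_C]
      ring
    simp_rw [hmul]
    rw [integral_const_mul, integral_mul_normHermite_of_natDegree_lt
      (natDegree_linear_le.trans_lt (by omega)), mul_zero]
  simpa using exists_pos_lt_neg_of_orthogonal_affine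
    (mul_ne_zero (C_ne_zero.2 he) (normHermite_ne_zero n)) horth

end HermiteExpansion

/-! ### Bounded solutions and curves of constant sign -/

/-- The partial derivatives `V_t`, `V_x`, `V_xx` of `V` exist and are continuous on the open strip
`ℝ × (t₁, t₂)`; they are carried as explicit functions. -/
structure HasParabolicDerivs (V Vt Vx Vxx : ℝ → ℝ → ℝ) (t₁ t₂ : ℝ) : Prop where
  hasDerivAt_t : ∀ x : ℝ, ∀ t ∈ Ioo t₁ t₂, HasDerivAt (fun s => V x s) (Vt x t) t
  hasDerivAt_x : ∀ x : ℝ, ∀ t ∈ Ioo t₁ t₂, HasDerivAt (fun y => V y t) (Vx x t) x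
  hasDerivAt_xx : ∀ x : ℝ, ∀ t ∈ Ioo t₁ t₂, HasDerivAt (fun y => Vx y t) (Vxx x t) x
  continuousOn_t : ContinuousOn (fun p : ℝ × ℝ => Vt p.1 p.2) (univ ×ˢ Ioo t₁ t₂)
  continuousOn_x : ContinuousOn (fun p : ℝ × ℝ => Vx p.1 p.2) (univ ×ˢ Ioo t₁ t₂)
  continuousOn_xx : ContinuousOn (fun p : ℝ × ℝ => Vxx p.1 p.2) (univ ×ˢ Ioo t₁ t₂)

/-- A bounded classical solution of `v_t = v_xx + c v` with `|c| ≤ C`. The coefficient `c` is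
encoded by the inequality `|v_t - v_xx| ≤ C |v|`, a form stable under parabolic rescaling. -/
structure BoundedSolution (v vt vx vxx : ℝ → ℝ → ℝ) (t₁ t₂ B C : ℝ) : Prop
    extends HasParabolicDerivs v vt vx vxx t₁ t₂ where
  abs_le : ∀ x : ℝ, ∀ t ∈ Ioo t₁ t₂, |v x t| ≤ B
  nonneg : 0 ≤ C
  abs_heat_le : ∀ x : ℝ, ∀ t ∈ Ioo t₁ t₂, |vt x t - vxx x t| ≤ C * |v x t|

section Solutions

variable {V Vt Vx Vxx v vt vx vxx : ℝ → ℝ → ℝ} {t₁ t₂ B C : ℝ}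

lemma strip_mem_nhds {p : ℝ × ℝ} (hp : p.2 ∈ Ioo t₁ t₂) : univ ×ˢ Ioo t₁ t₂ ∈ 𝓝 p :=
  (isOpen_univ.prod isOpen_Ioo).mem_nhds ⟨mem_univ _, hp⟩

lemma HasParabolicDerivs.hasFDerivAt (h : HasParabolicDerivs V Vt Vx Vxx t₁ t₂) (x : ℝ) {t : ℝ}
    (ht : t ∈ Ioo t₁ t₂) :
    HasFDerivAt (fun p : ℝ × ℝ => V p.1 p.2)
      ((ContinuousLinearMap.toSpanSingleton ℝ (Vx x t)).coprod
        (ContinuousLinearMap.toSpanSingleton ℝ (Vt x t))) (x, t) := by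
  have hstrip : univ ×ˢ Ioo t₁ t₂ ∈ 𝓝 (x, t) := strip_mem_nhds ht
  have hcont : Continuous (ContinuousLinearMap.toSpanSingletonLE ℝ ℝ ℝ) :=
    (ContinuousLinearMap.toSpanSingletonLE ℝ ℝ ℝ).continuous_of_finiteDimensional
  refine (hasStrictFDerivAt_uncurry_coprod (𝕜 := ℝ) (u := (x, t)) (f := V)
    (f₁ := fun x t => ContinuousLinearMap.toSpanSingleton ℝ (Vx x t))
    (f₂ := fun x t => ContinuousLinearMap.toSpanSingleton ℝ (Vt x t)) ?_ ?_ ?_ ?_).hasFDerivAt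
  · filter_upwards [hstrip] with p hp using (h.hasDerivAt_x p.1 p.2 hp.2).hasFDerivAt
  · filter_upwards [hstrip] with p hp using (h.hasDerivAt_t p.1 p.2 hp.2).hasFDerivAt
  · exact hcont.continuousAt.comp (h.continuousOn_x.continuousAt hstrip)
  · exact hcont.continuousAt.comp (h.continuousOn_t.continuousAt hstrip)

lemma HasParabolicDerivs.continuousOn (h : HasParabolicDerivs V Vt Vx Vxx t₁ t₂) :
    ContinuousOn (fun p : ℝ × ℝ => V p.1 p.2) (univ ×ˢ Ioo t₁ t₂) := fun p hp =>
  (h.hasFDerivAt p.1 hp.2).continuousAt.continuousWithinAt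

lemma HasParabolicDerivs.hasDerivAt_comp (h : HasParabolicDerivs V Vt Vx Vxx t₁ t₂)
    {a b : ℝ → ℝ} {a' b' s : ℝ} (ha : HasDerivAt a a' s) (hb : HasDerivAt b b' s)
    (ht : b s ∈ Ioo t₁ t₂) :
    HasDerivAt (fun s => V (a s) (b s)) (a' * Vx (a s) (b s) + b' * Vt (a s) (b s)) s :=
  ((h.hasFDerivAt (a s) ht).comp_hasDerivAt_of_eq s (ha.prodMk hb) rfl).congr_deriv (by simp)

lemma HasParabolicDerivs.neg (h : HasParabolicDerivs V Vt Vx Vxx t₁ t₂) :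
    HasParabolicDerivs (fun x t => -V x t) (fun x t => -Vt x t) (fun x t => -Vx x t)
      (fun x t => -Vxx x t) t₁ t₂ where
  hasDerivAt_t x t ht := (h.hasDerivAt_t x t ht).neg
  hasDerivAt_x x t ht := (h.hasDerivAt_x x t ht).neg
  hasDerivAt_xx x t ht := (h.hasDerivAt_xx x t ht).neg
  continuousOn_t := h.continuousOn_t.neg
  continuousOn_x := h.continuousOn_x.neg
  continuousOn_xx := h.continuousOn_xx.neg

lemma BoundedSolution.neg (h : BoundedSolution v vt vx vxx t₁ t₂ B C) :
    BoundedSolution (fun x t => -v x t) (fun x t => -vt x t) (fun x t => -vx x t)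
      (fun x t => -vxx x t) t₁ t₂ B C where
  toHasParabolicDerivs := h.toHasParabolicDerivs.neg
  abs_le x t ht := by simpa only [abs_neg] using h.abs_le x t ht
  nonneg := h.nonneg
  abs_heat_le x t ht := by simpa only [← neg_sub', abs_neg] using h.abs_heat_le x t ht

lemma nonpos_of_hasDerivAt_hasDerivAt_of_isLocalMax {g g' : ℝ → ℝ} {g'' x : ℝ}
    (hg : ∀ y, HasDerivAt g (g' y) y) (hg' : HasDerivAt g' g'' x) (hmax : IsLocalMax g x) :
    g'' ≤ 0 := by
  by_contra! hpos
  have hderiv : deriv g = g' := funext fun y => (hg y).deriv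
  have hmin : IsLocalMin g x := isLocalMin_of_deriv_deriv_pos
    (by rwa [hderiv, hg'.deriv]) (by rw [hderiv, hmax.hasDerivAt_eq_zero (hg x)])
    (hg x).continuousAt
  have hconst : ∀ᶠ y in 𝓝 x, g y = g x := by
    filter_upwards [hmax, hmin] with y hle hge using le_antisymm hle hge
  have hzero : ∀ᶠ y in 𝓝 x, g' y = 0 := by
    filter_upwards [hconst.eventually_nhds] with y hy
    exact (hg y).unique ((hasDerivAt_const y (g x)).congr_of_eventuallyEq hy)
  exact hpos.ne' (hg'.unique ((hasDerivAt_const x (0 : ℝ)).congr_of_eventuallyEq hzero))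

lemma nonneg_of_hasDerivAt_of_eventually_le_left {g : ℝ → ℝ} {g' t : ℝ} (h : HasDerivAt g g' t)
    (hle : ∀ᶠ s in 𝓝[<] t, g s ≤ g t) : 0 ≤ g' := by
  have hslope := (hasDerivWithinAt_iff_tendsto_slope' (by simp)).1
    (h.hasDerivWithinAt (s := Iio t))
  refine ge_of_tendsto hslope ?_
  filter_upwards [hle, self_mem_nhdsWithin] with s hs hst
  rw [slope_def_field]
  exact div_nonneg_of_nonpos (sub_nonpos.2 hs) (sub_nonpos.2 (mem_Iio.1 hst).le)

/-- The penalised solution `e^{-C(t - t₀)} v - δ (x² + 3 (t - t₀))`, a strict subsolution of the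
heat equation wherever `v > 0`. -/
def penalized (v : ℝ → ℝ → ℝ) (C δ t₀ : ℝ) (p : ℝ × ℝ) : ℝ :=
  rexp (-C * (p.2 - t₀)) * v p.1 p.2 - δ * (p.1 ^ 2 + 3 * (p.2 - t₀))

lemma pos_of_penalized_pos {δ t₀ : ℝ} (hδ : 0 ≤ δ) {p : ℝ × ℝ} (hp : t₀ ≤ p.2)
    (hpos : 0 < penalized v C δ t₀ p) : 0 < v p.1 p.2 := by
  have hpen : 0 ≤ δ * (p.1 ^ 2 + 3 * (p.2 - t₀)) := mul_nonneg hδ (by nlinarith [sq_nonneg p.1])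
  exact pos_of_mul_pos_right (hpen.trans_lt (sub_pos.1 hpos)) (exp_pos _).le

lemma BoundedSolution.continuousOn_penalized (h : BoundedSolution v vt vx vxx t₁ t₂ B C)
    (δ t₀ : ℝ) : ContinuousOn (penalized v C δ t₀) (univ ×ˢ Ioo t₁ t₂) :=
  ContinuousOn.sub (ContinuousOn.mul (by fun_prop) h.continuousOn) (by fun_prop)

lemma BoundedSolution.penalized_neg (h : BoundedSolution v vt vx vxx t₁ t₂ B C) {δ t₀ : ℝ}
    (hδ : 0 < δ) {p : ℝ × ℝ} (hp : p.2 ∈ Ioo t₁ t₂) (ht₀ : t₀ ≤ p.2) (hlarge : B / δ < p.1 ^ 2) :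
    penalized v C δ t₀ p < 0 := by
  have hexp : rexp (-C * (p.2 - t₀)) ≤ 1 := exp_le_one_iff.2 (by nlinarith [h.nonneg])
  have hB : 0 ≤ B := (abs_nonneg _).trans (h.abs_le p.1 p.2 hp)
  have hv : rexp (-C * (p.2 - t₀)) * v p.1 p.2 ≤ B :=
    calc rexp (-C * (p.2 - t₀)) * v p.1 p.2 ≤ rexp (-C * (p.2 - t₀)) * B := by
          gcongr
          exact (le_abs_self _).trans (h.abs_le p.1 p.2 hp)
      _ ≤ B := mul_le_of_le_one_left hB hexp
  have hpen : B < δ * p.1 ^ 2 := by rwa [div_lt_iff₀' hδ] at hlarge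
  have htime : 0 ≤ δ * (3 * (p.2 - t₀)) := mul_nonneg hδ.le (by linarith)
  rw [penalized]
  linarith

lemma BoundedSolution.exists_penalized_max (h : BoundedSolution v vt vx vxx t₁ t₂ B C)
    {δ t'' t' : ℝ} (hδ : 0 < δ) (h1 : t₁ < t'') (h2 : t' < t₂) {A : Set (ℝ × ℝ)}
    (hA : IsClosed A) (hsub : A ⊆ univ ×ˢ Icc t'' t') {q : ℝ × ℝ} (hq : q ∈ A)
    (hpos : 0 < penalized v C δ t'' q) :
    ∃ p ∈ A, 0 < penalized v C δ t'' p ∧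
      ∀ z ∈ A, penalized v C δ t'' z ≤ penalized v C δ t'' p := by
  have hstrip : ∀ z ∈ A, z.2 ∈ Ioo t₁ t₂ := fun z hz =>
    ⟨h1.trans_le (hsub hz).2.1, (hsub hz).2.2.trans_lt h2⟩
  have hBδ : 0 ≤ B / δ := div_nonneg ((abs_nonneg _).trans (h.abs_le q.1 q.2 (hstrip q hq))) hδ.le
  set R := B / δ + 1
  have hbox : ∀ z ∈ A, 0 ≤ penalized v C δ t'' z → z ∈ Icc (-R) R ×ˢ Icc t'' t' := by
    intro z hz hnonneg
    refine ⟨_root_.abs_le.1 (not_lt.1 fun hlt => hnonneg.not_gt ?_), (hsub hz).2⟩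
    refine h.penalized_neg hδ (hstrip z hz) (hsub hz).2.1 ?_
    rw [← sq_abs]
    nlinarith
  obtain ⟨p, hp, hmax⟩ := ((isCompact_Icc.prod isCompact_Icc).inter_left hA).exists_isMaxOn
    ⟨q, hq, hbox q hq hpos.le⟩
    ((h.continuousOn_penalized δ t'').mono fun z hz => ⟨mem_univ _, hstrip z hz.1⟩)
  have hp_pos := hpos.trans_le (hmax ⟨hq, hbox q hq hpos.le⟩)
  refine ⟨p, hp.1, hp_pos, fun z hz => ?_⟩
  rcases le_total 0 (penalized v C δ t'' z) with hnonneg | hnonpos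
  · exact hmax ⟨hz, hbox z hz hnonneg⟩
  · exact hnonpos.trans hp_pos.le

lemma BoundedSolution.exp_mul_vxx_le_of_isLocalMax (h : BoundedSolution v vt vx vxx t₁ t₂ B C)
    {δ t₀ : ℝ} {p : ℝ × ℝ} (hp : p.2 ∈ Ioo t₁ t₂)
    (hmax : IsLocalMax (fun y => penalized v C δ t₀ (y, p.2)) p.1) :
    rexp (-C * (p.2 - t₀)) * vxx p.1 p.2 ≤ 2 * δ := by
  set e := rexp (-C * (p.2 - t₀))
  have hx : ∀ y, HasDerivAt (fun y => penalized v C δ t₀ (y, p.2))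
      (e * vx y p.2 - δ * (2 * y)) y := fun y =>
    (((h.hasDerivAt_x y p.2 hp).const_mul e).sub
      (((hasDerivAt_pow 2 y).add_const (3 * (p.2 - t₀))).const_mul δ)).congr_deriv (by norm_num)
  have hxx : HasDerivAt (fun y => e * vx y p.2 - δ * (2 * y)) (e * vxx p.1 p.2 - δ * 2) p.1 :=
    (((h.hasDerivAt_xx p.1 p.2 hp).const_mul e).sub
      (((hasDerivAt_id p.1).const_mul 2).const_mul δ)).congr_deriv (by norm_num)
  linarith [nonpos_of_hasDerivAt_hasDerivAt_of_isLocalMax hx hxx hmax]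

lemma BoundedSolution.le_exp_mul_vt_of_eventually_le (h : BoundedSolution v vt vx vxx t₁ t₂ B C)
    {δ t₀ : ℝ} {p : ℝ × ℝ} (hp : p.2 ∈ Ioo t₁ t₂)
    (hle : ∀ᶠ s in 𝓝[<] p.2, penalized v C δ t₀ (p.1, s) ≤ penalized v C δ t₀ p) :
    3 * δ + rexp (-C * (p.2 - t₀)) * (C * v p.1 p.2) ≤ rexp (-C * (p.2 - t₀)) * vt p.1 p.2 := by
  set e := rexp (-C * (p.2 - t₀)) with he
  have hexp : HasDerivAt (fun s => rexp (-C * (s - t₀))) (e * (-C)) p.2 :=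
    (((hasDerivAt_id p.2).sub_const t₀).const_mul (-C)).exp.congr_deriv (by simp [he])
  have ht : HasDerivAt (fun s => penalized v C δ t₀ (p.1, s))
      (e * (-C) * v p.1 p.2 + e * vt p.1 p.2 - δ * 3) p.2 :=
    ((hexp.mul (h.hasDerivAt_t p.1 p.2 hp)).sub
      ((((hasDerivAt_id p.2).sub_const t₀).const_mul 3).const_add (p.1 ^ 2) |>.const_mul δ))
      |>.congr_deriv (by simp [he])
  linarith [nonneg_of_hasDerivAt_of_eventually_le_left ht hle]

/-- The points of the time interval `[t'', t']` which are joined to `(x, t')` by the graph of a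
continuous curve along which `v` is positive. -/
def positiveReach (v : ℝ → ℝ → ℝ) (x t'' t' : ℝ) : Set (ℝ × ℝ) :=
  {p | p.2 ∈ Icc t'' t' ∧ ∃ γ : ℝ → ℝ, Continuous γ ∧ γ t' = x ∧ γ p.2 = p.1 ∧
    ∀ t ∈ Icc p.2 t', 0 < v (γ t) t}

lemma closure_positiveReach_subset (v : ℝ → ℝ → ℝ) (x t'' t' : ℝ) :
    closure (positiveReach v x t'' t') ⊆ univ ×ˢ Icc t'' t' :=
  closure_minimal (fun _ hp => ⟨mem_univ _, hp.1⟩) (isClosed_univ.prod isClosed_Icc)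

lemma mem_positiveReach_self {x t'' t' : ℝ} (hle : t'' ≤ t') (hpos : 0 < v x t') :
    (x, t') ∈ positiveReach v x t'' t' :=
  ⟨⟨hle, le_rfl⟩, fun _ => x, continuous_const, rfl, rfl, fun t ht => by
    rwa [le_antisymm ht.2 ht.1]⟩

/- The curve ending at `q` is prolonged by the segment from `q` to `z`. -/
lemma mem_positiveReach_of_convex {x t'' t' : ℝ} {q z : ℝ × ℝ} {U : Set (ℝ × ℝ)}
    (hU : Convex ℝ U) (hpos : ∀ p ∈ U, 0 < v p.1 p.2) (hq : q ∈ positiveReach v x t'' t')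
    (hqU : q ∈ U) (hzU : z ∈ U) (hz : t'' ≤ z.2) (hzq : z.2 < q.2) :
    z ∈ positiveReach v x t'' t' := by
  obtain ⟨⟨_, hqt'⟩, γ, hγ, hγx, hγq, hγpos⟩ := hq
  have hd : 0 < q.2 - z.2 := sub_pos.2 hzq
  refine ⟨⟨hz, (hzq.trans_le hqt').le⟩, fun t => γ (max t q.2) +
    (q.1 - z.1) / (q.2 - z.2) * (min t q.2 - q.2), by fun_prop, ?_, ?_, fun t ht => ?_⟩
  · simp only [max_eq_left hqt', min_eq_right hqt', hγx, sub_self, mul_zero, add_zero]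
  · simp only [max_eq_right hzq.le, min_eq_left hzq.le, hγq]
    field_simp
    ring
  · rcases le_total q.2 t with hqt | htq
    · simpa only [max_eq_left hqt, min_eq_right hqt, sub_self, mul_zero, add_zero]
        using hγpos t ⟨hqt, ht.2⟩
    · have hseg := hpos _ (hU hqU hzU (a := (t - z.2) / (q.2 - z.2))
        (b := (q.2 - t) / (q.2 - z.2)) (div_nonneg (by linarith [ht.1]) hd.le)
        (div_nonneg (by linarith) hd.le) (by field_simp; ring))
      simp only [max_eq_right htq, min_eq_left htq, hγq]
      convert hseg using 2 <;> simp only [Prod.fst_add, Prod.snd_add, Prod.smul_fst,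
        Prod.smul_snd, smul_eq_mul] <;> field_simp <;> ring

lemma mem_positiveReach_of_mem_closure {x t'' t' r : ℝ} {p z : ℝ × ℝ}
    (hpos : ∀ q ∈ Metric.ball p r, 0 < v q.1 q.2) (hp : p ∈ closure (positiveReach v x t'' t'))
    (hz : z ∈ Metric.ball p r) (ht'' : t'' ≤ z.2) (hzp : z.2 < p.2) :
    z ∈ positiveReach v x t'' t' := by
  have hlater : ∀ᶠ q in 𝓝 p, z.2 < q.2 := continuousAt_snd.eventually_const_lt hzp
  have hball : Metric.ball p r ∈ 𝓝 p := Metric.ball_mem_nhds p (Metric.pos_of_mem_ball hz)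
  obtain ⟨q, hq, hqball, hzq⟩ :=
    ((mem_closure_iff_frequently.1 hp).and_eventually (Filter.inter_mem hball hlater)).exists
  exact mem_positiveReach_of_convex (convex_ball p r) hpos hq hqball hz ht'' hzq

lemma eventually_mem_positiveReach {x t'' t' r y : ℝ} {p : ℝ × ℝ}
    (hpos : ∀ q ∈ Metric.ball p r, 0 < v q.1 q.2) (hp : p ∈ closure (positiveReach v x t'' t'))
    (ht'' : t'' < p.2) (hy : y ∈ Metric.ball p.1 r) :
    ∀ᶠ s in 𝓝[<] p.2, (y, s) ∈ positiveReach v x t'' t' := by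
  have hr : 0 < r := Metric.pos_of_mem_ball hy
  have hball : ∀ᶠ s in 𝓝 p.2, s ∈ Metric.ball p.2 r := Metric.ball_mem_nhds p.2 hr
  filter_upwards [nhdsWithin_le_nhds hball, nhdsWithin_le_nhds (lt_mem_nhds ht''),
    self_mem_nhdsWithin] with s hs hlt hsp
  exact mem_positiveReach_of_mem_closure hpos hp
    (Metric.mem_ball.2 (max_lt hy hs)) (le_of_lt hlt) hsp

/- The first and second derivative tests at `p` contradict `v_t - v_xx ≤ C v`. -/
lemma BoundedSolution.not_penalized_max_closure_positiveReach
    (h : BoundedSolution v vt vx vxx t₁ t₂ B C) {x t'' t' δ : ℝ} (hδ : 0 < δ) {p : ℝ × ℝ}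
    (hp : p ∈ closure (positiveReach v x t'' t')) (hstrip : p.2 ∈ Ioo t₁ t₂) (ht'' : t'' < p.2)
    (hpos : 0 < v p.1 p.2) :
    ¬ ∀ z ∈ closure (positiveReach v x t'' t'),
      penalized v C δ t'' z ≤ penalized v C δ t'' p := by
  intro hmax
  obtain ⟨r, hr, hball⟩ := Metric.eventually_nhds_iff_ball.1
    ((h.continuousOn.continuousAt (strip_mem_nhds hstrip)).eventually_const_lt hpos)
  have hslice : ∀ y ∈ Metric.ball p.1 r, (y, p.2) ∈ closure (positiveReach v x t'' t') :=
    fun y hy => mem_closure_of_tendsto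
      ((Continuous.prodMk_right y).continuousAt.tendsto.mono_left nhdsWithin_le_nhds)
      (eventually_mem_positiveReach hball hp ht'' hy)
  have hxx := h.exp_mul_vxx_le_of_isLocalMax (δ := δ) (t₀ := t'') hstrip (by
    filter_upwards [Metric.ball_mem_nhds p.1 hr] with y hy using hmax _ (hslice y hy))
  have ht := h.le_exp_mul_vt_of_eventually_le (δ := δ) (t₀ := t'') hstrip (by
    filter_upwards [eventually_mem_positiveReach hball hp ht'' (Metric.mem_ball_self hr)] with s hs
      using hmax _ (subset_closure hs))
  have hheat := (_root_.abs_le.1 (h.abs_heat_le p.1 p.2 hstrip)).2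
  rw [abs_of_pos hpos] at hheat
  nlinarith [exp_pos (-C * (p.2 - t''))]

lemma BoundedSolution.exists_mem_positiveReach_snd_eq
    (h : BoundedSolution v vt vx vxx t₁ t₂ B C) {x t'' t' : ℝ} (h1 : t₁ < t'') (h2 : t' < t₂)
    (hlt : t'' < t') (hpos : 0 < v x t') : ∃ p ∈ positiveReach v x t'' t', p.2 = t'' := by
  by_contra! hne
  have hlater : ∀ q ∈ positiveReach v x t'' t', t'' < q.2 := fun q hq =>
    hq.1.1.lt_of_ne' (hne q hq)
  have hstart := mem_positiveReach_self hlt.le hpos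
  have hden : 0 < x ^ 2 + 3 * (t' - t'') := by nlinarith [sq_nonneg x]
  -- this `δ` takes away only half of the value at `(x, t')`
  set δ := rexp (-C * (t' - t'')) * v x t' / (2 * (x ^ 2 + 3 * (t' - t''))) with hδ
  have hδpos : 0 < δ := by positivity
  have hstart_pos : 0 < penalized v C δ t'' (x, t') := by
    have hhalf : δ * (x ^ 2 + 3 * (t' - t'')) = rexp (-C * (t' - t'')) * v x t' / 2 := by
      rw [hδ, div_mul_eq_mul_div, mul_div_mul_right _ _ hden.ne']
    have hval : 0 < rexp (-C * (t' - t'')) * v x t' := by positivity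
    rw [penalized, hhalf]
    linarith
  obtain ⟨p, hp, hp_pos, hmax⟩ := h.exists_penalized_max hδpos h1 h2 isClosed_closure
    (closure_positiveReach_subset v x t'' t') (subset_closure hstart) hstart_pos
  obtain ⟨hpt'', hpt'⟩ := (closure_positiveReach_subset v x t'' t' hp).2
  have hstrip : p.2 ∈ Ioo t₁ t₂ := ⟨h1.trans_le hpt'', hpt'.trans_lt h2⟩
  have hvp := pos_of_penalized_pos hδpos.le hpt'' hp_pos
  rcases hpt''.eq_or_lt with heq | hlt
  · obtain ⟨r, hr, hball⟩ := Metric.eventually_nhds_iff_ball.1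
      ((h.continuousOn.continuousAt (strip_mem_nhds hstrip)).eventually_const_lt hvp)
    obtain ⟨q, hq, hqball⟩ := ((mem_closure_iff_frequently.1 hp).and_eventually
      (Metric.ball_mem_nhds p hr)).exists
    exact hne p (mem_positiveReach_of_convex (convex_ball p r) hball hq hqball
      (Metric.mem_ball_self hr) hpt'' (heq ▸ hlater q hq)) heq.symm
  · exact h.not_penalized_max_closure_positiveReach hδpos hp hstrip hlt hvp hmax

lemma BoundedSolution.exists_positive_curve (h : BoundedSolution v vt vx vxx t₁ t₂ B C)
    {x t'' t' : ℝ} (h1 : t₁ < t'') (h2 : t' < t₂) (hlt : t'' < t') (hpos : 0 < v x t') :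
    ∃ γ : ℝ → ℝ, Continuous γ ∧ γ t' = x ∧ ∀ t ∈ Icc t'' t', 0 < v (γ t) t := by
  obtain ⟨p, ⟨_, γ, hγ, hγx, _, hγpos⟩, rfl⟩ := h.exists_mem_positiveReach_snd_eq h1 h2 hlt hpos
  exact ⟨γ, hγ, hγx, hγpos⟩

end Solutions

section SignPatterns

variable {V Vt Vx Vxx v vt vx vxx : ℝ → ℝ → ℝ} {t₁ t₂ B C : ℝ}

lemma HasParabolicDerivs.continuous_slice (h : HasParabolicDerivs V Vt Vx Vxx t₁ t₂) {t : ℝ}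
    (ht : t ∈ Ioo t₁ t₂) : Continuous fun x => V x t :=
  continuous_iff_continuousAt.2 fun x => (h.hasDerivAt_x x t ht).continuousAt

lemma realizesPattern_of_monotone {f : ℝ → ℝ} (hf : Continuous f) {m : ℕ} {ε : ℕ → ℝ}
    {x : ℕ → ℝ} (hx : Monotone x) (h : ∀ i < m, 0 < ε i * f (x i)) : RealizesPattern f m ε := by
  have hspread : ∀ᶠ η : ℝ in 𝓝[>] 0, ∀ i ∈ Finset.range m, 0 < ε i * f (x i + η * i) := by
    rw [Filter.eventually_all_finset]
    intro i hi
    have hcont : ContinuousAt (fun η : ℝ => ε i * f (x i + η * i)) 0 := by fun_prop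
    refine (hcont.eventually_const_lt ?_).filter_mono nhdsWithin_le_nhds
    simpa using h i (Finset.mem_range.1 hi)
  obtain ⟨η, hη, hη_pos⟩ := (hspread.and self_mem_nhdsWithin).exists
  exact ⟨fun i => x i + η * i,
    hx.add_strictMono fun a b hab => mul_lt_mul_of_pos_left (by exact_mod_cast hab) hη_pos,
    fun i hi => hη i (Finset.mem_range.2 hi)⟩

lemma BoundedSolution.exists_curve_of_sign (h : BoundedSolution v vt vx vxx t₁ t₂ B C)
    {x t'' t' e : ℝ} (h1 : t₁ < t'') (h2 : t' < t₂) (hlt : t'' < t') (he : e = 1 ∨ e = -1)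
    (hpos : 0 < e * v x t') :
    ∃ γ : ℝ → ℝ, Continuous γ ∧ γ t' = x ∧ ∀ t ∈ Icc t'' t', 0 < e * v (γ t) t := by
  rcases he with rfl | rfl
  · simpa using h.exists_positive_curve h1 h2 hlt (by simpa using hpos)
  · simpa using h.neg.exists_positive_curve h1 h2 hlt (by simpa using hpos)

lemma lt_of_curves_of_opposite_sign {γ γ' : ℝ → ℝ} {t'' t' e e' : ℝ} (hlt : t'' < t')
    (he : e = 1 ∨ e = -1) (he' : e' = 1 ∨ e' = -1) (hne : e ≠ e') (hγ : Continuous γ)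
    (hγ' : Continuous γ') (hsign : ∀ t ∈ Icc t'' t', 0 < e * v (γ t) t)
    (hsign' : ∀ t ∈ Icc t'' t', 0 < e' * v (γ' t) t) (hend : γ t' < γ' t') : γ t'' < γ' t'' := by
  by_contra! hle
  obtain ⟨t, ht, heq⟩ := intermediate_value_Icc hlt.le (hγ'.sub hγ).continuousOn
    (show (0 : ℝ) ∈ Icc (γ' t'' - γ t'') (γ' t' - γ t') from
      ⟨sub_nonpos.2 hle, (sub_pos.2 hend).le⟩)
  have hpos := hsign t ht
  have hpos' := hsign' t ht
  rw [show γ' t = γ t from sub_eq_zero.1 heq] at hpos'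
  rcases he with rfl | rfl <;> rcases he' with rfl | rfl <;>
    first | exact hne rfl | linarith

/- Each sample point is followed back in time along a curve of constant sign. Curves of opposite
signs cannot cross, and running maxima restore the order among the others. -/
theorem BoundedSolution.realizesPattern_of_lt (h : BoundedSolution v vt vx vxx t₁ t₂ B C)
    {t'' t' : ℝ} (h1 : t₁ < t'') (h2 : t' < t₂) (hlt : t'' < t') {m : ℕ} {ε : ℕ → ℝ}
    (hε : ∀ i < m, ε i = 1 ∨ ε i = -1) (hp : RealizesPattern (fun x => v x t') m ε) :
    RealizesPattern (fun x => v x t'') m ε := by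
  obtain ⟨x, hx, hxε⟩ := hp
  choose! γ hγ hγx hγε using fun i (hi : i < m) =>
    h.exists_curve_of_sign h1 h2 hlt (hε i hi) (hxε i hi)
  have hord : ∀ i j, i < j → j < m → ε i ≠ ε j → γ i t'' < γ j t'' := fun i j hij hj hne =>
    lt_of_curves_of_opposite_sign hlt (hε i (hij.trans hj)) (hε j hj) hne (hγ i (hij.trans hj))
      (hγ j hj) (hγε i (hij.trans hj)) (hγε j hj)
      (by rw [hγx i (hij.trans hj), hγx j hj]; exact hx hij)
  refine realizesPattern_of_monotone (h.continuous_slice ⟨h1, hlt.trans h2⟩)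
    (partialSups fun i => γ i t'').monotone fun i hi => ?_
  obtain ⟨j, hji, hmax⟩ := exists_partialSups_eq (fun i => γ i t'') i
  have hsame : ε i = ε j := by
    by_contra hne
    have hlt_ij := hord j i (hji.lt_of_ne fun hij => hne (hij ▸ rfl)) hi (Ne.symm hne)
    exact hlt_ij.not_ge ((le_partialSups (fun i => γ i t'') i).trans_eq hmax)
  rw [hmax, hsame]
  exact hγε j (hji.trans_lt hi) t'' ⟨le_rfl, hlt.le⟩

lemma alternating_eq_one_or_neg_one {e : ℝ} (he : e = 1 ∨ e = -1) (i : ℕ) :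
    (-1 : ℝ) ^ i * e = 1 ∨ (-1 : ℝ) ^ i * e = -1 := by
  rcases neg_one_pow_eq_or ℝ i with h | h <;> rcases he with rfl | rfl <;> rw [h] <;> simp

lemma exists_sign_mul_pos {a : ℝ} (ha : a ≠ 0) : ∃ e : ℝ, (e = 1 ∨ e = -1) ∧ 0 < e * a := by
  rcases ha.lt_or_gt with hneg | hpos
  · exact ⟨-1, Or.inr rfl, by linarith⟩
  · exact ⟨1, Or.inl rfl, by linarith⟩

lemma exists_alternating_of_signChanges {f : ℝ → ℝ} {m : ℕ} (hm : 1 ≤ m) (h : SignChanges f m) :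
    ∃ e : ℝ, (e = 1 ∨ e = -1) ∧ RealizesPattern f (m + 1) (fun i => (-1) ^ i * e) := by
  obtain ⟨x, hx, hchange⟩ := h
  obtain ⟨e, he, hpos⟩ := exists_sign_mul_pos (left_ne_zero_of_mul (hchange 0 hm).ne)
  refine ⟨e, he, x, hx, fun i => ?_⟩
  induction i with
  | zero => exact fun _ => by simpa using hpos
  | succ i ih =>
    intro hi
    have hprod : 0 < (-1) ^ i * e * f (x i) * -(f (x i) * f (x (i + 1))) :=
      mul_pos (ih (by omega)) (neg_pos.2 (hchange i (by omega)))
    have hsq : (-1) ^ i * e * f (x i) * -(f (x i) * f (x (i + 1)))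
        = (-1) ^ (i + 1) * e * f (x (i + 1)) * f (x i) ^ 2 := by ring
    exact pos_of_mul_pos_left (hsq ▸ hprod) (sq_nonneg _)

lemma signChanges_of_alternating {f : ℝ → ℝ} {m : ℕ} {e : ℝ}
    (h : RealizesPattern f (m + 1) (fun i => (-1) ^ i * e)) : SignChanges f m := by
  obtain ⟨x, hx, hpos⟩ := h
  refine ⟨x, hx, fun i hi => ?_⟩
  have hprod := mul_pos (hpos i (by omega)) (hpos (i + 1) (by omega))
  have hsq : (-1 : ℝ) ^ i * e * f (x i) * ((-1) ^ (i + 1) * e * f (x (i + 1)))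
      = ((-1) ^ i * e) ^ 2 * -(f (x i) * f (x (i + 1))) := by ring
  exact neg_pos.1 (pos_of_mul_pos_right (hsq ▸ hprod) (sq_nonneg _))

lemma BoundedSolution.signChanges_of_lt (h : BoundedSolution v vt vx vxx t₁ t₂ B C)
    {t'' t' : ℝ} (h1 : t₁ < t'') (h2 : t' < t₂) (hlt : t'' < t') {m : ℕ} (hm : 1 ≤ m)
    (hp : SignChanges (fun x => v x t') m) : SignChanges (fun x => v x t'') m := by
  obtain ⟨e, he, hp⟩ := exists_alternating_of_signChanges hm hp
  exact signChanges_of_alternating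
    (h.realizesPattern_of_lt h1 h2 hlt (fun i _ => alternating_eq_one_or_neg_one he i) hp)

lemma BoundedSolution.exists_ne_zero_of_le (h : BoundedSolution v vt vx vxx t₁ t₂ B C)
    {t'' t' : ℝ} (h1 : t₁ < t'') (h2 : t' < t₂) (hle : t'' ≤ t') (hne : ∃ x, v x t' ≠ 0) :
    ∃ x, v x t'' ≠ 0 := by
  rcases hle.eq_or_lt with rfl | hlt
  · exact hne
  obtain ⟨x, hx⟩ := hne
  obtain ⟨e, he, hpos⟩ := exists_sign_mul_pos hx
  obtain ⟨γ, -, -, hγ⟩ := h.exists_curve_of_sign h1 h2 hlt he hpos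
  exact ⟨γ t'', right_ne_zero_of_mul (hγ t'' ⟨le_rfl, hlt.le⟩).ne'⟩

lemma zeroNumber_of_exists_ne_zero {w : ℝ → ℝ} (h : ∃ x, w x ≠ 0) :
    zeroNumber w
      = ((sSup {k : ℕ∞ | ∃ m : ℕ, k = (m : ℕ∞) ∧ 1 ≤ m ∧ SignChanges w m} : ℕ∞) : WithBot ℕ∞) := by
  obtain ⟨x, hx⟩ := h
  exact if_neg fun hw => hx (congrFun hw x)

theorem BoundedSolution.zeroNumber_le_of_lt (h : BoundedSolution v vt vx vxx t₁ t₂ B C)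
    {t'' t' : ℝ} (h1 : t₁ < t'') (h2 : t' < t₂) (hlt : t'' < t') :
    zeroNumber (fun x => v x t') ≤ zeroNumber (fun x => v x t'') := by
  by_cases hzero : (fun x => v x t') = 0
  · rw [zeroNumber, if_pos hzero]
    exact bot_le
  · have hne := Function.ne_iff.1 hzero
    rw [zeroNumber_of_exists_ne_zero hne,
      zeroNumber_of_exists_ne_zero (h.exists_ne_zero_of_le h1 h2 hlt.le hne)]
    refine WithBot.coe_le_coe.2 (sSup_le_sSup ?_)
    rintro k ⟨m, hk, hm, hchanges⟩
    exact ⟨m, hk, hm, h.signChanges_of_lt h1 h2 hlt hm hchanges⟩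

end SignPatterns

/-! ### Gaussian averages of parabolic rescalings -/

/-- The parabolic rescaling `y ↦ W(x₀ + ℓ y, t₀ - ℓ²/2)` of `W` about `(x₀, t₀)` at scale `ℓ`. Its
integral against the standard Gaussian measure is the average of `W` at time `t₀ - ℓ²/2` against
the backward heat kernel centred at `(x₀, t₀)`. -/
def rescale (W : ℝ → ℝ → ℝ) (x₀ t₀ ℓ y : ℝ) : ℝ := W (x₀ + ℓ * y) (t₀ - ℓ ^ 2 / 2)

section Rescaling

open Polynomial

variable {V Vt Vx Vxx : ℝ → ℝ → ℝ} {t₁ t₂ x₀ t₀ L : ℝ}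

lemma sub_sq_div_two_mem_Ioo (h0 : t₀ ≤ t₂) (hL : t₁ ≤ t₀ - L ^ 2 / 2) {ℓ : ℝ}
    (hℓ : ℓ ∈ Ioo 0 L) : t₀ - ℓ ^ 2 / 2 ∈ Ioo t₁ t₂ := by
  obtain ⟨hpos, hlt⟩ := hℓ
  constructor <;> nlinarith

lemma continuous_rescale {W : ℝ → ℝ → ℝ}
    (hW : ContinuousOn (fun p : ℝ × ℝ => W p.1 p.2) (univ ×ˢ Ioo t₁ t₂)) {ℓ : ℝ}
    (hℓ : t₀ - ℓ ^ 2 / 2 ∈ Ioo t₁ t₂) : Continuous (rescale W x₀ t₀ ℓ) :=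
  hW.comp_continuous (f := fun y : ℝ => (x₀ + ℓ * y, t₀ - ℓ ^ 2 / 2)) (by fun_prop)
    fun _ => ⟨mem_univ _, hℓ⟩

lemma continuousOn_rescale {W : ℝ → ℝ → ℝ} (h0 : t₀ ≤ t₂) (hL : t₁ ≤ t₀ - L ^ 2 / 2)
    (hW : ContinuousOn (fun p : ℝ × ℝ => W p.1 p.2) (univ ×ˢ Ioo t₁ t₂)) :
    ContinuousOn (fun p : ℝ × ℝ => rescale W x₀ t₀ p.1 p.2) (Ioo 0 L ×ˢ univ) :=
  hW.comp (f := fun p : ℝ × ℝ => (x₀ + p.1 * p.2, t₀ - p.1 ^ 2 / 2)) (by fun_prop)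
    fun _ hp => ⟨mem_univ _, sub_sq_div_two_mem_Ioo h0 hL hp.1⟩

lemma HasParabolicDerivs.hasDerivAt_rescale_scale (h : HasParabolicDerivs V Vt Vx Vxx t₁ t₂)
    {ℓ : ℝ} (hℓ : t₀ - ℓ ^ 2 / 2 ∈ Ioo t₁ t₂) (y : ℝ) :
    HasDerivAt (fun ℓ => rescale V x₀ t₀ ℓ y)
      (y * rescale Vx x₀ t₀ ℓ y + (-ℓ) * rescale Vt x₀ t₀ ℓ y) ℓ := by
  have hspace : HasDerivAt (fun s => x₀ + s * y) y ℓ :=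
    (((hasDerivAt_id ℓ).mul_const y).const_add x₀).congr_deriv (by simp)
  have htime : HasDerivAt (fun s => t₀ - s ^ 2 / 2) (-ℓ) ℓ :=
    (((hasDerivAt_pow 2 ℓ).div_const 2).const_sub t₀).congr_deriv (by norm_num)
  exact h.hasDerivAt_comp hspace htime hℓ

lemma hasDerivAt_rescale_space {W W' : ℝ → ℝ → ℝ} {ℓ : ℝ}
    (h : ∀ x, HasDerivAt (fun z => W z (t₀ - ℓ ^ 2 / 2)) (W' x (t₀ - ℓ ^ 2 / 2)) x) (y : ℝ) :
    HasDerivAt (rescale W x₀ t₀ ℓ) (ℓ * rescale W' x₀ t₀ ℓ y) y := by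
  have haffine : HasDerivAt (fun y => x₀ + ℓ * y) ℓ y :=
    (((hasDerivAt_id y).const_mul ℓ).const_add x₀).congr_deriv (by simp)
  exact ((h (x₀ + ℓ * y)).comp y haffine).congr_deriv (mul_comm _ _)

lemma HasParabolicDerivs.hasDerivAt_integral_rescale (h : HasParabolicDerivs V Vt Vx Vxx t₁ t₂)
    (h0 : t₀ ≤ t₂) (hL : t₁ ≤ t₀ - L ^ 2 / 2) {k : ℝ → ℝ} (hk : Continuous k) (a b : ℝ) {ℓ : ℝ}
    (hℓ : ℓ ∈ Ioo 0 L) :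
    HasDerivAt (fun ℓ => ∫ y in a..b, k y * rescale V x₀ t₀ ℓ y)
      (∫ y in a..b, k y * (y * rescale Vx x₀ t₀ ℓ y + (-ℓ) * rescale Vt x₀ t₀ ℓ y)) ℓ := by
  obtain ⟨δ, hδ, hball⟩ := Metric.nhds_basis_closedBall.mem_iff.1 (Ioo_mem_nhds hℓ.1 hℓ.2)
  have hcont : ContinuousOn (fun q : ℝ × ℝ => k q.2 * (q.2 * rescale Vx x₀ t₀ q.1 q.2
      + (-q.1) * rescale Vt x₀ t₀ q.1 q.2)) (Metric.closedBall ℓ δ ×ˢ uIcc a b) := by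
    have hsub := prod_mono hball (subset_univ (uIcc a b))
    have hVx := (continuousOn_rescale (x₀ := x₀) h0 hL h.continuousOn_x).mono hsub
    have hVt := (continuousOn_rescale (x₀ := x₀) h0 hL h.continuousOn_t).mono hsub
    fun_prop
  obtain ⟨M, hM⟩ :=
    ((isCompact_closedBall ℓ δ).prod isCompact_uIcc).exists_bound_of_continuousOn hcont
  have htℓ := sub_sq_div_two_mem_Ioo h0 hL hℓ
  have hV := continuous_rescale (x₀ := x₀) h.continuousOn htℓ
  have hVx := continuous_rescale (x₀ := x₀) h.continuousOn_x htℓ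
  have hVt := continuous_rescale (x₀ := x₀) h.continuousOn_t htℓ
  refine (intervalIntegral.hasDerivAt_integral_of_dominated_loc_of_deriv_le
    (F' := fun ℓ y => k y * (y * rescale Vx x₀ t₀ ℓ y + (-ℓ) * rescale Vt x₀ t₀ ℓ y))
    (bound := fun _ => M) (s := Metric.closedBall ℓ δ) (Metric.closedBall_mem_nhds ℓ hδ)
    ?_ ((hk.mul hV).intervalIntegrable a b) (Continuous.aestronglyMeasurable (by fun_prop))
    (ae_of_all _ fun y hy s hs => hM (s, y) ⟨hs, uIoc_subset_uIcc hy⟩)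
    intervalIntegrable_const
    (ae_of_all _ fun y _ s hs => (h.hasDerivAt_rescale_scale
      (sub_sq_div_two_mem_Ioo h0 hL (hball hs)) y).const_mul _)).2
  filter_upwards [Ioo_mem_nhds hℓ.1 hℓ.2] with s hs
  exact (hk.mul (continuous_rescale h.continuousOn
    (sub_sq_div_two_mem_Ioo h0 hL hs))).aestronglyMeasurable

lemma HasParabolicDerivs.integral_ouGenerator_mul_rescale
    (h : HasParabolicDerivs V Vt Vx Vxx t₁ t₂) {ℓ : ℝ} (hℓ : t₀ - ℓ ^ 2 / 2 ∈ Ioo t₁ t₂)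
    (hℓ0 : ℓ ≠ 0) {p : ℝ[X]} {a b : ℝ} (hpa : p.eval a = 0) (hpb : p.eval b = 0)
    (hpa' : (derivative p).eval a = 0) (hpb' : (derivative p).eval b = 0) :
    ∫ y in a..b, (gaussianPDFReal 0 1 y *
        (p.eval y * (ℓ * rescale Vxx x₀ t₀ ℓ y - y * rescale Vx x₀ t₀ ℓ y)) -
      1 / ℓ * (gaussianPDFReal 0 1 y * ((ouGenerator p).eval y * rescale V x₀ t₀ ℓ y))) = 0 := by
  have hV := continuous_rescale (x₀ := x₀) h.continuousOn hℓ
  have hVx := continuous_rescale (x₀ := x₀) h.continuousOn_x hℓ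
  have hVxx := continuous_rescale (x₀ := x₀) h.continuousOn_xx hℓ
  have hpdf := continuous_gaussianPDFReal 0 1
  rw [intervalIntegral.integral_eq_sub_of_hasDerivAt (f := fun y => gaussianPDFReal 0 1 y *
    (p.eval y * rescale Vx x₀ t₀ ℓ y) - 1 / ℓ *
      (gaussianPDFReal 0 1 y * ((derivative p).eval y * rescale V x₀ t₀ ℓ y)))]
  · simp [hpa, hpb, hpa', hpb']
  · intro y _
    have hx := hasDerivAt_rescale_space (x₀ := x₀) (fun x => h.hasDerivAt_x x _ hℓ) y
    have hxx := hasDerivAt_rescale_space (x₀ := x₀) (fun x => h.hasDerivAt_xx x _ hℓ) y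
    have hpdf' := hasDerivAt_gaussianPDFReal 0 1 y
    refine ((hpdf'.mul ((p.hasDerivAt y).mul hxx)).sub
      ((hpdf'.mul (((derivative p).hasDerivAt y).mul hx)).const_mul (1 / ℓ))).congr_deriv ?_
    simp only [ouGenerator, eval_sub, eval_mul, eval_X, Pi.mul_apply, sub_zero, NNReal.coe_one,
      div_one]
    field_simp
    ring
  · exact Continuous.intervalIntegrable (by fun_prop) _ _

/- As `p` vanishes to second order at the endpoints, the two integrations by parts which move the
space derivatives onto `p` leave no boundary terms. -/
lemma HasParabolicDerivs.hasDerivAt_integral_mul_rescale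
    (h : HasParabolicDerivs V Vt Vx Vxx t₁ t₂) (h0 : t₀ ≤ t₂) (hL : t₁ ≤ t₀ - L ^ 2 / 2)
    {p : ℝ[X]} {a b : ℝ} (hpa : p.eval a = 0) (hpb : p.eval b = 0)
    (hpa' : (derivative p).eval a = 0) (hpb' : (derivative p).eval b = 0)
    {ℓ : ℝ} (hℓ : ℓ ∈ Ioo 0 L) :
    HasDerivAt
      (fun ℓ => ∫ y in a..b, gaussianPDFReal 0 1 y * (p.eval y * rescale V x₀ t₀ ℓ y))
      (-(1 / ℓ) * (∫ y in a..b, gaussianPDFReal 0 1 y *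
          ((ouGenerator p).eval y * rescale V x₀ t₀ ℓ y))
        - ℓ * ∫ y in a..b, gaussianPDFReal 0 1 y *
          (p.eval y * (rescale Vt x₀ t₀ ℓ y - rescale Vxx x₀ t₀ ℓ y))) ℓ := by
  have htℓ := sub_sq_div_two_mem_Ioo h0 hL hℓ
  have hpdf := continuous_gaussianPDFReal 0 1
  have hV := continuous_rescale (x₀ := x₀) h.continuousOn htℓ
  have hVx := continuous_rescale (x₀ := x₀) h.continuousOn_x htℓ
  have hVt := continuous_rescale (x₀ := x₀) h.continuousOn_t htℓ
  have hVxx := continuous_rescale (x₀ := x₀) h.continuousOn_xx htℓ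
  have hderiv := h.hasDerivAt_integral_rescale (x₀ := x₀) h0 hL
    (k := fun y => gaussianPDFReal 0 1 y * p.eval y) (hpdf.mul p.continuous) a b hℓ
  simp only [mul_assoc] at hderiv
  refine hderiv.congr_deriv ?_
  have hparts := h.integral_ouGenerator_mul_rescale (x₀ := x₀) htℓ hℓ.1.ne' hpa hpb hpa' hpb'
  rw [← sub_eq_zero]
  refine Eq.trans ?_ (neg_eq_zero.2 hparts)
  rw [neg_mul, ← intervalIntegral.integral_const_mul, ← intervalIntegral.integral_const_mul,
    ← intervalIntegral.integral_neg, ← intervalIntegral.integral_sub,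
    ← intervalIntegral.integral_sub, ← intervalIntegral.integral_neg]
  · congr 1 with y
    ring
  all_goals exact Continuous.intervalIntegrable (by fun_prop) _ _

end Rescaling

section CutOff

open Polynomial

/-- A polynomial cut-off: on `[-1/a, 1/a]` it takes values in `[0, 1]`, it vanishes to second order
at the endpoints, and it tends to `1` as `a → 0`. -/
def cutoff (a : ℝ) : ℝ[X] := (1 - C (a ^ 2) * X ^ 2) ^ 2

/-- The polynomial function `p`, set to zero off `(-1/a, 1/a]`. -/
def truncatedEval (a : ℝ) (p : ℝ[X]) : ℝ → ℝ := (Ioc (-a⁻¹) a⁻¹).indicator fun y => p.eval y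

lemma ouGenerator_mul (p q : ℝ[X]) : ouGenerator (p * q) =
    p * ouGenerator q + 2 * derivative p * derivative q + ouGenerator p * q := by
  simp only [ouGenerator, derivative_mul, derivative_add]
  ring

lemma eval_cutoff (a y : ℝ) : (cutoff a).eval y = (1 - (a * y) ^ 2) ^ 2 := by
  simp [cutoff, mul_pow]

lemma eval_derivative_cutoff (a y : ℝ) :
    (derivative (cutoff a)).eval y = -4 * a * (a * y * (1 - (a * y) ^ 2)) := by
  simp only [cutoff, derivative_pow, derivative_sub, derivative_mul, derivative_C, derivative_X,
    derivative_one, eval_mul, eval_sub, eval_add, eval_pow, eval_C, eval_X, eval_one, eval_zero,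
    Nat.cast_ofNat, Nat.add_one_sub_one]
  ring

lemma eval_ouGenerator_cutoff (a y : ℝ) : (ouGenerator (cutoff a)).eval y =
    -4 * a ^ 2 + 12 * (a ^ 2 * (a * y) ^ 2) + 4 * ((a * y) ^ 2 * (1 - (a * y) ^ 2)) := by
  simp only [ouGenerator, cutoff, derivative_pow, derivative_sub, derivative_add, derivative_mul,
    derivative_C, derivative_X, derivative_one, derivative_zero, eval_mul, eval_sub, eval_add,
    eval_pow, eval_C, eval_X, eval_one, eval_zero, Nat.cast_ofNat, Nat.add_one_sub_one]
  ring

lemma abs_eval_cutoff_le {a y : ℝ} (h : |a * y| ≤ 1) : |(cutoff a).eval y| ≤ 1 := by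
  have hsq : (a * y) ^ 2 ≤ 1 := (sq_le_one_iff_abs_le_one _).2 h
  rw [eval_cutoff, abs_of_nonneg (sq_nonneg _)]
  exact pow_le_one₀ (sub_nonneg.2 hsq) (sub_le_self _ (sq_nonneg _))

lemma abs_eval_derivative_cutoff_le {a y : ℝ} (ha : |a| ≤ 1) (h : |a * y| ≤ 1) :
    |(derivative (cutoff a)).eval y| ≤ 4 := by
  have hsq : (a * y) ^ 2 ≤ 1 := (sq_le_one_iff_abs_le_one _).2 h
  have hfactor : |1 - (a * y) ^ 2| ≤ 1 := by
    rw [abs_of_nonneg (sub_nonneg.2 hsq)]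
    exact sub_le_self _ (sq_nonneg _)
  rw [eval_derivative_cutoff]
  calc |-4 * a * (a * y * (1 - (a * y) ^ 2))|
      = 4 * |a| * (|a * y| * |1 - (a * y) ^ 2|) := by simp [abs_mul]
    _ ≤ 4 * 1 * (1 * 1) := by gcongr
    _ = 4 := by norm_num

lemma abs_eval_ouGenerator_cutoff_le {a y : ℝ} (ha : |a| ≤ 1) (h : |a * y| ≤ 1) :
    |(ouGenerator (cutoff a)).eval y| ≤ 20 := by
  have hsq : (a * y) ^ 2 ≤ 1 := (sq_le_one_iff_abs_le_one _).2 h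
  have hasq : a ^ 2 ≤ 1 := (sq_le_one_iff_abs_le_one _).2 ha
  rw [eval_ouGenerator_cutoff, abs_le]
  constructor <;> nlinarith [sq_nonneg a, sq_nonneg (a * y)]

lemma abs_eval_ouGenerator_cutoff_mul_le {a y : ℝ} (ha : |a| ≤ 1) (h : |a * y| ≤ 1) (q : ℝ[X]) :
    |(ouGenerator (cutoff a * q)).eval y|
      ≤ |(ouGenerator q).eval y| + 8 * |(derivative q).eval y| + 20 * |q.eval y| := by
  have hcut := abs_eval_cutoff_le h
  have hder := abs_eval_derivative_cutoff_le ha h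
  have hou := abs_eval_ouGenerator_cutoff_le ha h
  simp only [ouGenerator_mul, eval_add, eval_mul, eval_ofNat]
  refine (abs_add_three _ _ _).trans ?_
  simp only [abs_mul, abs_two]
  refine add_le_add (add_le_add (mul_le_of_le_one_left (abs_nonneg _) hcut) ?_) ?_
  · gcongr
    linarith
  · gcongr

lemma abs_mul_le_one_of_mem_Ioc {a y : ℝ} (ha : 0 < a) (hy : y ∈ Ioc (-a⁻¹) a⁻¹) :
    |a * y| ≤ 1 := by
  have hle : |y| ≤ a⁻¹ := abs_le.2 ⟨hy.1.le, hy.2⟩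
  calc |a * y| = a * |y| := by rw [abs_mul, abs_of_pos ha]
    _ ≤ a * a⁻¹ := by gcongr
    _ = 1 := mul_inv_cancel₀ ha.ne'

lemma eventually_truncatedEval_eq (y : ℝ) :
    ∀ᶠ a in 𝓝[>] 0, ∀ p : ℝ[X], truncatedEval a p y = p.eval y := by
  filter_upwards [tendsto_inv_nhdsGT_zero.eventually_gt_atTop |y|] with a ha p
  obtain ⟨hl, hr⟩ := abs_lt.1 ha
  exact indicator_of_mem (mem_Ioc.2 ⟨hl, hr.le⟩) _

lemma integrable_truncatedEval (a : ℝ) (p : ℝ[X]) : Integrable (truncatedEval a p) γ₁ :=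
  (integrable_eval_gaussianReal p).indicator measurableSet_Ioc

lemma tendsto_integral_abs_truncatedEval_sub {p : ℝ → ℝ[X]} {q : ℝ[X]} {G : ℝ → ℝ}
    (hG : Integrable G γ₁) (hp : ∀ a ∈ Ioc 0 1, ∀ y, |a * y| ≤ 1 → |(p a).eval y| ≤ G y)
    (hq : ∀ y, |q.eval y| ≤ G y)
    (hlim : ∀ y, Tendsto (fun a => (p a).eval y) (𝓝 0) (𝓝 (q.eval y))) :
    Tendsto (fun a => ∫ y, |truncatedEval a (p a) y - q.eval y| ∂γ₁) (𝓝[>] 0) (𝓝 0) := by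
  suffices h : Tendsto (fun a => ∫ y, |truncatedEval a (p a) y - q.eval y| ∂γ₁) (𝓝[>] 0)
      (𝓝 (∫ _, (0 : ℝ) ∂γ₁)) by rwa [integral_zero] at h
  refine tendsto_integral_filter_of_dominated_convergence (fun y => G y + G y)
    (.of_forall fun a => ((integrable_truncatedEval a _).sub
      (integrable_eval_gaussianReal q)).abs.aestronglyMeasurable) ?_ (hG.add hG)
    (ae_of_all _ fun y => ?_)
  · filter_upwards [Ioc_mem_nhdsGT one_pos] with a ha
    refine ae_of_all _ fun y => ?_
    rw [Real.norm_eq_abs, abs_abs]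
    refine (abs_sub _ _).trans (add_le_add ?_ (hq y))
    by_cases hy : y ∈ Ioc (-a⁻¹) a⁻¹
    · rw [truncatedEval, indicator_of_mem hy]
      exact hp a ha y (abs_mul_le_one_of_mem_Ioc ha.1 hy)
    · rw [truncatedEval, indicator_of_notMem hy, abs_zero]
      exact (abs_nonneg _).trans (hq y)
  · have hdiff : Tendsto (fun a => |(p a).eval y - q.eval y|) (𝓝[>] 0) (𝓝 0) := by
      simpa using (((hlim y).mono_left nhdsWithin_le_nhds).sub_const (q.eval y)).abs
    refine hdiff.congr' ?_
    filter_upwards [eventually_truncatedEval_eq y] with a ha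
    rw [ha]

lemma tendsto_integral_abs_truncatedEval_cutoff_mul_sub (q : ℝ[X]) :
    Tendsto (fun a => ∫ y, |truncatedEval a (cutoff a * q) y - q.eval y| ∂γ₁) (𝓝[>] 0) (𝓝 0) := by
  refine tendsto_integral_abs_truncatedEval_sub (integrable_eval_gaussianReal q).abs
    (fun a _ y hy => ?_) (fun y => le_rfl) fun y => ?_
  · rw [eval_mul, abs_mul]
    exact mul_le_of_le_one_left (abs_nonneg _) (abs_eval_cutoff_le hy)
  · simp only [eval_mul, eval_cutoff]
    exact Continuous.tendsto' (by fun_prop) _ _ (by simp)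

lemma tendsto_integral_abs_truncatedEval_ouGenerator_sub (q : ℝ[X]) :
    Tendsto (fun a => ∫ y, |truncatedEval a (ouGenerator (cutoff a * q)) y
      - (ouGenerator q).eval y| ∂γ₁) (𝓝[>] 0) (𝓝 0) := by
  refine tendsto_integral_abs_truncatedEval_sub
    (G := fun y => |(ouGenerator q).eval y| + 8 * |(derivative q).eval y| + 20 * |q.eval y|)
    (((integrable_eval_gaussianReal _).abs.add
      ((integrable_eval_gaussianReal _).abs.const_mul 8)).add
      ((integrable_eval_gaussianReal _).abs.const_mul 20))
    (fun a ha y hy => abs_eval_ouGenerator_cutoff_mul_le ((abs_of_pos ha.1).trans_le ha.2) hy q)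
    (fun y => ?_) fun y => ?_
  · rw [add_assoc]
    exact le_add_of_nonneg_right (by positivity)
  · simp only [ouGenerator_mul, eval_add, eval_mul, eval_ofNat, eval_cutoff,
      eval_derivative_cutoff, eval_ouGenerator_cutoff]
    exact Continuous.tendsto' (by fun_prop) _ _ (by simp)

lemma intervalIntegral_gaussianPDFReal_mul_eq {a : ℝ} (ha : 0 < a) (p : ℝ[X]) (w : ℝ → ℝ) :
    ∫ y in (-a⁻¹)..a⁻¹, gaussianPDFReal 0 1 y * (p.eval y * w y)
      = ∫ y, truncatedEval a p y * w y ∂γ₁ := by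
  rw [intervalIntegral.integral_of_le (neg_le_self (inv_pos.2 ha).le),
    integral_gaussianReal_eq_integral_smul one_ne_zero, ← integral_indicator measurableSet_Ioc]
  congr 1 with y
  by_cases hy : y ∈ Ioc (-a⁻¹) a⁻¹ <;> simp [truncatedEval, hy]

lemma integrable_eval_mul_of_bounded {w : ℝ → ℝ} {B : ℝ} (q : ℝ[X]) (hw : Continuous w)
    (hB : ∀ y, |w y| ≤ B) : Integrable (fun y => q.eval y * w y) γ₁ :=
  (integrable_eval_gaussianReal q).mul_bdd hw.aestronglyMeasurable (ae_of_all _ hB)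

lemma abs_integral_truncatedEval_mul_sub_le {w : ℝ → ℝ} {B : ℝ} (a : ℝ) (p q : ℝ[X])
    (hw : Continuous w) (hB : ∀ y, |w y| ≤ B) :
    |∫ y, truncatedEval a p y * w y ∂γ₁ - ∫ y, q.eval y * w y ∂γ₁|
      ≤ B * ∫ y, |truncatedEval a p y - q.eval y| ∂γ₁ := by
  have hp := integrable_truncatedEval a p
  have hq : Integrable (fun y => q.eval y) γ₁ := integrable_eval_gaussianReal q
  rw [← integral_sub (hp.mul_bdd hw.aestronglyMeasurable (ae_of_all _ hB))
    (integrable_eval_mul_of_bounded q hw hB), ← integral_const_mul]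
  refine abs_integral_le_integral_abs.trans (integral_mono_of_nonneg
    (ae_of_all _ fun y => abs_nonneg _) ((hp.sub hq).abs.const_mul B) (ae_of_all _ fun y => ?_))
  simp only [← sub_mul, abs_mul, mul_comm B]
  exact mul_le_mul_of_nonneg_left (hB y) (abs_nonneg _)

lemma eval_cutoff_mul_eq_zero {a y : ℝ} (h : (a * y) ^ 2 = 1) (q : ℝ[X]) :
    (cutoff a * q).eval y = 0 := by
  simp [eval_cutoff, h]

lemma eval_derivative_cutoff_mul_eq_zero {a y : ℝ} (h : (a * y) ^ 2 = 1) (q : ℝ[X]) :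
    (derivative (cutoff a * q)).eval y = 0 := by
  simp [eval_cutoff, eval_derivative_cutoff, h]

end CutOff

section Evolution

open Polynomial

variable {V Vt Vx Vxx : ℝ → ℝ → ℝ} {t₁ t₂ x₀ t₀ L B : ℝ}

lemma tendstoUniformlyOn_integral_truncatedEval_mul {p : ℝ → ℝ[X]} {q : ℝ[X]}
    (hp : Tendsto (fun a => ∫ y, |truncatedEval a (p a) y - q.eval y| ∂γ₁) (𝓝[>] 0) (𝓝 0))
    {W : ℝ → ℝ → ℝ} {S : Set ℝ} (hW : ∀ s ∈ S, Continuous (W s))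
    (hB : ∀ s ∈ S, ∀ y, |W s y| ≤ B) :
    TendstoUniformlyOn (fun a s => ∫ y, truncatedEval a (p a) y * W s y ∂γ₁)
      (fun s => ∫ y, q.eval y * W s y ∂γ₁) (𝓝[>] 0) S := by
  rw [Metric.tendstoUniformlyOn_iff]
  intro ε hε
  have hlim := hp.const_mul B
  rw [mul_zero] at hlim
  filter_upwards [hlim.eventually_lt_const hε] with a ha s hs
  rw [dist_comm, Real.dist_eq]
  exact (abs_integral_truncatedEval_mul_sub_le a _ _ (hW s hs) (hB s hs)).trans_lt ha

lemma tendsto_integral_truncatedEval_cutoff_mul (q : ℝ[X]) {w : ℝ → ℝ} (hw : Continuous w)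
    (hB : ∀ y, |w y| ≤ B) :
    Tendsto (fun a => ∫ y, truncatedEval a (cutoff a * q) y * w y ∂γ₁) (𝓝[>] 0)
      (𝓝 (∫ y, q.eval y * w y ∂γ₁)) :=
  (tendstoUniformlyOn_integral_truncatedEval_mul (W := fun _ => w) (S := univ)
    (tendsto_integral_abs_truncatedEval_cutoff_mul_sub q) (fun _ _ => hw)
    fun _ _ => hB).tendsto_at (mem_univ 0)

lemma HasParabolicDerivs.hasDerivAt_integral_truncatedEval_mul_rescale
    (h : HasParabolicDerivs V Vt Vx Vxx t₁ t₂) (h0 : t₀ ≤ t₂) (hL : t₁ ≤ t₀ - L ^ 2 / 2)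
    {a : ℝ} (ha : 0 < a) (q : ℝ[X]) {ℓ : ℝ} (hℓ : ℓ ∈ Ioo 0 L) :
    HasDerivAt (fun ℓ => ∫ y, truncatedEval a (cutoff a * q) y * rescale V x₀ t₀ ℓ y ∂γ₁)
      (-(1 / ℓ) * (∫ y, truncatedEval a (ouGenerator (cutoff a * q)) y
          * rescale V x₀ t₀ ℓ y ∂γ₁)
        - ℓ * ∫ y, truncatedEval a (cutoff a * q) y
          * (rescale Vt x₀ t₀ ℓ y - rescale Vxx x₀ t₀ ℓ y) ∂γ₁) ℓ := by
  have hright : (a * a⁻¹) ^ 2 = 1 := by simp [ha.ne']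
  have hleft : (a * -a⁻¹) ^ 2 = 1 := by simp [ha.ne']
  simpa only [intervalIntegral_gaussianPDFReal_mul_eq ha] using
    h.hasDerivAt_integral_mul_rescale (x₀ := x₀) h0 hL (eval_cutoff_mul_eq_zero hleft q)
      (eval_cutoff_mul_eq_zero hright q) (eval_derivative_cutoff_mul_eq_zero hleft q)
      (eval_derivative_cutoff_mul_eq_zero hright q) hℓ

lemma HasParabolicDerivs.tendstoUniformlyOn_deriv_integral_truncatedEval
    (h : HasParabolicDerivs V Vt Vx Vxx t₁ t₂) (h0 : t₀ ≤ t₂) (hL : t₁ ≤ t₀ - L ^ 2 / 2)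
    (hB : ∀ x, ∀ t ∈ Ioo t₁ t₂, |V x t| ≤ B) {G : ℝ}
    (hG : ∀ x, ∀ t ∈ Ioo t₁ t₂, |Vt x t - Vxx x t| ≤ G) (q : ℝ[X]) {δ : ℝ} (hδ : 0 < δ) :
    TendstoUniformlyOn
      (fun a ℓ => -(1 / ℓ) * (∫ y, truncatedEval a (ouGenerator (cutoff a * q)) y
          * rescale V x₀ t₀ ℓ y ∂γ₁)
        - ℓ * ∫ y, truncatedEval a (cutoff a * q) y
          * (rescale Vt x₀ t₀ ℓ y - rescale Vxx x₀ t₀ ℓ y) ∂γ₁)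
      (fun ℓ => -(1 / ℓ) * (∫ y, (ouGenerator q).eval y * rescale V x₀ t₀ ℓ y ∂γ₁)
        - ℓ * ∫ y, q.eval y * (rescale Vt x₀ t₀ ℓ y - rescale Vxx x₀ t₀ ℓ y) ∂γ₁)
      (𝓝[>] 0) (Ioo δ L) := by
  have htime : ∀ s ∈ Ioo δ L, t₀ - s ^ 2 / 2 ∈ Ioo t₁ t₂ := fun s hs =>
    sub_sq_div_two_mem_Ioo h0 hL ⟨hδ.trans hs.1, hs.2⟩
  have hdiffusion := tendstoUniformlyOn_integral_truncatedEval_mul (S := Ioo δ L)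
    (tendsto_integral_abs_truncatedEval_ouGenerator_sub q) (B := 1 / δ * B)
    (W := fun s y => -(1 / s) * rescale V x₀ t₀ s y)
    (fun s hs => continuous_const.mul (continuous_rescale h.continuousOn (htime s hs)))
    fun s hs y => by
      have hs0 : 0 < s := hδ.trans hs.1
      rw [abs_mul, abs_neg, abs_of_pos (one_div_pos.2 hs0)]
      exact mul_le_mul (one_div_le_one_div_of_le hδ hs.1.le) (hB _ _ (htime s hs))
        (abs_nonneg _) (one_div_pos.2 hδ).le
  have hforcing := tendstoUniformlyOn_integral_truncatedEval_mul (S := Ioo δ L)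
    (tendsto_integral_abs_truncatedEval_cutoff_mul_sub q) (B := L * G)
    (W := fun s y => s * (rescale Vt x₀ t₀ s y - rescale Vxx x₀ t₀ s y))
    (fun s hs => continuous_const.mul ((continuous_rescale h.continuousOn_t (htime s hs)).sub
      (continuous_rescale h.continuousOn_xx (htime s hs))))
    fun s hs y => by
      have hs0 : 0 < s := hδ.trans hs.1
      rw [abs_mul, abs_of_pos hs0]
      exact mul_le_mul hs.2.le (hG _ _ (htime s hs)) (abs_nonneg _) (hs0.trans hs.2).le
  convert hdiffusion.sub hforcing using 3 with a s s <;>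
    simp only [mul_left_comm _ (-(1 / s)), mul_left_comm _ s, integral_const_mul, Pi.sub_apply]

/- Multiply `q` by a cut-off of radius `1/a` and let `a → 0`. -/
theorem HasParabolicDerivs.hasDerivAt_integral_eval_mul_rescale
    (h : HasParabolicDerivs V Vt Vx Vxx t₁ t₂) (h0 : t₀ ≤ t₂) (hL : t₁ ≤ t₀ - L ^ 2 / 2)
    (hB : ∀ x, ∀ t ∈ Ioo t₁ t₂, |V x t| ≤ B) {G : ℝ}
    (hG : ∀ x, ∀ t ∈ Ioo t₁ t₂, |Vt x t - Vxx x t| ≤ G) (q : ℝ[X]) {ℓ : ℝ} (hℓ : ℓ ∈ Ioo 0 L) :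
    HasDerivAt (fun ℓ => ∫ y, q.eval y * rescale V x₀ t₀ ℓ y ∂γ₁)
      (-(1 / ℓ) * (∫ y, (ouGenerator q).eval y * rescale V x₀ t₀ ℓ y ∂γ₁)
        - ℓ * ∫ y, q.eval y * (rescale Vt x₀ t₀ ℓ y - rescale Vxx x₀ t₀ ℓ y) ∂γ₁) ℓ := by
  have hpos : ∀ s ∈ Ioo (ℓ / 2) L, s ∈ Ioo 0 L := fun s hs => ⟨(half_pos hℓ.1).trans hs.1, hs.2⟩
  refine hasDerivAt_of_tendstoLocallyUniformlyOn isOpen_Ioo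
    (h.tendstoUniformlyOn_deriv_integral_truncatedEval h0 hL hB hG q
      (half_pos hℓ.1)).tendstoLocallyUniformlyOn
    (f := fun a ℓ => ∫ y, truncatedEval a (cutoff a * q) y * rescale V x₀ t₀ ℓ y ∂γ₁)
    ?_ (fun s hs => ?_) ⟨half_lt_self hℓ.1, hℓ.2⟩
  · filter_upwards [self_mem_nhdsWithin] with a ha s hs
    exact h.hasDerivAt_integral_truncatedEval_mul_rescale h0 hL ha q (hpos s hs)
  · have hs := sub_sq_div_two_mem_Ioo h0 hL (hpos s hs)
    exact tendsto_integral_truncatedEval_cutoff_mul q (continuous_rescale h.continuousOn hs)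
      fun y => hB _ _ hs

/- The logarithm compensates the part of the derivative due to the cut-off, which is at most
`ε / ℓ`. -/
lemma HasParabolicDerivs.monotoneOn_integral_truncatedEval_add_log
    (h : HasParabolicDerivs V Vt Vx Vxx t₁ t₂) (h0 : t₀ ≤ t₂) (hL : t₁ ≤ t₀ - L ^ 2 / 2)
    (hsub : ∀ x, ∀ t ∈ Ioo t₁ t₂, Vt x t - Vxx x t ≤ 0) {a : ℝ} (ha : 0 < a) {ε : ℝ}
    (hε : ∀ ℓ ∈ Ioo 0 L,
      ∫ y, truncatedEval a (ouGenerator (cutoff a * 1)) y * rescale V x₀ t₀ ℓ y ∂γ₁ ≤ ε) :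
    MonotoneOn (fun ℓ => (∫ y, truncatedEval a (cutoff a * 1) y * rescale V x₀ t₀ ℓ y ∂γ₁)
      + ε * log ℓ) (Ioo 0 L) := by
  have hderiv := fun ℓ (hℓ : ℓ ∈ Ioo 0 L) =>
    (h.hasDerivAt_integral_truncatedEval_mul_rescale (x₀ := x₀) h0 hL ha 1 hℓ).add
      ((Real.hasDerivAt_log hℓ.1.ne').const_mul ε)
  refine monotoneOn_of_hasDerivWithinAt_nonneg (convex_Ioo 0 L)
    (fun ℓ hℓ => (hderiv ℓ hℓ).continuousAt.continuousWithinAt)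
    (fun ℓ hℓ => (hderiv ℓ (interior_subset hℓ)).hasDerivWithinAt) fun ℓ hℓ => ?_
  replace hℓ := interior_subset hℓ
  have hforcing : ∫ y, truncatedEval a (cutoff a * 1) y
      * (rescale Vt x₀ t₀ ℓ y - rescale Vxx x₀ t₀ ℓ y) ∂γ₁ ≤ 0 := by
    refine integral_nonpos fun y => mul_nonpos_of_nonneg_of_nonpos
      (indicator_nonneg (fun z _ => ?_) y) (hsub _ _ (sub_sq_div_two_mem_Ioo h0 hL hℓ))
    rw [mul_one, eval_cutoff]
    positivity
  have hcutoff := mul_le_mul_of_nonneg_left (hε ℓ hℓ) (one_div_pos.2 hℓ.1).le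
  rw [mul_comm ε, ← one_div, neg_mul]
  linarith [mul_nonpos_of_nonneg_of_nonpos hℓ.1.le hforcing]

theorem HasParabolicDerivs.integral_rescale_mono
    (h : HasParabolicDerivs V Vt Vx Vxx t₁ t₂) (h0 : t₀ ≤ t₂) (hL : t₁ ≤ t₀ - L ^ 2 / 2)
    (hB : ∀ x, ∀ t ∈ Ioo t₁ t₂, |V x t| ≤ B)
    (hsub : ∀ x, ∀ t ∈ Ioo t₁ t₂, Vt x t - Vxx x t ≤ 0) :
    MonotoneOn (fun ℓ => ∫ y, rescale V x₀ t₀ ℓ y ∂γ₁) (Ioo 0 L) := by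
  intro r hr s hs hrs
  have hcont := fun ℓ (hℓ : ℓ ∈ Ioo 0 L) =>
    continuous_rescale (x₀ := x₀) h.continuousOn (sub_sq_div_two_mem_Ioo h0 hL hℓ)
  have hbound := fun ℓ (hℓ : ℓ ∈ Ioo 0 L) y =>
    hB (x₀ + ℓ * y) _ (sub_sq_div_two_mem_Ioo h0 hL hℓ)
  set ε : ℝ → ℝ := fun a => B * ∫ y, |truncatedEval a (ouGenerator (cutoff a * 1)) y
    - (ouGenerator 1).eval y| ∂γ₁ with hε
  have hε0 : Tendsto ε (𝓝[>] 0) (𝓝 0) := by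
    simpa only [mul_zero] using
      (tendsto_integral_abs_truncatedEval_ouGenerator_sub 1).const_mul B
  have hεle : ∀ a, ∀ ℓ ∈ Ioo 0 L, ∫ y, truncatedEval a (ouGenerator (cutoff a * 1)) y
      * rescale V x₀ t₀ ℓ y ∂γ₁ ≤ ε a := fun a ℓ hℓ => by
    have hdiff := abs_integral_truncatedEval_mul_sub_le a (ouGenerator (cutoff a * 1))
      (ouGenerator 1) (hcont ℓ hℓ) (hbound ℓ hℓ)
    simp only [ouGenerator, derivative_one, eval_zero, zero_mul, integral_zero, sub_zero,
      derivative_zero, mul_zero] at hdiff hε ⊢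
    simpa only [hε] using (le_abs_self _).trans hdiff
  have hlim := fun ℓ hℓ => (tendsto_integral_truncatedEval_cutoff_mul 1 (hcont ℓ hℓ)
    (hbound ℓ hℓ)).add (hε0.mul_const (log ℓ))
  simp only [eval_one, one_mul, zero_mul, add_zero] at hlim
  refine le_of_tendsto_of_tendsto (hlim r hr) (hlim s hs) ?_
  filter_upwards [self_mem_nhdsWithin] with a ha
  exact h.monotoneOn_integral_truncatedEval_add_log h0 hL hsub ha (hεle a) hr hs hrs

end Evolution

/-! ### Pointwise values and Gaussian averages -/

/-- A smooth approximation of `|z|` from above. -/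
def smoothAbs (ε z : ℝ) : ℝ := √(z ^ 2 + ε ^ 2)

section SmoothAbs

lemma smoothAbs_pos {ε : ℝ} (hε : 0 < ε) (z : ℝ) : 0 < smoothAbs ε z :=
  Real.sqrt_pos.2 (by positivity)

lemma smoothAbs_sq (ε z : ℝ) : smoothAbs ε z ^ 2 = z ^ 2 + ε ^ 2 := Real.sq_sqrt (by positivity)

lemma abs_le_smoothAbs (ε z : ℝ) : |z| ≤ smoothAbs ε z :=
  Real.abs_le_sqrt (le_add_of_nonneg_right (sq_nonneg ε))

lemma smoothAbs_le {ε : ℝ} (hε : 0 < ε) (z : ℝ) : smoothAbs ε z ≤ |z| + ε := by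
  refine Real.sqrt_le_iff.2 ⟨by positivity, ?_⟩
  nlinarith [sq_abs z, abs_nonneg z]

lemma hasDerivAt_smoothAbs {ε : ℝ} (hε : 0 < ε) (z : ℝ) :
    HasDerivAt (smoothAbs ε) (z / smoothAbs ε z) z :=
  (((hasDerivAt_pow 2 z).add_const (ε ^ 2)).sqrt (by positivity)).congr_deriv
    (by simpa [smoothAbs] using mul_div_mul_left z _ two_ne_zero)

lemma continuous_smoothAbs (ε : ℝ) : Continuous (smoothAbs ε) := by
  unfold smoothAbs
  fun_prop

end SmoothAbs

section Kato

variable {v vt vx vxx : ℝ → ℝ → ℝ} {t₁ t₂ B C : ℝ}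

lemma HasParabolicDerivs.exp_mul_smoothAbs (h : HasParabolicDerivs v vt vx vxx t₁ t₂) (C : ℝ)
    {ε : ℝ} (hε : 0 < ε) :
    HasParabolicDerivs (fun x t => rexp (-C * t) * smoothAbs ε (v x t))
      (fun x t => rexp (-C * t)
        * (v x t * vt x t / smoothAbs ε (v x t) - C * smoothAbs ε (v x t)))
      (fun x t => rexp (-C * t) * (v x t * vx x t / smoothAbs ε (v x t)))
      (fun x t => rexp (-C * t) * ((vx x t ^ 2 + v x t * vxx x t) / smoothAbs ε (v x t)
        - v x t ^ 2 * vx x t ^ 2 / smoothAbs ε (v x t) ^ 3)) t₁ t₂ := by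
  have hne : ∀ z, smoothAbs ε z ≠ 0 := fun z => (smoothAbs_pos hε z).ne'
  have hexp : ContinuousOn (fun p : ℝ × ℝ => rexp (-C * p.2)) (univ ×ˢ Ioo t₁ t₂) := by fun_prop
  have habs : ContinuousOn (fun p : ℝ × ℝ => smoothAbs ε (v p.1 p.2)) (univ ×ˢ Ioo t₁ t₂) :=
    (continuous_smoothAbs ε).comp_continuousOn h.continuousOn
  have hdx : ∀ x, ∀ t ∈ Ioo t₁ t₂, HasDerivAt (fun y => smoothAbs ε (v y t))
      (v x t / smoothAbs ε (v x t) * vx x t) x := fun x t ht =>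
    HasDerivAt.comp x (h₂ := smoothAbs ε) (hasDerivAt_smoothAbs hε (v x t)) (h.hasDerivAt_x x t ht)
  refine ⟨fun x t ht => ?_, fun x t ht => ?_, fun x t ht => ?_, ?_, ?_, ?_⟩
  · have hdt := (hasDerivAt_smoothAbs hε (v x t)).comp t (h.hasDerivAt_t x t ht)
    have hdexp := ((hasDerivAt_id t).const_mul (-C)).exp
    refine (hdexp.mul hdt).congr_deriv ?_
    simp only [Function.comp, id]
    ring
  · exact ((hdx x t ht).const_mul _).congr_deriv (by ring)
  · refine ((((h.hasDerivAt_x x t ht).mul (h.hasDerivAt_xx x t ht)).div (hdx x t ht)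
      (hne _)).const_mul (rexp (-C * t))).congr_deriv ?_
    have := hne (v x t)
    simp only [Pi.mul_apply]
    field_simp
  · exact hexp.mul (((h.continuousOn.mul h.continuousOn_t).div habs fun _ _ => hne _).sub
      (habs.const_mul C))
  · exact hexp.mul ((h.continuousOn.mul h.continuousOn_x).div habs fun _ _ => hne _)
  · exact hexp.mul ((((h.continuousOn_x.pow 2).add (h.continuousOn.mul h.continuousOn_xx)).div
      habs fun _ _ => hne _).sub (((h.continuousOn.pow 2).mul (h.continuousOn_x.pow 2)).div
        (habs.pow 3) fun _ _ => pow_ne_zero _ (hne _)))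

lemma BoundedSolution.mul_heat_le (h : BoundedSolution v vt vx vxx t₁ t₂ B C) (x : ℝ) {t : ℝ}
    (ht : t ∈ Ioo t₁ t₂) : v x t * (vt x t - vxx x t) ≤ C * v x t ^ 2 :=
  calc v x t * (vt x t - vxx x t) ≤ |v x t| * |vt x t - vxx x t| :=
        (le_abs_self _).trans_eq (abs_mul _ _)
    _ ≤ |v x t| * (C * |v x t|) := by gcongr; exact h.abs_heat_le x t ht
    _ = C * v x t ^ 2 := by rw [← sq_abs]; ring

/- Kato's inequality in regularised form. -/
lemma BoundedSolution.exp_mul_smoothAbs_heat_nonpos (h : BoundedSolution v vt vx vxx t₁ t₂ B C)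
    {ε : ℝ} (hε : 0 < ε) (x : ℝ) {t : ℝ} (ht : t ∈ Ioo t₁ t₂) :
    rexp (-C * t) * (v x t * vt x t / smoothAbs ε (v x t) - C * smoothAbs ε (v x t))
     - rexp (-C * t) * ((vx x t ^ 2 + v x t * vxx x t) / smoothAbs ε (v x t)
        - v x t ^ 2 * vx x t ^ 2 / smoothAbs ε (v x t) ^ 3) ≤ 0 := by
  have hpos := smoothAbs_pos hε (v x t)
  have hsq := smoothAbs_sq ε (v x t)
  set S := smoothAbs ε (v x t)
  have hreaction : v x t * (vt x t - vxx x t) - C * S ^ 2 ≤ 0 := by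
    rw [hsq]
    nlinarith [h.mul_heat_le x ht, mul_nonneg h.nonneg (sq_nonneg ε)]
  have hconvex : 0 ≤ vx x t ^ 2 * (S ^ 2 - v x t ^ 2) / S ^ 3 := by
    rw [hsq, add_sub_cancel_left]
    positivity
  calc _ = rexp (-C * t) * ((v x t * (vt x t - vxx x t) - C * S ^ 2) / S
        - vx x t ^ 2 * (S ^ 2 - v x t ^ 2) / S ^ 3) := by field_simp; ring
    _ ≤ 0 := mul_nonpos_of_nonneg_of_nonpos (exp_pos _).le
      (sub_nonpos.2 ((div_nonpos_of_nonpos_of_nonneg hreaction hpos.le).trans hconvex))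

end Kato

section Averages

variable {v vt vx vxx : ℝ → ℝ → ℝ} {t₁ t₂ B C x₀ t₀ L : ℝ}

lemma BoundedSolution.integrable_rescale (h : BoundedSolution v vt vx vxx t₁ t₂ B C) {ℓ : ℝ}
    (hℓ : t₀ - ℓ ^ 2 / 2 ∈ Ioo t₁ t₂) : Integrable (rescale v x₀ t₀ ℓ) γ₁ :=
  .of_bound (continuous_rescale h.continuousOn hℓ).aestronglyMeasurable B
    (ae_of_all _ fun _ => h.abs_le _ _ hℓ)

lemma BoundedSolution.integrable_smoothAbs_rescale (h : BoundedSolution v vt vx vxx t₁ t₂ B C)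
    {ε : ℝ} (hε : 0 < ε) {ℓ : ℝ} (hℓ : t₀ - ℓ ^ 2 / 2 ∈ Ioo t₁ t₂) :
    Integrable (fun y => smoothAbs ε (rescale v x₀ t₀ ℓ y)) γ₁ := by
  have hbound : ∀ y, ‖smoothAbs ε (rescale v x₀ t₀ ℓ y)‖ ≤ B + ε := fun y => by
    rw [Real.norm_of_nonneg (smoothAbs_pos hε _).le]
    exact (smoothAbs_le hε _).trans (by gcongr; exact h.abs_le _ _ hℓ)
  exact .of_bound ((continuous_smoothAbs ε).comp
    (continuous_rescale h.continuousOn hℓ)).aestronglyMeasurable (B + ε) (ae_of_all _ hbound)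

lemma BoundedSolution.integral_smoothAbs_rescale_le (h : BoundedSolution v vt vx vxx t₁ t₂ B C)
    (h0 : t₀ ≤ t₂) (hL : t₁ ≤ t₀ - L ^ 2 / 2) {r s : ℝ} (hr : r ∈ Ioo 0 L) (hs : s ∈ Ioo 0 L)
    (hrs : r ≤ s) {ε : ℝ} (hε : 0 < ε) :
    ∫ y, smoothAbs ε (rescale v x₀ t₀ r y) ∂γ₁
      ≤ rexp (C * (s ^ 2 - r ^ 2) / 2) * ∫ y, smoothAbs ε (rescale v x₀ t₀ s y) ∂γ₁ := by
  have hbound : ∀ x, ∀ t ∈ Ioo t₁ t₂,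
      |rexp (-C * t) * smoothAbs ε (v x t)| ≤ rexp (-C * t₁) * (B + ε) := fun x t ht => by
    have hexp : rexp (-C * t) ≤ rexp (-C * t₁) :=
      Real.exp_le_exp.2 (by nlinarith [h.nonneg, ht.1])
    rw [abs_mul, abs_of_pos (exp_pos _), abs_of_pos (smoothAbs_pos hε _)]
    exact mul_le_mul hexp ((smoothAbs_le hε _).trans (by gcongr; exact h.abs_le x t ht))
      (smoothAbs_pos hε _).le (exp_pos _).le
  have hmono := (h.exp_mul_smoothAbs C hε).integral_rescale_mono (x₀ := x₀) h0 hL hbound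
    (fun x t ht => h.exp_mul_smoothAbs_heat_nonpos hε x ht) hr hs hrs
  have hfactor : rexp (-C * (t₀ - s ^ 2 / 2))
      = rexp (-C * (t₀ - r ^ 2 / 2)) * rexp (C * (s ^ 2 - r ^ 2) / 2) := by
    rw [← Real.exp_add]
    ring_nf
  simp only [rescale, integral_const_mul, hfactor, mul_assoc] at hmono ⊢
  exact le_of_mul_le_mul_left hmono (exp_pos _)

theorem BoundedSolution.integral_abs_rescale_le (h : BoundedSolution v vt vx vxx t₁ t₂ B C)
    (h0 : t₀ ≤ t₂) (hL : t₁ ≤ t₀ - L ^ 2 / 2) {r s : ℝ} (hr : r ∈ Ioo 0 L) (hs : s ∈ Ioo 0 L)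
    (hrs : r ≤ s) :
    ∫ y, |rescale v x₀ t₀ r y| ∂γ₁
      ≤ rexp (C * (s ^ 2 - r ^ 2) / 2) * ∫ y, |rescale v x₀ t₀ s y| ∂γ₁ := by
  have htime := fun ℓ (hℓ : ℓ ∈ Ioo 0 L) => sub_sq_div_two_mem_Ioo h0 hL hℓ
  have hinteg := fun ℓ hℓ => (h.integrable_rescale (x₀ := x₀) (htime ℓ hℓ)).abs
  have hsmooth := fun ε (hε : 0 < ε) ℓ hℓ =>
    h.integrable_smoothAbs_rescale (x₀ := x₀) hε (htime ℓ hℓ)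
  have hregularized : ∀ ε > 0, ∫ y, |rescale v x₀ t₀ r y| ∂γ₁ ≤
      rexp (C * (s ^ 2 - r ^ 2) / 2) * (∫ y, |rescale v x₀ t₀ s y| ∂γ₁ + ε) := fun ε hε =>
    calc ∫ y, |rescale v x₀ t₀ r y| ∂γ₁
        ≤ ∫ y, smoothAbs ε (rescale v x₀ t₀ r y) ∂γ₁ :=
          integral_mono (hinteg r hr) (hsmooth ε hε r hr) fun y => abs_le_smoothAbs _ _
      _ ≤ rexp (C * (s ^ 2 - r ^ 2) / 2) * ∫ y, smoothAbs ε (rescale v x₀ t₀ s y) ∂γ₁ :=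
          h.integral_smoothAbs_rescale_le h0 hL hr hs hrs hε
      _ ≤ rexp (C * (s ^ 2 - r ^ 2) / 2) * ∫ y, (|rescale v x₀ t₀ s y| + ε) ∂γ₁ := by
          gcongr
          exacts [hsmooth ε hε s hs, (hinteg s hs).add (integrable_const ε),
            fun y => smoothAbs_le hε _]
      _ = _ := by rw [integral_add (hinteg s hs) (integrable_const ε)]; simp
  have hlim : Tendsto (fun ε : ℝ => rexp (C * (s ^ 2 - r ^ 2) / 2)
      * (∫ y, |rescale v x₀ t₀ s y| ∂γ₁ + ε)) (𝓝[>] 0)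
      (𝓝 (rexp (C * (s ^ 2 - r ^ 2) / 2) * ∫ y, |rescale v x₀ t₀ s y| ∂γ₁)) :=
    (Continuous.tendsto' (by fun_prop) _ _ (by rw [add_zero])).mono_left nhdsWithin_le_nhds
  exact ge_of_tendsto hlim (by filter_upwards [self_mem_nhdsWithin] using hregularized)

lemma BoundedSolution.tendsto_integral_rescale (h : BoundedSolution v vt vx vxx t₁ t₂ B C)
    (h0 : t₀ ∈ Ioo t₁ t₂) :
    Tendsto (fun ℓ => ∫ y, rescale v x₀ t₀ ℓ y ∂γ₁) (𝓝 0) (𝓝 (v x₀ t₀)) := by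
  suffices hlim : Tendsto (fun ℓ => ∫ y, rescale v x₀ t₀ ℓ y ∂γ₁) (𝓝 0) (𝓝 (∫ _, v x₀ t₀ ∂γ₁)) by
    simpa using hlim
  have htime : Tendsto (fun ℓ : ℝ => t₀ - ℓ ^ 2 / 2) (𝓝 0) (𝓝 t₀) :=
    Continuous.tendsto' (by fun_prop) _ _ (by simp)
  have hmem : ∀ᶠ ℓ : ℝ in 𝓝 0, t₀ - ℓ ^ 2 / 2 ∈ Ioo t₁ t₂ := htime (Ioo_mem_nhds h0.1 h0.2)
  refine tendsto_integral_filter_of_dominated_convergence (fun _ => B) ?_ ?_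
    (integrable_const B) (ae_of_all _ fun y => ?_)
  · filter_upwards [hmem] with ℓ hℓ
    exact (continuous_rescale h.continuousOn hℓ).aestronglyMeasurable
  · filter_upwards [hmem] with ℓ hℓ
    exact ae_of_all _ fun y => h.abs_le _ _ hℓ
  · have hspace : Tendsto (fun ℓ : ℝ => x₀ + ℓ * y) (𝓝 0) (𝓝 x₀) :=
      Continuous.tendsto' (by fun_prop) _ _ (by simp)
    exact (h.continuousOn.continuousAt (strip_mem_nhds (p := (x₀, t₀)) h0)).tendsto.comp
      (hspace.prodMk_nhds htime)

lemma BoundedSolution.hasDerivAt_integral_rescale (h : BoundedSolution v vt vx vxx t₁ t₂ B C)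
    (h0 : t₀ ≤ t₂) (hL : t₁ ≤ t₀ - L ^ 2 / 2) {q : Polynomial ℝ} {ℓ : ℝ} (hℓ : ℓ ∈ Ioo 0 L) :
    HasDerivAt (fun ℓ => ∫ y, q.eval y * rescale v x₀ t₀ ℓ y ∂γ₁)
      (-(1 / ℓ) * (∫ y, (ouGenerator q).eval y * rescale v x₀ t₀ ℓ y ∂γ₁)
        - ℓ * ∫ y, q.eval y * (rescale vt x₀ t₀ ℓ y - rescale vxx x₀ t₀ ℓ y) ∂γ₁) ℓ :=
  h.toHasParabolicDerivs.hasDerivAt_integral_eval_mul_rescale h0 hL h.abs_le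
    (fun x t ht => (h.abs_heat_le x t ht).trans
      (mul_le_mul_of_nonneg_left (h.abs_le x t ht) h.nonneg)) q hℓ

lemma BoundedSolution.abs_integral_heat_rescale_le (h : BoundedSolution v vt vx vxx t₁ t₂ B C)
    (h0 : t₀ ≤ t₂) (hL : t₁ ≤ t₀ - L ^ 2 / 2) {r s : ℝ} (hr : r ∈ Ioo 0 L) (hs : s ∈ Ioo 0 L)
    (hrs : r ≤ s) :
    |∫ y, (rescale vt x₀ t₀ r y - rescale vxx x₀ t₀ r y) ∂γ₁|
      ≤ C * rexp (C * s ^ 2 / 2) * ∫ y, |rescale v x₀ t₀ s y| ∂γ₁ := by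
  have hC := h.nonneg
  have htime := sub_sq_div_two_mem_Ioo h0 hL hr
  calc |∫ y, (rescale vt x₀ t₀ r y - rescale vxx x₀ t₀ r y) ∂γ₁|
      ≤ ∫ y, |rescale vt x₀ t₀ r y - rescale vxx x₀ t₀ r y| ∂γ₁ := abs_integral_le_integral_abs
    _ ≤ ∫ y, C * |rescale v x₀ t₀ r y| ∂γ₁ :=
        integral_mono_of_nonneg (ae_of_all _ fun y => abs_nonneg _)
          ((h.integrable_rescale htime).abs.const_mul C)
          (ae_of_all _ fun y => h.abs_heat_le _ _ htime)
    _ = C * ∫ y, |rescale v x₀ t₀ r y| ∂γ₁ := integral_const_mul _ _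
    _ ≤ C * (rexp (C * (s ^ 2 - r ^ 2) / 2) * ∫ y, |rescale v x₀ t₀ s y| ∂γ₁) := by
        gcongr
        exact h.integral_abs_rescale_le h0 hL hr hs hrs
    _ ≤ C * (rexp (C * s ^ 2 / 2) * ∫ y, |rescale v x₀ t₀ s y| ∂γ₁) := by
        gcongr
        exact sub_le_self _ (sq_nonneg r)
    _ = _ := by ring

lemma abs_sub_le_of_abs_deriv_le_mul {c c' : ℝ → ℝ} {K r s : ℝ} (hrs : r ≤ s)
    (hc : ∀ ℓ ∈ Icc r s, HasDerivAt c (c' ℓ) ℓ) (hK : ∀ ℓ ∈ Icc r s, |c' ℓ| ≤ K * ℓ) :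
    |c s - c r| ≤ K * (s ^ 2 - r ^ 2) / 2 := by
  have hbound : ∀ ℓ, HasDerivAt (fun ℓ => K * (ℓ ^ 2 - r ^ 2) / 2) (K * ℓ) ℓ := fun ℓ =>
    ((((hasDerivAt_pow 2 ℓ).sub_const (r ^ 2)).const_mul K).div_const 2).congr_deriv
      (by norm_num; ring)
  exact image_norm_le_of_norm_deriv_right_le_deriv_boundary (f := fun ℓ => c ℓ - c r)
    (fun ℓ hℓ => ((hc ℓ hℓ).sub_const _).continuousAt.continuousWithinAt)
    (fun ℓ hℓ => ((hc ℓ (Ico_subset_Icc_self hℓ)).sub_const _).hasDerivWithinAt) (by simp) hbound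
    (fun ℓ hℓ => hK ℓ (Ico_subset_Icc_self hℓ)) (right_mem_Icc.2 hrs)

theorem BoundedSolution.abs_sub_integral_rescale_le (h : BoundedSolution v vt vx vxx t₁ t₂ B C)
    (h0 : t₀ ∈ Ioo t₁ t₂) (hL : t₁ ≤ t₀ - L ^ 2 / 2) {s : ℝ} (hs : s ∈ Ioo 0 L) :
    |v x₀ t₀ - ∫ y, rescale v x₀ t₀ s y ∂γ₁| ≤
      C * rexp (C * s ^ 2 / 2) * (∫ y, |rescale v x₀ t₀ s y| ∂γ₁) * s ^ 2 / 2 := by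
  set K := C * rexp (C * s ^ 2 / 2) * ∫ y, |rescale v x₀ t₀ s y| ∂γ₁
  set c : ℝ → ℝ := fun ℓ => ∫ y, rescale v x₀ t₀ ℓ y ∂γ₁
  have hK0 : 0 ≤ K :=
    mul_nonneg (mul_nonneg h.nonneg (exp_pos _).le) (integral_nonneg fun _ => abs_nonneg _)
  have hderiv : ∀ ℓ ∈ Ioo 0 L, HasDerivAt c
      (-(ℓ * ∫ y, (rescale vt x₀ t₀ ℓ y - rescale vxx x₀ t₀ ℓ y) ∂γ₁)) ℓ := fun ℓ hℓ => by
    simpa [ouGenerator] using h.hasDerivAt_integral_rescale (x₀ := x₀) (q := 1) h0.2.le hL hℓ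
  have hdiff : ∀ r ∈ Ioc 0 s, |c r - c s| ≤ K * s ^ 2 / 2 := fun r hr => by
    have hmem : ∀ ℓ ∈ Icc r s, ℓ ∈ Ioo 0 L := fun ℓ hℓ =>
      ⟨hr.1.trans_le hℓ.1, hℓ.2.trans_lt hs.2⟩
    have hvar := abs_sub_le_of_abs_deriv_le_mul hr.2 (fun ℓ hℓ => hderiv ℓ (hmem ℓ hℓ))
      (K := K) fun ℓ hℓ => by
        rw [abs_neg, abs_mul, abs_of_pos (hmem ℓ hℓ).1, mul_comm]
        exact mul_le_mul_of_nonneg_right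
          (h.abs_integral_heat_rescale_le h0.2.le hL (hmem ℓ hℓ) hs hℓ.2) (hmem ℓ hℓ).1.le
    rw [abs_sub_comm]
    nlinarith [mul_nonneg hK0 (sq_nonneg r)]
  have hlim : Tendsto (fun r => |c r - c s|) (𝓝[>] 0) (𝓝 |v x₀ t₀ - c s|) :=
    (((h.tendsto_integral_rescale h0).mono_left nhdsWithin_le_nhds).sub_const _).abs
  exact le_of_tendsto hlim (by filter_upwards [Ioc_mem_nhdsGT hs.1] using hdiff)

end Averages

/-! ### Growth of modes -/

section Modes

/-- Coefficients `c j` solving the forced system `ℓ c_j' = j c_j - ℓ² φ_j` for `ℓ ∈ (0, L)`, whose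
total energy `H = ∑ j, c_j²` is finite and controls the forcing `φ`. -/
structure ModeSystem (c φ : ℕ → ℝ → ℝ) (H : ℝ → ℝ) (L C : ℝ) : Prop where
  nonneg : 0 ≤ C
  hasDerivAt : ∀ j, ∀ ℓ ∈ Ioo 0 L, HasDerivAt (c j) (j / ℓ * c j ℓ - ℓ * φ j ℓ) ℓ
  hasSum_sq : ∀ ℓ ∈ Ioo 0 L, HasSum (fun j => c j ℓ ^ 2) (H ℓ)
  sum_forcing_sq_le : ∀ ℓ ∈ Ioo 0 L, ∀ S : Finset ℕ, ∑ j ∈ S, φ j ℓ ^ 2 ≤ C ^ 2 * H ℓ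
  continuousOn_energy : ContinuousOn H (Ioo 0 L)

/-- The energy of the modes `0, …, n`. -/
def lowEnergy (c : ℕ → ℝ → ℝ) (n : ℕ) (ℓ : ℝ) : ℝ := ∑ j ∈ Finset.range (n + 1), c j ℓ ^ 2

/-- The weights `-M` on the modes `≤ n`, which grow more slowly than `ℓ ^ (n + 1/2)`, and `1` on the
modes `> n`, which grow faster. -/
def modeWeight (n : ℕ) (M : ℝ) (j : ℕ) : ℝ := if j < n + 1 then -M else 1

/-- The energy weighted by `modeWeight n M`, relative to the threshold growth `ℓ ^ (2 n + 1)`. -/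
def weightedEnergy (c : ℕ → ℝ → ℝ) (H : ℝ → ℝ) (n : ℕ) (M ℓ : ℝ) : ℝ :=
  (H ℓ - (1 + M) * lowEnergy c n ℓ) / ℓ ^ (2 * n + 1)

lemma le_modeWeight_mul (n : ℕ) {M : ℝ} (hM : 0 < M) (j : ℕ) :
    min 1 M ≤ modeWeight n M j * (2 * j - (2 * n + 1)) := by
  unfold modeWeight
  split_ifs with hj
  · have : (j : ℝ) ≤ n := by exact_mod_cast Nat.lt_succ_iff.1 hj
    nlinarith [min_le_right 1 M]
  · have : (n : ℝ) + 1 ≤ j := by exact_mod_cast not_lt.1 hj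
    linarith [min_le_left 1 M]

lemma abs_modeWeight_le (n : ℕ) {M : ℝ} (hM : 0 < M) (j : ℕ) : |modeWeight n M j| ≤ 1 + M := by
  unfold modeWeight
  split_ifs
  · rw [abs_neg, abs_of_pos hM]
    linarith
  · rw [abs_one]
    linarith

variable {c φ : ℕ → ℝ → ℝ} {H : ℝ → ℝ} {L C : ℝ}

namespace ModeSystem

variable {ℓ a b : ℝ}

lemma sum_sq_le (h : ModeSystem c φ H L C) (hℓ : ℓ ∈ Ioo 0 L) (S : Finset ℕ) :
    ∑ j ∈ S, c j ℓ ^ 2 ≤ H ℓ :=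
  sum_le_hasSum S (fun _ _ => sq_nonneg _) (h.hasSum_sq ℓ hℓ)

lemma energy_nonneg (h : ModeSystem c φ H L C) (hℓ : ℓ ∈ Ioo 0 L) : 0 ≤ H ℓ := by
  simpa only [Finset.sum_empty] using h.sum_sq_le hℓ ∅

lemma sum_abs_mul_abs_le (h : ModeSystem c φ H L C) (hℓ : ℓ ∈ Ioo 0 L)
    (S : Finset ℕ) : ∑ j ∈ S, |c j ℓ| * |φ j ℓ| ≤ C * H ℓ := by
  refine abs_le_of_sq_le_sq' ?_ (mul_nonneg h.nonneg (h.energy_nonneg hℓ)) |>.2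
  calc (∑ j ∈ S, |c j ℓ| * |φ j ℓ|) ^ 2
      ≤ (∑ j ∈ S, |c j ℓ| ^ 2) * ∑ j ∈ S, |φ j ℓ| ^ 2 := Finset.sum_mul_sq_le_sq_mul_sq S _ _
    _ = (∑ j ∈ S, c j ℓ ^ 2) * ∑ j ∈ S, φ j ℓ ^ 2 := by simp only [sq_abs]
    _ ≤ H ℓ * (C ^ 2 * H ℓ) := mul_le_mul (h.sum_sq_le hℓ S) (h.sum_forcing_sq_le ℓ hℓ S)
        (Finset.sum_nonneg fun _ _ => sq_nonneg _) (h.energy_nonneg hℓ)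
    _ = (C * H ℓ) ^ 2 := by ring

lemma hasSum_modeWeight_mul (h : ModeSystem c φ H L C) (hℓ : ℓ ∈ Ioo 0 L)
    (n : ℕ) (M : ℝ) :
    HasSum (fun j => modeWeight n M j * c j ℓ ^ 2) (H ℓ - (1 + M) * lowEnergy c n ℓ) := by
  have hlow : HasSum (fun j => if j < n + 1 then (1 + M) * c j ℓ ^ 2 else 0)
      ((1 + M) * lowEnergy c n ℓ) := by
    rw [lowEnergy, Finset.mul_sum,
      ← Finset.sum_congr rfl fun j hj => if_pos (Finset.mem_range.1 hj)]
    exact hasSum_sum_of_ne_finset_zero fun j hj => if_neg (by simpa using hj)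
  refine ((h.hasSum_sq ℓ hℓ).sub hlow).congr_fun fun j => ?_
  unfold modeWeight
  split_ifs <;> ring

lemma hasDerivAt_sum_modeWeight_mul_div (h : ModeSystem c φ H L C)
    (hℓ : ℓ ∈ Ioo 0 L) (n : ℕ) (M : ℝ) (N : ℕ) :
    HasDerivAt (fun s => (∑ j ∈ Finset.range N, modeWeight n M j * c j s ^ 2) / s ^ (2 * n + 1))
      ((∑ j ∈ Finset.range N, modeWeight n M j *
        ((2 * j - (2 * n + 1)) * c j ℓ ^ 2 - 2 * ℓ ^ 2 * (c j ℓ * φ j ℓ)))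
          / ℓ ^ (2 * n + 2)) ℓ := by
  have hℓ0 : ℓ ≠ 0 := hℓ.1.ne'
  simp only [Finset.sum_div]
  refine HasDerivAt.fun_sum fun j _ => ?_
  refine ((((h.hasDerivAt j ℓ hℓ).pow 2).const_mul _).div (hasDerivAt_pow (2 * n + 1) ℓ)
    (pow_ne_zero _ hℓ0)).congr_deriv ?_
  simp only [Pi.pow_apply, Nat.add_sub_cancel]
  push_cast
  field_simp
  ring

/- Smallness of the scale lets half of the growth absorb the forcing. -/
lemma le_sum_modeWeight_mul (h : ModeSystem c φ H L C) (hℓ : ℓ ∈ Ioo 0 L)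
    (n : ℕ) {M : ℝ} (hM : 0 < M) (hsmall : 4 * ℓ ^ 2 * (C * (1 + M)) ≤ min 1 M)
    (S : Finset ℕ) :
    min 1 M * ∑ j ∈ S, c j ℓ ^ 2 - min 1 M / 2 * H ℓ ≤ ∑ j ∈ S, modeWeight n M j *
      ((2 * j - (2 * n + 1)) * c j ℓ ^ 2 - 2 * ℓ ^ 2 * (c j ℓ * φ j ℓ)) := by
  have hterm : ∀ j, min 1 M * c j ℓ ^ 2 - 2 * ℓ ^ 2 * (1 + M) * (|c j ℓ| * |φ j ℓ|) ≤
      modeWeight n M j * ((2 * j - (2 * n + 1)) * c j ℓ ^ 2 - 2 * ℓ ^ 2 * (c j ℓ * φ j ℓ)) := by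
    intro j
    have hgrowth := mul_le_mul_of_nonneg_right (le_modeWeight_mul n hM j) (sq_nonneg (c j ℓ))
    have hforcing : modeWeight n M j * (c j ℓ * φ j ℓ) ≤ (1 + M) * (|c j ℓ| * |φ j ℓ|) :=
      (le_abs_self _).trans <| by
        rw [abs_mul, abs_mul]
        exact mul_le_mul_of_nonneg_right (abs_modeWeight_le n hM j) (by positivity)
    linarith [mul_le_mul_of_nonneg_left hforcing (by positivity : 0 ≤ 2 * ℓ ^ 2)]
  have hcross : 2 * ℓ ^ 2 * (1 + M) * ∑ j ∈ S, |c j ℓ| * |φ j ℓ| ≤ min 1 M / 2 * H ℓ := by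
    have := mul_le_mul_of_nonneg_left (h.sum_abs_mul_abs_le hℓ S)
      (by positivity : 0 ≤ 2 * ℓ ^ 2 * (1 + M))
    linarith [mul_le_mul_of_nonneg_right hsmall (h.energy_nonneg hℓ)]
  calc min 1 M * ∑ j ∈ S, c j ℓ ^ 2 - min 1 M / 2 * H ℓ
      ≤ min 1 M * ∑ j ∈ S, c j ℓ ^ 2 - 2 * ℓ ^ 2 * (1 + M) * ∑ j ∈ S, |c j ℓ| * |φ j ℓ| := by
        linarith
    _ = ∑ j ∈ S, (min 1 M * c j ℓ ^ 2 - 2 * ℓ ^ 2 * (1 + M) * (|c j ℓ| * |φ j ℓ|)) := by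
        rw [Finset.sum_sub_distrib, Finset.mul_sum, Finset.mul_sum]
    _ ≤ _ := Finset.sum_le_sum fun j _ => hterm j

lemma continuousOn_energy_div_pow (h : ModeSystem c φ H L C) (ha : 0 < a) (hb : b < L)
    (n : ℕ) : ContinuousOn (fun s => H s / s ^ n) (Icc a b) :=
  (h.continuousOn_energy.mono fun _ hs => ⟨ha.trans_le hs.1, hs.2.trans_lt hb⟩).div (by fun_prop)
    fun _ hs => pow_ne_zero _ (ha.trans_le hs.1).ne'

lemma continuousOn_sum_sq_div_pow (h : ModeSystem c φ H L C) (ha : 0 < a) (hb : b < L)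
    (n N : ℕ) :
    ContinuousOn (fun s => (∑ j ∈ Finset.range N, c j s ^ 2) / s ^ n) (Icc a b) :=
  (continuousOn_finsetSum _ fun j _ => ContinuousOn.pow (fun s hs => (h.hasDerivAt j s
    ⟨ha.trans_le hs.1, hs.2.trans_lt hb⟩).continuousAt.continuousWithinAt) 2).div (by fun_prop)
    fun _ hs => pow_ne_zero _ (ha.trans_le hs.1).ne'

lemma intervalIntegrable_energy_div_pow (h : ModeSystem c φ H L C) (ha : 0 < a)
    (hab : a ≤ b) (hb : b < L) (n : ℕ) :
    IntervalIntegrable (fun s => H s / s ^ n) volume a b :=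
  (h.continuousOn_energy_div_pow ha hb n).intervalIntegrable_of_Icc hab

lemma tendsto_integral_sum_sq_div_pow (h : ModeSystem c φ H L C) (ha : 0 < a)
    (hab : a ≤ b) (hb : b < L) (n : ℕ) :
    Tendsto (fun N => ∫ s in a..b, (∑ j ∈ Finset.range N, c j s ^ 2) / s ^ n) atTop
      (𝓝 (∫ s in a..b, H s / s ^ n)) := by
  have hmem : ∀ s ∈ uIoc a b, s ∈ Ioo 0 L := fun s hs => by
    rw [uIoc_of_le hab] at hs
    exact ⟨ha.trans hs.1, hs.2.trans_lt hb⟩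
  refine intervalIntegral.tendsto_integral_filter_of_dominated_convergence (fun s => H s / s ^ n)
    (.of_forall fun N => ?_) (.of_forall fun N => ae_of_all _ fun s hs => ?_)
    (h.intervalIntegrable_energy_div_pow ha hab hb n)
    (ae_of_all _ fun s hs => (h.hasSum_sq s (hmem s hs)).tendsto_sum_nat.div_const _)
  · rw [uIoc_of_le hab]
    exact ((h.continuousOn_sum_sq_div_pow ha hb n N).mono
      Ioc_subset_Icc_self).aestronglyMeasurable measurableSet_Ioc
  · have hs0 : 0 < s := (hmem s hs).1
    rw [Real.norm_of_nonneg (div_nonneg (Finset.sum_nonneg fun _ _ => sq_nonneg _) (by positivity))]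
    gcongr
    exact h.sum_sq_le (hmem s hs) _

lemma integral_sum_sq_div_pow_le (h : ModeSystem c φ H L C) (ha : 0 < a) (hab : a ≤ b)
    (hb : b < L) (n : ℕ) {M : ℝ} (hM : 0 < M)
    (hsmall : 4 * b ^ 2 * (C * (1 + M)) ≤ min 1 M) (N : ℕ) :
    min 1 M * (∫ s in a..b, (∑ j ∈ Finset.range N, c j s ^ 2) / s ^ (2 * n + 2))
        - min 1 M / 2 * ∫ s in a..b, H s / s ^ (2 * n + 2) ≤
      (∑ j ∈ Finset.range N, modeWeight n M j * c j b ^ 2) / b ^ (2 * n + 1)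
        - (∑ j ∈ Finset.range N, modeWeight n M j * c j a ^ 2) / a ^ (2 * n + 1) := by
  have hmem : ∀ s ∈ Icc a b, s ∈ Ioo 0 L := fun s hs => ⟨ha.trans_le hs.1, hs.2.trans_lt hb⟩
  have hderiv := fun s hs => h.hasDerivAt_sum_modeWeight_mul_div (hmem s hs) n M N
  have hcont := h.continuousOn_sum_sq_div_pow ha hb (2 * n + 2) N
  have hcontH := h.continuousOn_energy_div_pow ha hb (2 * n + 2)
  rw [← intervalIntegral.integral_const_mul, ← intervalIntegral.integral_const_mul,
    ← intervalIntegral.integral_sub ((hcont.intervalIntegrable_of_Icc hab).const_mul _)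
      ((hcontH.intervalIntegrable_of_Icc hab).const_mul _)]
  refine intervalIntegral.integral_le_sub_of_hasDeriv_right_of_le hab
    (fun s hs => (hderiv s hs).continuousAt.continuousWithinAt)
    (fun s hs => (hderiv s (Ioo_subset_Icc_self hs)).hasDerivWithinAt)
    ((hcont.const_mul _).sub (hcontH.const_mul _)).integrableOn_Icc fun s hs => ?_
  have hs0 : 0 < s := ha.trans hs.1
  have hsb : 4 * s ^ 2 * (C * (1 + M)) ≤ min 1 M := le_trans (by
    have := h.nonneg
    have := hs.2.le
    gcongr) hsmall
  rw [← mul_div_assoc, ← mul_div_assoc, ← sub_div]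
  gcongr
  exact h.le_sum_modeWeight_mul (hmem s (Ioo_subset_Icc_self hs)) n hM hsb _

theorem integral_energy_div_pow_le (h : ModeSystem c φ H L C) (ha : 0 < a) (hab : a ≤ b)
    (hb : b < L) (n : ℕ) {M : ℝ} (hM : 0 < M) (hsmall : 4 * b ^ 2 * (C * (1 + M)) ≤ min 1 M) :
    min 1 M / 2 * ∫ s in a..b, H s / s ^ (2 * n + 2) ≤
      weightedEnergy c H n M b - weightedEnergy c H n M a := by
  have hlim : ∀ s ∈ Ioo 0 L, Tendsto
      (fun N => (∑ j ∈ Finset.range N, modeWeight n M j * c j s ^ 2) / s ^ (2 * n + 1)) atTop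
      (𝓝 (weightedEnergy c H n M s)) := fun s hs =>
    (h.hasSum_modeWeight_mul hs n M).tendsto_sum_nat.div_const _
  have hle := le_of_tendsto_of_tendsto'
    (((h.tendsto_integral_sum_sq_div_pow ha hab hb (2 * n + 2)).const_mul (min 1 M)).sub_const _)
    ((hlim b ⟨ha.trans_le hab, hb⟩).sub (hlim a ⟨ha, hab.trans_lt hb⟩))
    (h.integral_sum_sq_div_pow_le ha hab hb n hM hsmall)
  linarith

end ModeSystem

end Modes

/-! ### The dominant mode -/

section DominantMode

open Asymptotics

variable {c φ : ℕ → ℝ → ℝ} {H : ℝ → ℝ} {L C M b : ℝ} {n : ℕ}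

lemma lowEnergy_nonneg (c : ℕ → ℝ → ℝ) (n : ℕ) (ℓ : ℝ) : 0 ≤ lowEnergy c n ℓ :=
  Finset.sum_nonneg fun _ _ => sq_nonneg _

lemma eventually_four_mul_sq_mul_le (K : ℝ) {μ : ℝ} (hμ : 0 < μ) :
    ∀ᶠ b in 𝓝[>] (0 : ℝ), 4 * b ^ 2 * K ≤ μ := by
  have hlim : Tendsto (fun b : ℝ => 4 * b ^ 2 * K) (𝓝 0) (𝓝 0) :=
    Continuous.tendsto' (by fun_prop) _ _ (by simp)
  exact nhdsWithin_le_nhds (hlim.eventually_le_const hμ)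

namespace ModeSystem

lemma weightedEnergy_le (h : ModeSystem c φ H L C) (n : ℕ) (hM : 0 < M) {a : ℝ} (ha : 0 < a)
    (hab : a ≤ b) (hb : b < L) (hsmall : 4 * b ^ 2 * (C * (1 + M)) ≤ min 1 M) :
    weightedEnergy c H n M a ≤ weightedEnergy c H n M b := by
  have hinteg : 0 ≤ ∫ s in a..b, H s / s ^ (2 * n + 2) :=
    intervalIntegral.integral_nonneg hab fun s hs =>
      have hs0 : 0 < s := ha.trans_le hs.1
      div_nonneg (h.energy_nonneg ⟨hs0, hs.2.trans_lt hb⟩) (by positivity)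
  have hμ : 0 < min 1 M := lt_min one_pos hM
  have := h.integral_energy_div_pow_le ha hab hb n hM hsmall
  linarith [mul_nonneg (half_pos hμ).le hinteg]

/- A negative weighted energy stays below a negative constant at all smaller scales. -/
lemma pow_isBigO_energy_of_lt (h : ModeSystem c φ H L C) (hM : 0 < M) (hb : b ∈ Ioo 0 L)
    (hsmall : 4 * b ^ 2 * (C * (1 + M)) ≤ min 1 M) (hlt : H b < (1 + M) * lowEnergy c n b) :
    (fun ℓ : ℝ => ℓ ^ (2 * n + 1)) =O[𝓝[>] 0] H := by
  have hb0 : 0 < b := hb.1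
  set e := -weightedEnergy c H n M b with he
  have he0 : 0 < e :=
    neg_pos.2 (div_neg_of_neg_of_pos (sub_neg.2 hlt) (by positivity))
  refine IsBigO.of_bound ((1 + M) / e) ?_
  filter_upwards [Ioc_mem_nhdsGT hb0] with ℓ hℓ
  have hℓ0 : 0 < ℓ := hℓ.1
  have hmem : ℓ ∈ Ioo 0 L := ⟨hℓ.1, hℓ.2.trans_lt hb.2⟩
  have hH := h.energy_nonneg hmem
  have hle : weightedEnergy c H n M ℓ ≤ -e := by
    rw [he, neg_neg]
    exact h.weightedEnergy_le n hM hℓ.1 hℓ.2 hb.2 hsmall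
  rw [weightedEnergy, div_le_iff₀ (by positivity)] at hle
  have hlow : (1 + M) * lowEnergy c n ℓ ≤ (1 + M) * H ℓ := by
    gcongr
    exact h.sum_sq_le hmem _
  rw [Real.norm_of_nonneg (by positivity), Real.norm_of_nonneg hH, div_mul_eq_mul_div,
    le_div_iff₀ he0]
  linarith

lemma mul_log_le_integral_energy_div_pow (h : ModeSystem c φ H L C) {κ a : ℝ} (ha : 0 < a)
    (hab : a ≤ b) (hb : b < L) (hlow : ∀ s ∈ Ioc 0 b, κ * s ^ (2 * n + 1) ≤ H s) :
    κ * (log b - log a) ≤ ∫ s in a..b, H s / s ^ (2 * n + 2) := by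
  have hb0 : 0 < b := ha.trans_le hab
  rw [← log_div hb0.ne' ha.ne', ← integral_inv_of_pos ha hb0, ← intervalIntegral.integral_const_mul]
  refine intervalIntegral.integral_mono_on hab ?_
    (h.intervalIntegrable_energy_div_pow ha hab hb _) fun s hs => ?_
  · exact (continuousOn_const.mul (continuousOn_id.inv₀ fun s hs =>
      (ha.trans_le hs.1).ne')).intervalIntegrable_of_Icc hab
  · have hs0 : 0 < s := ha.trans_le hs.1
    rw [le_div_iff₀ (by positivity)]
    calc κ * s⁻¹ * s ^ (2 * n + 2) = κ * s ^ (2 * n + 1) := by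
          field_simp
          ring
      _ ≤ H s := hlow s ⟨hs0, hs.2⟩

/- The weighted energy drops by a multiple of `∫ H / ℓ ^ (2 n + 2)`, which diverges like `log`. -/
lemma eventually_energy_lt (h : ModeSystem c φ H L C) (hL : 0 < L)
    (hO : (fun ℓ : ℝ => ℓ ^ (2 * n + 1)) =O[𝓝[>] 0] H) (hM : 0 < M) :
    ∀ᶠ ℓ in 𝓝[>] 0, H ℓ < (1 + M) * lowEnergy c n ℓ := by
  have hμ : 0 < min 1 M := lt_min one_pos hM
  obtain ⟨K, hK, hbound⟩ := hO.exists_pos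
  obtain ⟨b₀, hb₀, hlow⟩ := mem_nhdsGT_iff_exists_Ioc_subset.1 hbound.bound
  obtain ⟨b, hsmall, hb⟩ := ((eventually_four_mul_sq_mul_le (C * (1 + M)) hμ).and
    (Ioo_mem_nhdsGT (lt_min hb₀ hL))).exists
  have hbL : b < L := hb.2.trans_le (min_le_right _ _)
  have hlow' : ∀ s ∈ Ioc 0 b, K⁻¹ * s ^ (2 * n + 1) ≤ H s := fun s hs => by
    have hs0 : 0 < s := hs.1
    have : ‖s ^ (2 * n + 1)‖ ≤ K * ‖H s‖ :=
      hlow ⟨hs.1, hs.2.trans (hb.2.le.trans (min_le_left _ _))⟩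
    rwa [Real.norm_of_nonneg (by positivity), Real.norm_of_nonneg
      (h.energy_nonneg ⟨hs.1, hs.2.trans_lt hbL⟩), ← inv_mul_le_iff₀ hK] at this
  have hlog : Tendsto (fun a : ℝ => min 1 M / 2 * (K⁻¹ * (log b - log a))) (𝓝[>] 0) atTop :=
    ((tendsto_atTop_add_const_left _ _ (tendsto_neg_atBot_atTop.comp
      tendsto_log_nhdsGT_zero)).const_mul_atTop (inv_pos.2 hK)).const_mul_atTop (half_pos hμ)
  filter_upwards [hlog.eventually_gt_atTop (weightedEnergy c H n M b), Ioo_mem_nhdsGT hb.1]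
    with a hlarge ha
  have ha0 : 0 < a := ha.1
  have hgrowth := h.integral_energy_div_pow_le ha.1 ha.2.le hbL n hM hsmall
  have hlogle := mul_le_mul_of_nonneg_left
    (h.mul_log_le_integral_energy_div_pow ha.1 ha.2.le hbL hlow') (half_pos hμ).le
  have hneg : weightedEnergy c H n M a < 0 := by linarith
  rw [weightedEnergy, div_lt_iff₀ (by positivity), zero_mul] at hneg
  exact sub_neg.1 hneg

lemma energy_sub_lowEnergy_isLittleO (h : ModeSystem c φ H L C) (hL : 0 < L)
    (hO : (fun ℓ : ℝ => ℓ ^ (2 * n + 1)) =O[𝓝[>] 0] H) :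
    (fun ℓ => H ℓ - lowEnergy c n ℓ) =o[𝓝[>] 0] H := by
  refine IsLittleO.of_bound fun ε hε => ?_
  filter_upwards [h.eventually_energy_lt hL hO hε, Ioo_mem_nhdsGT hL] with ℓ hlt hℓ
  have hlow : lowEnergy c n ℓ ≤ H ℓ := h.sum_sq_le hℓ _
  rw [Real.norm_of_nonneg (sub_nonneg.2 hlow), Real.norm_of_nonneg (h.energy_nonneg hℓ)]
  linarith [mul_le_mul_of_nonneg_left hlow hε.le]

lemma lowEnergy_isLittleO (h : ModeSystem c φ H L C) (hL : 0 < L)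
    (hO : ¬(fun ℓ : ℝ => ℓ ^ (2 * n + 1)) =O[𝓝[>] 0] H) :
    (fun ℓ => lowEnergy c n ℓ) =o[𝓝[>] 0] H := by
  refine IsLittleO.of_bound fun ε hε => ?_
  have hM : 0 < ε⁻¹ := inv_pos.2 hε
  filter_upwards [eventually_four_mul_sq_mul_le (C * (1 + ε⁻¹)) (lt_min one_pos hM),
    Ioo_mem_nhdsGT hL] with ℓ hsmall hℓ
  have hle := not_lt.1 fun hlt => hO (h.pow_isBigO_energy_of_lt hM hℓ hsmall hlt)
  have hlow := lowEnergy_nonneg c n ℓ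
  rw [Real.norm_of_nonneg hlow, Real.norm_of_nonneg (h.energy_nonneg hℓ), ← inv_mul_le_iff₀ hε]
  linarith

lemma exists_pow_isBigO_energy (h : ModeSystem c φ H L C) (hb : b ∈ Ioo 0 L)
    (hsmall : 8 * C * b ^ 2 ≤ 1) (hH : 0 < H b) :
    ∃ n : ℕ, (fun ℓ : ℝ => ℓ ^ (2 * n + 1)) =O[𝓝[>] 0] H := by
  have hlim : Tendsto (fun n => (1 + 1) * lowEnergy c n b) atTop (𝓝 ((1 + 1) * H b)) :=
    ((tendsto_add_atTop_iff_nat 1).2 (h.hasSum_sq b hb).tendsto_sum_nat).const_mul _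
  obtain ⟨n, hn⟩ := (hlim.eventually_const_lt (by linarith : H b < (1 + 1) * H b)).exists
  exact ⟨n, h.pow_isBigO_energy_of_lt one_pos hb (by rw [min_self]; linarith) hn⟩

/- The dominant mode is the first `n` for which `H` decays no faster than `ℓ ^ (2 n + 1)`. -/
theorem exists_dominant (h : ModeSystem c φ H L C) (hb : b ∈ Ioo 0 L)
    (hsmall : 8 * C * b ^ 2 ≤ 1) (hH : 0 < H b) :
    ∃ n : ℕ, (fun ℓ => H ℓ - c n ℓ ^ 2) =o[𝓝[>] 0] H ∧
      (fun ℓ : ℝ => ℓ ^ (2 * n + 1)) =O[𝓝[>] 0] H := by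
  have hL : 0 < L := hb.1.trans hb.2
  obtain ⟨n, hn, hmin⟩ : ∃ n : ℕ, (fun ℓ : ℝ => ℓ ^ (2 * n + 1)) =O[𝓝[>] 0] H ∧
      ∀ m < n, ¬(fun ℓ : ℝ => ℓ ^ (2 * m + 1)) =O[𝓝[>] 0] H :=
    have hex := h.exists_pow_isBigO_energy hb hsmall hH
    ⟨Nat.find hex, Nat.find_spec hex, fun _ => Nat.find_min hex⟩
  refine ⟨n, ?_, hn⟩
  have hhigh := h.energy_sub_lowEnergy_isLittleO hL hn
  rcases n with _ | m
  · simpa only [lowEnergy, zero_add, Finset.range_one, Finset.sum_singleton] using hhigh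
  · refine (hhigh.add (h.lowEnergy_isLittleO hL (hmin m m.lt_succ_self))).congr_left fun ℓ => ?_
    rw [lowEnergy, lowEnergy, Finset.sum_range_succ]
    ring

end ModeSystem

end DominantMode

/-! ### The dominant Hermite mode of a solution -/

section DominantMode

open Asymptotics

variable {v vt vx vxx : ℝ → ℝ → ℝ} {t₁ t₂ B C x₀ t₀ L : ℝ}

/-- The `j`-th Hermite coefficient of the parabolic rescaling of `v` about `(x₀, t₀)`, as a function
of the scale. -/
def rescaledMode (v : ℝ → ℝ → ℝ) (x₀ t₀ : ℝ) (j : ℕ) (ℓ : ℝ) : ℝ :=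
  hermiteCoeff (rescale v x₀ t₀ ℓ) j

/-- The Gaussian `L²` energy of the parabolic rescaling of `v` about `(x₀, t₀)`, as a function of
the scale. -/
def rescaledEnergy (v : ℝ → ℝ → ℝ) (x₀ t₀ ℓ : ℝ) : ℝ := ∫ y, rescale v x₀ t₀ ℓ y ^ 2 ∂γ₁

lemma rescaledEnergy_nonneg (v : ℝ → ℝ → ℝ) (x₀ t₀ ℓ : ℝ) : 0 ≤ rescaledEnergy v x₀ t₀ ℓ :=
  integral_nonneg fun _ => sq_nonneg _

namespace BoundedSolution

lemma memLp_rescale (h : BoundedSolution v vt vx vxx t₁ t₂ B C) {ℓ : ℝ}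
    (hℓ : t₀ - ℓ ^ 2 / 2 ∈ Ioo t₁ t₂) : MemLp (rescale v x₀ t₀ ℓ) 2 γ₁ :=
  memLp_two_of_bounded (continuous_rescale h.continuousOn hℓ) fun _ => h.abs_le _ _ hℓ

lemma memLp_rescale_heat (h : BoundedSolution v vt vx vxx t₁ t₂ B C) {ℓ : ℝ}
    (hℓ : t₀ - ℓ ^ 2 / 2 ∈ Ioo t₁ t₂) :
    MemLp (rescale (fun x t => vt x t - vxx x t) x₀ t₀ ℓ) 2 γ₁ :=
  memLp_two_of_bounded (continuous_rescale (h.continuousOn_t.sub h.continuousOn_xx) hℓ) fun _ =>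
    (h.abs_heat_le _ _ hℓ).trans (mul_le_mul_of_nonneg_left (h.abs_le _ _ hℓ) h.nonneg)

lemma hasDerivAt_rescaledMode (h : BoundedSolution v vt vx vxx t₁ t₂ B C) (h0 : t₀ ≤ t₂)
    (hL : t₁ ≤ t₀ - L ^ 2 / 2) (j : ℕ) {ℓ : ℝ} (hℓ : ℓ ∈ Ioo 0 L) :
    HasDerivAt (rescaledMode v x₀ t₀ j) (j / ℓ * rescaledMode v x₀ t₀ j ℓ
      - ℓ * rescaledMode (fun x t => vt x t - vxx x t) x₀ t₀ j ℓ) ℓ := by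
  have heigen : ∫ y, (ouGenerator (normHermite j)).eval y * rescale v x₀ t₀ ℓ y ∂γ₁
      = -j * ∫ y, (normHermite j).eval y * rescale v x₀ t₀ ℓ y ∂γ₁ := by
    simp_rw [ouGenerator_normHermite, mul_assoc, integral_const_mul]
  have hderiv := h.hasDerivAt_integral_rescale (x₀ := x₀) (q := normHermite j) h0 hL hℓ
  rw [heigen] at hderiv
  unfold rescaledMode hermiteCoeff
  simp_rw [mul_comm (rescale _ _ _ _ _)]
  refine hderiv.congr_deriv ?_
  simp only [rescale]
  ring

lemma sum_rescaledMode_heat_sq_le (h : BoundedSolution v vt vx vxx t₁ t₂ B C) {ℓ : ℝ}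
    (hℓ : t₀ - ℓ ^ 2 / 2 ∈ Ioo t₁ t₂) (S : Finset ℕ) :
    ∑ j ∈ S, rescaledMode (fun x t => vt x t - vxx x t) x₀ t₀ j ℓ ^ 2
      ≤ C ^ 2 * rescaledEnergy v x₀ t₀ ℓ := by
  refine (sum_hermiteCoeff_sq_le (h.memLp_rescale_heat hℓ) S).trans ?_
  rw [rescaledEnergy, ← integral_const_mul]
  refine integral_mono (h.memLp_rescale_heat hℓ).integrable_sq
    ((h.memLp_rescale hℓ).integrable_sq.const_mul _) fun y => ?_
  rw [← mul_pow, sq_le_sq, abs_mul, abs_of_nonneg h.nonneg]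
  exact h.abs_heat_le _ _ hℓ

lemma continuousOn_rescaledEnergy (h : BoundedSolution v vt vx vxx t₁ t₂ B C) (h0 : t₀ ≤ t₂)
    (hL : t₁ ≤ t₀ - L ^ 2 / 2) : ContinuousOn (rescaledEnergy v x₀ t₀) (Ioo 0 L) := by
  have htime : ∀ ℓ ∈ Ioo 0 L, t₀ - ℓ ^ 2 / 2 ∈ Ioo t₁ t₂ := fun ℓ =>
    sub_sq_div_two_mem_Ioo h0 hL
  refine continuousOn_of_dominated (bound := fun _ => B ^ 2)
    (fun ℓ hℓ => (h.memLp_rescale (htime ℓ hℓ)).integrable_sq.aestronglyMeasurable)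
    (fun ℓ hℓ => ae_of_all _ fun y => ?_) (integrable_const _) (ae_of_all _ fun y => ?_)
  · rw [norm_pow]
    exact pow_le_pow_left₀ (norm_nonneg _) (h.abs_le _ _ (htime ℓ hℓ)) 2
  · exact ((continuousOn_rescale h0 hL h.continuousOn).comp (f := fun ℓ : ℝ => (ℓ, y))
      (by fun_prop) fun ℓ hℓ => ⟨hℓ, mem_univ _⟩).pow 2

lemma modeSystem (h : BoundedSolution v vt vx vxx t₁ t₂ B C) (h0 : t₀ ≤ t₂)
    (hL : t₁ ≤ t₀ - L ^ 2 / 2) :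
    ModeSystem (rescaledMode v x₀ t₀) (rescaledMode (fun x t => vt x t - vxx x t) x₀ t₀)
      (rescaledEnergy v x₀ t₀) L C where
  nonneg := h.nonneg
  hasDerivAt j _ hℓ := h.hasDerivAt_rescaledMode h0 hL j hℓ
  hasSum_sq _ hℓ := hasSum_hermiteCoeff_sq (h.memLp_rescale (sub_sq_div_two_mem_Ioo h0 hL hℓ))
  sum_forcing_sq_le _ hℓ S := h.sum_rescaledMode_heat_sq_le (sub_sq_div_two_mem_Ioo h0 hL hℓ) S
  continuousOn_energy := h.continuousOn_rescaledEnergy h0 hL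

lemma rescaledEnergy_pos (h : BoundedSolution v vt vx vxx t₁ t₂ B C) {ℓ : ℝ} (hℓ : ℓ ≠ 0)
    (ht : t₀ - ℓ ^ 2 / 2 ∈ Ioo t₁ t₂) (hne : ∃ x, v x (t₀ - ℓ ^ 2 / 2) ≠ 0) :
    0 < rescaledEnergy v x₀ t₀ ℓ := by
  obtain ⟨x, hx⟩ := hne
  refine (integral_pos_iff_support_of_nonneg (fun y => sq_nonneg _)
    (h.memLp_rescale ht).integrable_sq).2 ?_
  refine ((continuous_rescale h.continuousOn ht).pow 2).isOpen_support.measure_pos γ₁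
    ⟨(x - x₀) / ℓ, ?_⟩
  simpa [rescale, mul_div_cancel₀ _ hℓ] using hx

end BoundedSolution

/-- The `n`-th Hermite mode dominates `v` just before time `t₀` near `x₀`: it carries asymptotically
all of the energy of the rescalings, and this energy does not decay faster than `ℓ ^ (2 n + 1)`. The
latter bound is what limits `n` from below in terms of the vanishing order of `v(·, t₀)` at `x₀`. -/
structure DominantMode (v : ℝ → ℝ → ℝ) (x₀ t₀ : ℝ) (n : ℕ) : Prop where
  isLittleO : (fun ℓ => rescaledEnergy v x₀ t₀ ℓ - rescaledMode v x₀ t₀ n ℓ ^ 2)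
    =o[𝓝[>] 0] rescaledEnergy v x₀ t₀
  pow_isBigO : (fun ℓ : ℝ => ℓ ^ (2 * n + 1)) =O[𝓝[>] 0] rescaledEnergy v x₀ t₀

lemma BoundedSolution.exists_dominantMode_of_sub_le (h : BoundedSolution v vt vx vxx t₁ t₂ B C)
    (h0 : t₀ ≤ t₂) {s : ℝ} (hs : s ∈ Ioo t₁ t₀) (hsmall : 16 * C * (t₀ - s) ≤ 1)
    (hne : ∃ x, v x s ≠ 0) (x₀ : ℝ) : ∃ n, DominantMode v x₀ t₀ n := by
  obtain ⟨hs1, hs2⟩ := hs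
  have hr : √(2 * (t₀ - s)) ^ 2 = 2 * (t₀ - s) := Real.sq_sqrt (by linarith)
  have hL : √(2 * (t₀ - t₁)) ^ 2 = 2 * (t₀ - t₁) := Real.sq_sqrt (by linarith)
  have hmem : √(2 * (t₀ - s)) ∈ Ioo 0 √(2 * (t₀ - t₁)) :=
    ⟨Real.sqrt_pos.2 (by linarith), Real.sqrt_lt_sqrt (by linarith) (by linarith)⟩
  have htime : t₀ - √(2 * (t₀ - s)) ^ 2 / 2 = s := by
    rw [hr]
    ring
  obtain ⟨n, hdom, hlow⟩ := (h.modeSystem (x₀ := x₀) h0 (by linarith)).exists_dominant hmem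
    (by rw [hr]; linarith) (h.rescaledEnergy_pos hmem.1.ne'
      (htime.symm ▸ ⟨hs1, hs2.trans_le h0⟩) (htime.symm ▸ hne))
  exact ⟨n, hdom, hlow⟩

end DominantMode

section LowerBound

open Asymptotics

variable {v vt vx vxx : ℝ → ℝ → ℝ} {t₁ t₂ B C x₀ t₀ : ℝ}

lemma sq_integral_comp_add_sub_hermiteCoeff_le {u : ℝ → ℝ} (hu : MemLp u 2 γ₁) (n : ℕ) (η : ℝ) :
    (∫ y, u (y + η) ∂γ₁ - hermiteCoeff u n * ((√(n.factorial : ℝ))⁻¹ * η ^ n)) ^ 2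
      ≤ rexp (η ^ 2) * (∫ y, u y ^ 2 ∂γ₁ - hermiteCoeff u n ^ 2) := by
  have hhermite := memLp_eval_gaussianReal (m := 0) (v := 1) (normHermite n)
  have hintegrable : ∀ w : ℝ → ℝ, MemLp w 2 γ₁ →
      Integrable (fun y => w y * rexp (η * y - η ^ 2 / 2)) γ₁ := fun w hw =>
    hw.integrable_mul (memLp_exp_mul_sub_gaussianReal η)
  have hresidual := integral_comp_add_sq_le (hu.sub (hhermite.const_mul (hermiteCoeff u n))) η
  simp only [Pi.sub_apply] at hresidual
  rw [integral_sub_hermiteCoeff_mul_sq hu] at hresidual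
  convert hresidual using 2
  rw [integral_comp_add_gaussianReal (fun y => u y - hermiteCoeff u n * (normHermite n).eval y),
    integral_comp_add_gaussianReal u, ← integral_normHermite_comp_add,
    integral_comp_add_gaussianReal fun y => (normHermite n).eval y, ← integral_const_mul,
    ← integral_sub (hintegrable u hu) ((hintegrable _ hhermite).const_mul _)]
  congr 1 with y
  ring

lemma rescale_add_mul (W : ℝ → ℝ → ℝ) (x₀ t₀ ℓ η y : ℝ) :
    rescale W (x₀ + ℓ * η) t₀ ℓ y = rescale W x₀ t₀ ℓ (y + η) := by
  simp only [rescale]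
  ring_nf

lemma BoundedSolution.sq_sub_integral_rescale_comp_add_le
    (h : BoundedSolution v vt vx vxx t₁ t₂ B C) (h0 : t₀ ∈ Ioo t₁ t₂) {L : ℝ}
    (hL : t₁ ≤ t₀ - L ^ 2 / 2) {ℓ : ℝ} (hℓ : ℓ ∈ Ioo 0 L) (η : ℝ) :
    (v (x₀ + ℓ * η) t₀ - ∫ y, rescale v x₀ t₀ ℓ (y + η) ∂γ₁) ^ 2
      ≤ (C * rexp (C * ℓ ^ 2 / 2) * ℓ ^ 2 / 2) ^ 2
        * (rexp (η ^ 2) * rescaledEnergy v x₀ t₀ ℓ) := by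
  have hmem := h.memLp_rescale (x₀ := x₀) (sub_sq_div_two_mem_Ioo h0.2.le hL hℓ)
  have habs := integral_comp_add_sq_le hmem.abs η
  simp only [Pi.abs_apply, sq_abs] at habs
  have hvalue := h.abs_sub_integral_rescale_le (x₀ := x₀ + ℓ * η) h0 hL hℓ
  simp_rw [rescale_add_mul] at hvalue
  calc _ ≤ (C * rexp (C * ℓ ^ 2 / 2) * (∫ y, |rescale v x₀ t₀ ℓ (y + η)| ∂γ₁)
          * ℓ ^ 2 / 2) ^ 2 := sq_le_sq' (neg_le_of_abs_le hvalue) (le_of_abs_le hvalue)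
    _ = (C * rexp (C * ℓ ^ 2 / 2) * ℓ ^ 2 / 2) ^ 2
          * (∫ y, |rescale v x₀ t₀ ℓ (y + η)| ∂γ₁) ^ 2 := by ring
    _ ≤ _ := mul_le_mul_of_nonneg_left habs (sq_nonneg _)

lemma exists_pos_le_sub_sq_div_two (h : t₁ < t₀) : ∃ L > 0, t₁ ≤ t₀ - L ^ 2 / 2 := by
  refine ⟨√(2 * (t₀ - t₁)), Real.sqrt_pos.2 (by linarith), ?_⟩
  rw [Real.sq_sqrt (by linarith)]
  linarith

lemma BoundedSolution.eventually_memLp_rescale (h : BoundedSolution v vt vx vxx t₁ t₂ B C)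
    (h0 : t₀ ∈ Ioo t₁ t₂) (x₀ : ℝ) :
    ∀ᶠ ℓ in 𝓝[>] (0 : ℝ), MemLp (rescale v x₀ t₀ ℓ) 2 γ₁ := by
  obtain ⟨L, hL, hLt⟩ := exists_pos_le_sub_sq_div_two h0.1
  filter_upwards [Ioo_mem_nhdsGT hL] with ℓ hℓ
  exact h.memLp_rescale (sub_sq_div_two_mem_Ioo h0.2.le hLt hℓ)

lemma BoundedSolution.sq_sub_integral_rescale_comp_add_isLittleO
    (h : BoundedSolution v vt vx vxx t₁ t₂ B C) (h0 : t₀ ∈ Ioo t₁ t₂) (x₀ η : ℝ) :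
    (fun ℓ => (v (x₀ + ℓ * η) t₀ - ∫ y, rescale v x₀ t₀ ℓ (y + η) ∂γ₁) ^ 2)
      =o[𝓝[>] 0] rescaledEnergy v x₀ t₀ := by
  obtain ⟨L, hL, hLt⟩ := exists_pos_le_sub_sq_div_two h0.1
  have hfactor : (fun ℓ : ℝ => (C * rexp (C * ℓ ^ 2 / 2) * ℓ ^ 2 / 2) ^ 2 * rexp (η ^ 2))
      =o[𝓝[>] 0] (fun _ => (1 : ℝ)) :=
    (isLittleO_one_iff ℝ).2 ((Continuous.tendsto' (by fun_prop) _ _ (by simp)).mono_left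
      nhdsWithin_le_nhds)
  have hprod := hfactor.mul_isBigO (isBigO_refl (rescaledEnergy v x₀ t₀) (𝓝[>] 0))
  simp only [one_mul] at hprod
  refine IsBigO.trans_isLittleO (.of_bound' ?_) hprod
  filter_upwards [Ioo_mem_nhdsGT hL] with ℓ hℓ
  rw [mul_assoc, Real.norm_of_nonneg (sq_nonneg _), Real.norm_of_nonneg (mul_nonneg (sq_nonneg _)
    (mul_nonneg (exp_pos _).le (rescaledEnergy_nonneg ..)))]
  exact h.sq_sub_integral_rescale_comp_add_le h0 hLt hℓ η

namespace DominantMode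

variable {n : ℕ}

lemma sq_integral_comp_add_sub_isLittleO (hM : DominantMode v x₀ t₀ n)
    (h : BoundedSolution v vt vx vxx t₁ t₂ B C) (h0 : t₀ ∈ Ioo t₁ t₂) (η : ℝ) :
    (fun ℓ => (∫ y, rescale v x₀ t₀ ℓ (y + η) ∂γ₁
        - rescaledMode v x₀ t₀ n ℓ * ((√(n.factorial : ℝ))⁻¹ * η ^ n)) ^ 2)
      =o[𝓝[>] 0] rescaledEnergy v x₀ t₀ := by
  refine IsBigO.trans_isLittleO (.of_bound' ?_) (hM.isLittleO.const_mul_left (rexp (η ^ 2)))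
  filter_upwards [h.eventually_memLp_rescale h0 x₀] with ℓ hℓ
  rw [Real.norm_of_nonneg (sq_nonneg _)]
  exact (sq_integral_comp_add_sub_hermiteCoeff_le hℓ n η).trans (le_abs_self _)

/- The value at `x₀ + ℓ η` is close to the Gaussian average at scale `ℓ` centred there, which is the
mean of the shifted rescaling about `x₀`, which in turn is close to that of the dominant mode. -/
lemma rescaledEnergy_isBigO_sq (hM : DominantMode v x₀ t₀ n)
    (h : BoundedSolution v vt vx vxx t₁ t₂ B C) (h0 : t₀ ∈ Ioo t₁ t₂) {η : ℝ} (hη : η ≠ 0) :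
    rescaledEnergy v x₀ t₀ =O[𝓝[>] 0] fun ℓ => v (x₀ + ℓ * η) t₀ ^ 2 := by
  set P := (√(n.factorial : ℝ))⁻¹ * η ^ n with hP
  have hP0 : 0 < P ^ 2 := sq_pos_iff.2
    (mul_ne_zero (inv_sqrt_factorial_pos n).ne' (pow_ne_zero n hη))
  have herror := ((hM.isLittleO.const_mul_left (P ^ 2)).add
    ((hM.sq_integral_comp_add_sub_isLittleO h h0 η).const_mul_left 4)).add
    ((h.sq_sub_integral_rescale_comp_add_isLittleO h0 x₀ η).const_mul_left 4)
  refine .of_bound (4 / P ^ 2) ?_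
  filter_upwards [herror.bound (half_pos hP0)] with ℓ hℓ
  rw [Real.norm_of_nonneg (rescaledEnergy_nonneg ..)] at hℓ ⊢
  rw [Real.norm_of_nonneg (sq_nonneg _), div_mul_eq_mul_div, le_div_iff₀ hP0]
  have herror_le := (le_abs_self _).trans hℓ
  rw [← hP] at herror_le
  set m := ∫ y, rescale v x₀ t₀ ℓ (y + η) ∂γ₁
  set c := rescaledMode v x₀ t₀ n ℓ
  have hsplit : (c * P) ^ 2
      ≤ 2 * v (x₀ + ℓ * η) t₀ ^ 2 + 4 * (m - c * P) ^ 2 + 4 * (v (x₀ + ℓ * η) t₀ - m) ^ 2 := by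
    linarith [sq_nonneg (v (x₀ + ℓ * η) t₀ + (v (x₀ + ℓ * η) t₀ - c * P)),
      sq_nonneg ((v (x₀ + ℓ * η) t₀ - m) - (m - c * P))]
  linarith

lemma pow_isBigO_sq (hM : DominantMode v x₀ t₀ n) (h : BoundedSolution v vt vx vxx t₁ t₂ B C)
    (h0 : t₀ ∈ Ioo t₁ t₂) {η : ℝ} (hη : η ≠ 0) :
    (fun ℓ : ℝ => ℓ ^ (2 * n + 1)) =O[𝓝[>] 0] fun ℓ => v (x₀ + ℓ * η) t₀ ^ 2 :=
  hM.pow_isBigO.trans (hM.rescaledEnergy_isBigO_sq h h0 hη)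

end DominantMode

end LowerBound

/-! ### Isolated zeros and persistence of nontriviality -/

section IsolatedZeros

open Asymptotics

variable {v vt vx vxx : ℝ → ℝ → ℝ} {t₁ t₂ B C x₀ t₀ : ℝ} {n : ℕ}

lemma eventually_nhdsNE_of_eventually_nhdsGT_add_mul {p : ℝ → Prop}
    (h : ∀ η : ℝ, η ≠ 0 → ∀ᶠ ℓ in 𝓝[>] (0 : ℝ), p (x₀ + ℓ * η)) : ∀ᶠ x in 𝓝[≠] x₀, p x := by
  have hleft : Tendsto (fun x => x₀ - x) (𝓝[<] x₀) (𝓝[>] 0) :=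
    tendsto_nhdsWithin_iff.2 ⟨(Continuous.tendsto' (by fun_prop) _ _ (by simp)).mono_left
      nhdsWithin_le_nhds, eventually_mem_nhdsWithin.mono fun _ hx => mem_Ioi.2 (sub_pos.2 hx)⟩
  have hright : Tendsto (fun x => x - x₀) (𝓝[>] x₀) (𝓝[>] 0) :=
    tendsto_nhdsWithin_iff.2 ⟨(Continuous.tendsto' (by fun_prop) _ _ (by simp)).mono_left
      nhdsWithin_le_nhds, eventually_mem_nhdsWithin.mono fun _ hx => mem_Ioi.2 (sub_pos.2 hx)⟩
  rw [← nhdsLT_sup_nhdsGT, eventually_sup]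
  exact ⟨by simpa using hleft.eventually (h (-1) (by norm_num)),
    by simpa using hright.eventually (h 1 one_ne_zero)⟩

lemma DominantMode.eventually_ne_zero (hM : DominantMode v x₀ t₀ n)
    (h : BoundedSolution v vt vx vxx t₁ t₂ B C) (h0 : t₀ ∈ Ioo t₁ t₂) :
    ∀ᶠ x in 𝓝[≠] x₀, v x t₀ ≠ 0 := by
  refine eventually_nhdsNE_of_eventually_nhdsGT_add_mul fun η hη => ?_
  filter_upwards [(hM.pow_isBigO_sq h h0 hη).eq_zero_imp, self_mem_nhdsWithin] with ℓ hℓ hpos hzero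
  exact pow_ne_zero _ hpos.ne' (hℓ (by simp [hzero]))

lemma imp_of_forall_sub_le_imp {p : ℝ → Prop} {a b δ : ℝ} (hδ : 0 < δ)
    (hstep : ∀ s t, a ≤ s → s < t → t ≤ b → t - s ≤ δ → p s → p t) (hab : a ≤ b) (ha : p a) :
    p b := by
  have hsteps : ∀ k : ℕ, ∀ t, a ≤ t → t ≤ b → t - a ≤ k * δ → p t := by
    intro k
    induction k with
    | zero =>
      intro t hat _ hta
      obtain rfl : t = a := by
        rw [Nat.cast_zero, zero_mul] at hta
        linarith
      exact ha
    | succ k ih =>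
      intro t hat htb hta
      rw [Nat.cast_succ, add_mul, one_mul] at hta
      rcases hat.eq_or_lt with rfl | hlt
      · exact ha
      · refine hstep (max a (t - δ)) t (le_max_left ..) (max_lt hlt (by linarith)) htb
          (by linarith [le_max_right a (t - δ)])
          (ih _ (le_max_left ..) (max_le hab (by linarith)) ?_)
        rw [sub_le_iff_le_add, max_le_iff]
        exact ⟨by nlinarith [k.cast_nonneg (α := ℝ)], by linarith⟩
  obtain ⟨k, hk⟩ := exists_nat_ge ((b - a) / δ)
  exact hsteps k b hab le_rfl ((div_le_iff₀ hδ).1 hk)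

lemma BoundedSolution.exists_ne_zero (h : BoundedSolution v vt vx vxx t₁ t₂ B C) {s t : ℝ}
    (hs : s ∈ Ioo t₁ t₂) (ht : t ∈ Ioo t₁ t₂) (hne : ∃ x, v x s ≠ 0) : ∃ x, v x t ≠ 0 := by
  rcases le_total t s with hts | hst
  · exact h.exists_ne_zero_of_le ht.1 hs.2 hts hne
  have hC := h.nonneg
  refine imp_of_forall_sub_le_imp (p := fun t => ∃ x, v x t ≠ 0) (δ := 1 / (16 * C + 1))
    (by positivity) (fun r r' hr hrr' hr' hsub hne' => ?_) hst hne
  have hr'mem : r' ∈ Ioo t₁ t₂ := ⟨hs.1.trans_le (hr.trans hrr'.le), hr'.trans_lt ht.2⟩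
  have hsmall : 16 * C * (r' - r) ≤ 1 := by
    rw [le_div_iff₀ (by positivity)] at hsub
    linarith
  obtain ⟨n, hM⟩ := h.exists_dominantMode_of_sub_le hr'mem.2.le ⟨hs.1.trans_le hr, hrr'⟩ hsmall
    hne' 0
  exact (hM.eventually_ne_zero h hr'mem).exists

lemma BoundedSolution.exists_dominantMode (h : BoundedSolution v vt vx vxx t₁ t₂ B C)
    (h0 : t₀ ∈ Ioo t₁ t₂) {s : ℝ} (hs : s ∈ Ioo t₁ t₂) (hne : ∃ x, v x s ≠ 0) (x₀ : ℝ) :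
    ∃ n, DominantMode v x₀ t₀ n := by
  have hlim : Tendsto (fun r => 16 * C * (t₀ - r)) (𝓝[<] t₀) (𝓝 0) :=
    (Continuous.tendsto' (by fun_prop) _ _ (by simp)).mono_left nhdsWithin_le_nhds
  obtain ⟨r, hr, hmem⟩ := ((hlim.eventually_le_const one_pos).and (Ioo_mem_nhdsLT h0.1)).exists
  exact h.exists_dominantMode_of_sub_le h0.2.le hmem hr
    (h.exists_ne_zero hs ⟨hmem.1, hmem.2.trans h0.2⟩ hne) x₀

lemma BoundedSolution.not_accPt_zeros (h : BoundedSolution v vt vx vxx t₁ t₂ B C)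
    (h0 : t₀ ∈ Ioo t₁ t₂) (hne : ∃ x, v x t₀ ≠ 0) (x₀ : ℝ) :
    ¬ AccPt x₀ (𝓟 {x | v x t₀ = 0}) := by
  obtain ⟨n, hM⟩ := h.exists_dominantMode h0 h0 hne x₀
  rw [accPt_iff_frequently_nhdsNE, not_frequently]
  exact hM.eventually_ne_zero h h0

end IsolatedZeros

/-! ### Sign changes created by a multiple zero -/

section MultipleZero

open Asymptotics

variable {v vt vx vxx : ℝ → ℝ → ℝ} {t₁ t₂ B C x₀ t₀ : ℝ} {n : ℕ}

lemma isBigO_sub_of_hasDerivAt {f f' : ℝ → ℝ} {a : ℝ} {k : ℕ}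
    (hf : ∀ᶠ x in 𝓝 a, HasDerivAt f (f' x) x) (hf' : f' =O[𝓝 a] fun x => (x - a) ^ k) :
    (fun x => f x - f a) =O[𝓝 a] fun x => (x - a) ^ (k + 1) := by
  obtain ⟨K, hK, hbound⟩ := hf'.exists_pos
  obtain ⟨r, hr, hball⟩ := Metric.eventually_nhds_iff_ball.1 (hf.and hbound.bound)
  refine .of_bound K (Metric.eventually_nhds_iff_ball.2 ⟨r, hr, fun x hx => ?_⟩)
  have hsub : Metric.closedBall a (dist x a) ⊆ Metric.ball a r :=
    Metric.closedBall_subset_ball (Metric.mem_ball.1 hx)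
  have hderiv : ∀ y ∈ Metric.closedBall a (dist x a), ‖f' y‖ ≤ K * ‖x - a‖ ^ k := fun y hy => by
    refine (hball y (hsub hy)).2.trans ?_
    rw [norm_pow, ← dist_eq_norm, ← dist_eq_norm]
    gcongr
    exact Metric.mem_closedBall.1 hy
  refine ((convex_closedBall a (dist x a)).norm_image_sub_le_of_norm_hasDerivWithin_le
    (fun y hy => (hball y (hsub hy)).1.hasDerivWithinAt) hderiv
    (Metric.mem_closedBall_self dist_nonneg) (Metric.mem_closedBall.2 le_rfl)).trans_eq ?_
  rw [norm_pow, pow_succ, mul_assoc]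

lemma HasParabolicDerivs.isBigO_sq_of_multiple_zero
    (h : HasParabolicDerivs v vt vx vxx t₁ t₂) (h0 : t₀ ∈ Ioo t₁ t₂) (hv : v x₀ t₀ = 0)
    (hvx : vx x₀ t₀ = 0) : (fun x => v x t₀) =O[𝓝 x₀] fun x => (x - x₀) ^ 2 := by
  have hvx_isBigO := (h.hasDerivAt_xx x₀ t₀ h0).isBigO_sub
  have hv_isBigO := isBigO_sub_of_hasDerivAt (k := 1) (f := fun x => v x t₀)
    (.of_forall fun x => h.hasDerivAt_x x t₀ h0) (by simpa [hvx] using hvx_isBigO)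
  simpa [hv] using hv_isBigO

lemma DominantMode.two_le (hM : DominantMode v x₀ t₀ n)
    (h : BoundedSolution v vt vx vxx t₁ t₂ B C) (h0 : t₀ ∈ Ioo t₁ t₂) (hv : v x₀ t₀ = 0)
    (hvx : vx x₀ t₀ = 0) : 2 ≤ n := by
  by_contra! hn
  have hshift : Tendsto (fun ℓ : ℝ => x₀ + ℓ * 1) (𝓝[>] 0) (𝓝 x₀) :=
    (Continuous.tendsto' (by fun_prop) _ _ (by simp)).mono_left nhdsWithin_le_nhds
  have hquartic : (fun ℓ => v (x₀ + ℓ * 1) t₀ ^ 2) =O[𝓝[>] 0] fun ℓ : ℝ => ℓ ^ 4 := by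
    have hquadratic := ((h.isBigO_sq_of_multiple_zero h0 hv hvx).comp_tendsto hshift).pow 2
    simpa [Function.comp_def, ← pow_mul] using hquadratic
  have hsmall : (fun ℓ : ℝ => ℓ ^ 4) =o[𝓝[>] 0] fun ℓ => ℓ ^ (2 * n + 1) :=
    (isLittleO_pow_pow (by omega)).mono nhdsWithin_le_nhds
  have hself := ((hM.pow_isBigO_sq h h0 one_ne_zero).trans hquartic).trans_isLittleO hsmall
  have hne : ∀ᶠ ℓ in 𝓝[>] (0 : ℝ), ℓ ^ (2 * n + 1) ≠ 0 :=
    eventually_mem_nhdsWithin.mono fun ℓ hℓ => pow_ne_zero _ (mem_Ioi.1 hℓ).ne'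
  exact isLittleO_irrefl hne.frequently hself

lemma sq_mul_sq_le_sub_mul_sq {p q c u : ℝ} (hpq : p ^ 2 / 2 < q * p) (hu : c * p * u ≤ 0) :
    p ^ 2 / 4 * c ^ 2 ≤ (u - c * q) ^ 2 := by
  have hp : 0 < p ^ 2 := sq_pos_iff.2 fun hp => by simp [hp] at hpq
  have hqp : (p ^ 2 / 2) ^ 2 ≤ (q * p) ^ 2 := by gcongr
  have hmul : c * p * u * (q * p) ≤ 0 :=
    mul_nonpos_of_nonpos_of_nonneg hu ((by positivity : 0 ≤ p ^ 2 / 2).trans hpq.le)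
  refine le_of_mul_le_mul_right ?_ hp
  calc p ^ 2 / 4 * c ^ 2 * p ^ 2 = c ^ 2 * (p ^ 2 / 2) ^ 2 := by ring
    _ ≤ c ^ 2 * (q * p) ^ 2 := by gcongr
    _ ≤ c ^ 2 * (q * p) ^ 2 + (u * p) ^ 2 - 2 * (c * p * u * (q * p)) := by
        linarith [sq_nonneg (u * p)]
    _ = (u - c * q) ^ 2 * p ^ 2 := by ring

lemma exists_mul_pos_of_integral_sub_sq_lt {X : Type*} [TopologicalSpace X] [MeasurableSpace X]
    [OpensMeasurableSpace X] {μ : Measure X} [IsFiniteMeasure μ] [μ.IsOpenPosMeasure] {p : X → ℝ}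
    (hp : Continuous p) (hp2 : MemLp p 2 μ) {a : X} (ha : p a ≠ 0) {U : Set X} (hU : U ∈ 𝓝 a) :
    ∃ ε > 0, ∀ (u : X → ℝ) (c : ℝ), MemLp u 2 μ → ∫ y, (u y - c * p y) ^ 2 ∂μ < ε * c ^ 2 →
      ∃ y ∈ U, 0 < c * p a * u y := by
  have hpa : 0 < p a ^ 2 := sq_pos_iff.2 ha
  have hV : U ∩ {y | p a ^ 2 / 2 < p y * p a} ∈ 𝓝 a :=
    inter_mem hU ((hp.mul_const _).continuousAt.eventually_const_lt
      (by simpa only [← sq] using half_lt_self hpa))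
  have hμV : 0 < μ.real (U ∩ {y | p a ^ 2 / 2 < p y * p a}) :=
    ENNReal.toReal_pos (Measure.measure_pos_of_mem_nhds μ hV).ne' (measure_ne_top _ _)
  refine ⟨p a ^ 2 / 4 * μ.real (U ∩ {y | p a ^ 2 / 2 < p y * p a}), by positivity,
    fun u c hu hlt => ?_⟩
  by_contra! hneg
  refine hlt.not_ge ?_
  calc _ = p a ^ 2 / 4 * c ^ 2 * μ.real (U ∩ {y | p a ^ 2 / 2 < p y * p a}) := by ring
    _ ≤ p a ^ 2 / 4 * c ^ 2 * μ.real {y | p a ^ 2 / 4 * c ^ 2 ≤ (u y - c * p y) ^ 2} := by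
        gcongr
        · exact measure_ne_top _ _
        · exact fun y hy => sq_mul_sq_le_sub_mul_sq hy.2 (hneg y hy.1)
    _ ≤ _ := mul_meas_ge_le_integral_of_nonneg (ae_of_all _ fun y => sq_nonneg _)
        (hu.sub (hp2.const_mul c)).integrable_sq _

namespace DominantMode

lemma rescaledEnergy_isBigO_mode_sq (hM : DominantMode v x₀ t₀ n) :
    rescaledEnergy v x₀ t₀ =O[𝓝[>] 0] fun ℓ => rescaledMode v x₀ t₀ n ℓ ^ 2 := by
  have hequiv : (fun ℓ => rescaledMode v x₀ t₀ n ℓ ^ 2) ~[𝓝[>] 0] rescaledEnergy v x₀ t₀ :=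
    hM.isLittleO.symm
  exact hequiv.isBigO_symm

lemma eventually_rescaledMode_ne_zero (hM : DominantMode v x₀ t₀ n) :
    ∀ᶠ ℓ in 𝓝[>] (0 : ℝ), rescaledMode v x₀ t₀ n ℓ ≠ 0 := by
  filter_upwards [(hM.pow_isBigO.trans hM.rescaledEnergy_isBigO_mode_sq).eq_zero_imp,
    self_mem_nhdsWithin] with ℓ hℓ hpos hzero
  exact pow_ne_zero _ hpos.ne' (hℓ (by simp [hzero]))

lemma eventually_exists_mul_pos (hM : DominantMode v x₀ t₀ n)
    (h : BoundedSolution v vt vx vxx t₁ t₂ B C) (h0 : t₀ ∈ Ioo t₁ t₂) {a : ℝ}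
    (ha : (normHermite n).eval a ≠ 0) {U : Set ℝ} (hU : U ∈ 𝓝 a) :
    ∀ᶠ ℓ in 𝓝[>] (0 : ℝ),
      ∃ y ∈ U, 0 < rescaledMode v x₀ t₀ n ℓ * (normHermite n).eval a * rescale v x₀ t₀ ℓ y := by
  obtain ⟨ε, hε, hclose⟩ := exists_mul_pos_of_integral_sub_sq_lt (normHermite n).continuous
    (memLp_eval_gaussianReal (m := 0) (v := 1) (normHermite n)) ha hU
  have hdom := hM.isLittleO.trans_isBigO hM.rescaledEnergy_isBigO_mode_sq
  filter_upwards [hdom.bound (half_pos hε), hM.eventually_rescaledMode_ne_zero,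
    h.eventually_memLp_rescale h0 x₀] with ℓ hℓ hne hmem
  refine hclose _ _ hmem ?_
  have hpos : 0 < rescaledMode v x₀ t₀ n ℓ ^ 2 := sq_pos_iff.2 hne
  have hle := (le_abs_self _).trans hℓ
  rw [Real.norm_of_nonneg hpos.le] at hle
  calc _ = rescaledEnergy v x₀ t₀ ℓ - rescaledMode v x₀ t₀ n ℓ ^ 2 :=
        integral_sub_hermiteCoeff_mul_sq hmem n
    _ ≤ ε / 2 * rescaledMode v x₀ t₀ n ℓ ^ 2 := hle
    _ < ε * rescaledMode v x₀ t₀ n ℓ ^ 2 := by gcongr; exact half_lt_self hε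

lemma eventually_exists_rescale_sign_change (hM : DominantMode v x₀ t₀ n) (hn : 2 ≤ n)
    (h : BoundedSolution v vt vx vxx t₁ t₂ B C) (h0 : t₀ ∈ Ioo t₁ t₂) {e : ℝ} (he : e ≠ 0) :
    ∃ a b : ℝ, ∀ᶠ ℓ in 𝓝[>] (0 : ℝ), ∃ y₁ y₂, a < y₁ ∧ y₁ < y₂ ∧ y₂ < b ∧
      0 < e * rescaledMode v x₀ t₀ n ℓ * rescale v x₀ t₀ ℓ y₁ ∧
      e * rescaledMode v x₀ t₀ n ℓ * rescale v x₀ t₀ ℓ y₂ < 0 := by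
  obtain ⟨a, b, hab, ha, hb⟩ := exists_sign_change_normHermite hn he
  obtain ⟨m, ham, hmb⟩ := exists_between hab
  refine ⟨a - 1, b + 1, ?_⟩
  filter_upwards [hM.eventually_exists_mul_pos h h0 (right_ne_zero_of_mul ha.ne')
      (Ioo_mem_nhds (sub_one_lt a) ham),
    hM.eventually_exists_mul_pos h h0 (right_ne_zero_of_mul hb.ne)
      (Ioo_mem_nhds hmb (lt_add_one b))] with ℓ ⟨y₁, hy₁, hpos₁⟩ ⟨y₂, hy₂, hpos₂⟩
  refine ⟨y₁, y₂, hy₁.1, hy₁.2.trans hy₂.1, hy₂.2, ?_, ?_⟩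
  · refine pos_of_mul_pos_right (a := (normHermite n).eval a ^ 2) ?_ (sq_nonneg _)
    convert mul_pos ha hpos₁ using 1
    ring
  · refine neg_of_mul_neg_left (b := (normHermite n).eval b ^ 2) ?_ (sq_nonneg _)
    convert mul_neg_of_neg_of_pos hb hpos₂ using 1
    ring

lemma eventually_exists_sign_change_of_mul_mode_pos (hM : DominantMode v x₀ t₀ n) (hn : 2 ≤ n)
    (h : BoundedSolution v vt vx vxx t₁ t₂ B C) (h0 : t₀ ∈ Ioo t₁ t₂) {e s δ : ℝ} (he : e ≠ 0)
    (hs : s ≠ 0) (hδ : 0 < δ) :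
    ∀ᶠ ℓ in 𝓝[>] (0 : ℝ), 0 < s * rescaledMode v x₀ t₀ n ℓ →
      ∃ z₁ z₂, x₀ - δ < z₁ ∧ z₁ < z₂ ∧ z₂ < x₀ + δ ∧
        0 < e * v z₁ (t₀ - ℓ ^ 2 / 2) ∧ e * v z₂ (t₀ - ℓ ^ 2 / 2) < 0 := by
  obtain ⟨a, b, hpair⟩ := hM.eventually_exists_rescale_sign_change hn h h0 (mul_ne_zero he hs)
  have hlim (r : ℝ) : Tendsto (fun ℓ : ℝ => x₀ + ℓ * r) (𝓝[>] 0) (𝓝 x₀) :=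
    (Continuous.tendsto' (by fun_prop) _ _ (by simp)).mono_left nhdsWithin_le_nhds
  filter_upwards [hpair, (hlim a).eventually_const_lt (sub_lt_self x₀ hδ),
    (hlim b).eventually_lt_const (lt_add_of_pos_right x₀ hδ), self_mem_nhdsWithin]
    with ℓ ⟨y₁, y₂, hy₁, hy, hy₂, hpos, hneg⟩ ha hb (hℓ : 0 < ℓ) hmode
  refine ⟨x₀ + ℓ * y₁, x₀ + ℓ * y₂, ha.trans (by gcongr), by gcongr, lt_trans (by gcongr) hb,
    ?_, ?_⟩
  · refine pos_of_mul_pos_right (a := s * rescaledMode v x₀ t₀ n ℓ) ?_ hmode.le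
    calc _ < e * s * rescaledMode v x₀ t₀ n ℓ * rescale v x₀ t₀ ℓ y₁ := hpos
      _ = _ := by rw [rescale]; ring
  · refine neg_of_mul_neg_right (a := s * rescaledMode v x₀ t₀ n ℓ) ?_ hmode.le
    calc _ = e * s * rescaledMode v x₀ t₀ n ℓ * rescale v x₀ t₀ ℓ y₂ := by rw [rescale]; ring
      _ < _ := hneg

lemma eventually_exists_sign_change (hM : DominantMode v x₀ t₀ n) (hn : 2 ≤ n)
    (h : BoundedSolution v vt vx vxx t₁ t₂ B C) (h0 : t₀ ∈ Ioo t₁ t₂) {e δ : ℝ} (he : e ≠ 0)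
    (hδ : 0 < δ) : ∀ᶠ ℓ in 𝓝[>] (0 : ℝ), ∃ z₁ z₂, x₀ - δ < z₁ ∧ z₁ < z₂ ∧ z₂ < x₀ + δ ∧
      0 < e * v z₁ (t₀ - ℓ ^ 2 / 2) ∧ e * v z₂ (t₀ - ℓ ^ 2 / 2) < 0 := by
  filter_upwards [hM.eventually_exists_sign_change_of_mul_mode_pos hn h h0 he one_ne_zero hδ,
    hM.eventually_exists_sign_change_of_mul_mode_pos hn h h0 he (neg_ne_zero.2 one_ne_zero) hδ,
    hM.eventually_rescaledMode_ne_zero] with ℓ hpos hneg hne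
  rcases hne.lt_or_gt with hlt | hgt
  · exact hneg (by linarith)
  · exact hpos (by linarith)

end DominantMode

end MultipleZero

/-! ### Loss of sign changes at a multiple zero -/

section ZeroNumberDrop

variable {v vt vx vxx : ℝ → ℝ → ℝ} {t₁ t₂ B C x₀ t₀ : ℝ} {n : ℕ}

lemma exists_gap_of_forall_ne {y : ℕ → ℝ} (hy : Monotone y) {m : ℕ} (hne : ∀ i < m, y i ≠ x₀) :
    ∃ p ≤ m, ∃ δ > 0, (∀ i < p, y i ≤ x₀ - δ) ∧ ∀ i, p ≤ i → i < m → x₀ + δ ≤ y i := by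
  have hex : ∃ i, m ≤ i ∨ x₀ ≤ y i := ⟨m, .inl le_rfl⟩
  have hev : ∀ᶠ δ in 𝓝[>] (0 : ℝ), ∀ i ∈ Finset.range m, δ ≤ |y i - x₀| := by
    refine (Filter.eventually_all_finset _).2 fun i hi => nhdsWithin_le_nhds ?_
    exact eventually_le_nhds (abs_pos.2 (sub_ne_zero.2 (hne i (Finset.mem_range.1 hi))))
  obtain ⟨δ, hδ, hδ0⟩ := (hev.and self_mem_nhdsWithin).exists
  have hgap : ∀ i < m, δ ≤ |y i - x₀| := fun i hi => hδ i (Finset.mem_range.2 hi)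
  have hp : Nat.find hex ≤ m := Nat.find_min' hex (.inl le_rfl)
  refine ⟨Nat.find hex, hp, δ, hδ0, fun i hi => ?_, fun i hpi him => ?_⟩
  · have hlt : y i < x₀ := lt_of_not_ge fun hle => Nat.find_min hex hi (.inr hle)
    have := hgap i (hi.trans_le hp)
    rw [abs_of_neg (sub_neg.2 hlt)] at this
    linarith
  · have hle : x₀ ≤ y i :=
      ((Nat.find_spec hex).resolve_left (hpi.trans_lt him).not_ge).trans (hy hpi)
    have := hgap i him
    rw [abs_of_nonneg (sub_nonneg.2 hle)] at this
    linarith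

lemma realizesPattern_alternating_insert {f : ℝ → ℝ} (hf : Continuous f) {y : ℕ → ℝ}
    (hy : Monotone y) {m p : ℕ} {z₁ z₂ e : ℝ} (hleft : ∀ i < p, y i ≤ z₁)
    (hz : z₁ ≤ z₂) (hright : ∀ i, p ≤ i → i < m → z₂ ≤ y i)
    (hsign : ∀ i < m, 0 < (-1) ^ i * e * f (y i)) (hz₁ : 0 < (-1) ^ p * e * f z₁)
    (hz₂ : (-1) ^ p * e * f z₂ < 0) (hp : p ≤ m) :
    RealizesPattern f (m + 2) fun i => (-1) ^ i * e := by
  set w : ℕ → ℝ := fun j => if j < p then y j else if j = p then z₁ else if j = p + 1 then z₂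
    else max (y (j - 2)) z₂ with hw
  have hmono : Monotone w := by
    refine monotone_nat_of_le_succ fun j => ?_
    simp only [hw]
    split_ifs <;> first
      | omega
      | exact hy (by omega)
      | exact hleft j (by omega)
      | exact hz
      | exact le_max_right _ _
      | exact max_le_max_right _ (hy (by omega))
  refine realizesPattern_of_monotone hf hmono fun i hi => ?_
  simp only [hw]
  split_ifs with hlt heq heq'
  · exact hsign i (hlt.trans_le hp)
  · rw [heq]
    exact hz₁
  · rw [heq', pow_succ]
    linarith
  · obtain ⟨j, rfl⟩ := Nat.exists_eq_add_of_le' (show 2 ≤ i by omega)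
    rw [Nat.add_sub_cancel, max_eq_left (hright j (by omega) (by omega)), pow_add, neg_one_sq,
      mul_one]
    exact hsign j (by omega)

lemma BoundedSolution.realizesPattern_add_two (h : BoundedSolution v vt vx vxx t₁ t₂ B C)
    (h0 : t₀ ∈ Ioo t₁ t₂) (hM : DominantMode v x₀ t₀ n) (hn : 2 ≤ n) (hv : v x₀ t₀ = 0) {m : ℕ}
    {e : ℝ} (he : e = 1 ∨ e = -1)
    (hp : RealizesPattern (fun x => v x t₀) m fun i => (-1) ^ i * e) {t : ℝ}
    (ht : t ∈ Ioo t₁ t₀) :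
    RealizesPattern (fun x => v x t) (m + 2) fun i => (-1) ^ i * e := by
  obtain ⟨y, hy, hsign⟩ := hp
  have hne : ∀ i < m, y i ≠ x₀ := fun i hi heq => by
    have := hsign i hi
    simp [heq, hv] at this
  obtain ⟨p, hpm, δ, hδ, hleft, hright⟩ := exists_gap_of_forall_ne hy.monotone hne
  have htime : Tendsto (fun ℓ : ℝ => t₀ - ℓ ^ 2 / 2) (𝓝[>] 0) (𝓝 t₀) :=
    (Continuous.tendsto' (by fun_prop) _ _ (by simp)).mono_left nhdsWithin_le_nhds
  have hpersist : ∀ᶠ ℓ in 𝓝[>] (0 : ℝ), ∀ i ∈ Finset.range m,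
      0 < (-1) ^ i * e * v (y i) (t₀ - ℓ ^ 2 / 2) := by
    refine (Filter.eventually_all_finset _).2 fun i hi => ?_
    have hcont := (h.hasDerivAt_t (y i) t₀ h0).continuousAt.const_mul ((-1) ^ i * e)
    exact (hcont.tendsto.comp htime).eventually_const_lt (hsign i (Finset.mem_range.1 hi))
  have he0 : (-1) ^ p * e ≠ 0 := by rcases he with rfl | rfl <;> simp
  obtain ⟨ℓ, ⟨z₁, z₂, hz₁, hz, hz₂, hpos, hneg⟩, hsign', htℓ, hℓ⟩ :=
    ((hM.eventually_exists_sign_change hn h h0 he0 hδ).and (hpersist.and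
      ((htime.eventually_const_lt ht.2).and self_mem_nhdsWithin))).exists
  have hℓ2 : t₀ - ℓ ^ 2 / 2 < t₀ := sub_lt_self _ (half_pos (pow_pos hℓ 2))
  have hmem : t₀ - ℓ ^ 2 / 2 ∈ Ioo t₁ t₂ := ⟨ht.1.trans htℓ, hℓ2.trans h0.2⟩
  refine h.realizesPattern_of_lt ht.1 hmem.2 htℓ (fun i _ => alternating_eq_one_or_neg_one he i)
    (realizesPattern_alternating_insert (h.continuous_slice hmem) hy.monotone
      (fun i hi => (hleft i hi).trans hz₁.le) hz.le
      (fun i hpi him => hz₂.le.trans (hright i hpi him))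
      (fun i hi => hsign' i (Finset.mem_range.2 hi)) hpos hneg hpm)

lemma BoundedSolution.signChanges_add_two (h : BoundedSolution v vt vx vxx t₁ t₂ B C)
    (h0 : t₀ ∈ Ioo t₁ t₂) (hM : DominantMode v x₀ t₀ n) (hn : 2 ≤ n) (hv : v x₀ t₀ = 0) {m : ℕ}
    (hm : 1 ≤ m) (hc : SignChanges (fun x => v x t₀) m) {t : ℝ} (ht : t ∈ Ioo t₁ t₀) :
    SignChanges (fun x => v x t) (m + 2) := by
  obtain ⟨e, he, hp⟩ := exists_alternating_of_signChanges hm hc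
  exact signChanges_of_alternating (h.realizesPattern_add_two h0 hM hn hv he hp ht)

lemma BoundedSolution.signChanges_two (h : BoundedSolution v vt vx vxx t₁ t₂ B C)
    (h0 : t₀ ∈ Ioo t₁ t₂) (hM : DominantMode v x₀ t₀ n) (hn : 2 ≤ n) (hv : v x₀ t₀ = 0) {t : ℝ}
    (ht : t ∈ Ioo t₁ t₀) : SignChanges (fun x => v x t) 2 := by
  obtain ⟨x, hx⟩ := (hM.eventually_ne_zero h h0).exists
  obtain ⟨e, he, hpos⟩ := exists_sign_mul_pos hx
  have hsingle : RealizesPattern (fun x => v x t₀) 1 fun i => (-1) ^ i * e :=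
    ⟨fun i => x + i, fun a b hab => by simpa using hab, fun i hi => by
      obtain rfl : i = 0 := by omega
      simpa using hpos⟩
  exact signChanges_of_alternating (h.realizesPattern_add_two h0 hM hn hv he hsingle ht)

lemma zeroNumber_nonneg {w : ℝ → ℝ} (h : ∃ x, w x ≠ 0) : 0 ≤ zeroNumber w := by
  rw [zeroNumber_of_exists_ne_zero h]
  exact WithBot.coe_nonneg.2 zero_le

lemma BoundedSolution.zeroNumber_add_two_le (h : BoundedSolution v vt vx vxx t₁ t₂ B C)
    (h0 : t₀ ∈ Ioo t₁ t₂) (hv : v x₀ t₀ = 0) (hvx : vx x₀ t₀ = 0) {t s : ℝ}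
    (ht : t ∈ Ioo t₁ t₀) (hs : s ∈ Ioo t₀ t₂) (hne : ∃ x, v x t₀ ≠ 0) :
    zeroNumber (fun x => v x s) + 2 ≤ zeroNumber fun x => v x t := by
  obtain ⟨n, hM⟩ := h.exists_dominantMode h0 h0 hne x₀
  have hn := hM.two_le h h0 hv hvx
  rw [zeroNumber_of_exists_ne_zero (h.exists_ne_zero h0 ⟨h0.1.trans hs.1, hs.2⟩ hne),
    zeroNumber_of_exists_ne_zero (h.exists_ne_zero h0 ⟨ht.1, ht.2.trans h0.2⟩ hne)]
  set S := {k : ℕ∞ | ∃ m : ℕ, k = (m : ℕ∞) ∧ 1 ≤ m ∧ SignChanges (fun x => v x s) m}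
  set T := {k : ℕ∞ | ∃ m : ℕ, k = (m : ℕ∞) ∧ 1 ≤ m ∧ SignChanges (fun x => v x t) m}
  have htwo : 2 ≤ sSup T :=
    le_sSup ⟨2, rfl, one_le_two, h.signChanges_two h0 hM hn hv ht⟩
  have hST : sSup S ≤ sSup T - 2 := by
    refine sSup_le ?_
    rintro _ ⟨m, rfl, hm, hc⟩
    have hc₀ := h.signChanges_of_lt h0.1 hs.2 hs.1 hm hc
    exact ENat.le_sub_of_add_le_right (ENat.natCast_ne_top 2) (le_sSup ⟨m + 2, by push_cast; rfl,
      by omega, h.signChanges_add_two h0 hM hn hv hm hc₀ ht⟩)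
  refine WithBot.coe_le_coe.2 ?_
  calc sSup S + 2 ≤ sSup T - 2 + 2 := by gcongr
    _ = sSup T := tsub_add_cancel_of_le htwo

end ZeroNumberDrop

end ZeroNumber

/-- **Lemma 2.2** (zero-number properties for linear parabolic equations). For a bounded,
not identically vanishing classical solution `v` of `v_t = v_xx + c(x,t) v` on `ℝ × (t₁,t₂)`
with bounded coefficient `c`: the zeros of `v(·,t)` do not accumulate; `Z[v(·,t)]` and the
realized sign patterns are nonincreasing in `t`; and a degenerate zero drops `Z` by at least 2. -/
theorem zero_number_linear_parabolic
    (t₁ t₂ : ℝ) (ht : t₁ < t₂) (c v : ℝ → ℝ → ℝ)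
    (hcbd : ∃ C : ℝ, ∀ x t : ℝ, t ∈ Set.Ioo t₁ t₂ → |c x t| ≤ C)
    (hvbd : ∃ C : ℝ, ∀ x t : ℝ, t ∈ Set.Ioo t₁ t₂ → |v x t| ≤ C)
    (hsol : ∃ vt vx vxx : ℝ → ℝ → ℝ,
      (∀ x : ℝ, ∀ t ∈ Set.Ioo t₁ t₂, HasDerivAt (fun s => v x s) (vt x t) t) ∧
      (∀ x : ℝ, ∀ t ∈ Set.Ioo t₁ t₂, HasDerivAt (fun y => v y t) (vx x t) x) ∧
      (∀ x : ℝ, ∀ t ∈ Set.Ioo t₁ t₂, HasDerivAt (fun y => vx y t) (vxx x t) x) ∧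
      ContinuousOn (fun p : ℝ × ℝ => vt p.1 p.2) (Set.univ ×ˢ Set.Ioo t₁ t₂) ∧
      ContinuousOn (fun p : ℝ × ℝ => vx p.1 p.2) (Set.univ ×ˢ Set.Ioo t₁ t₂) ∧
      ContinuousOn (fun p : ℝ × ℝ => vxx p.1 p.2) (Set.univ ×ˢ Set.Ioo t₁ t₂) ∧
      (∀ x : ℝ, ∀ t ∈ Set.Ioo t₁ t₂, vt x t = vxx x t + c x t * v x t))
    (hne : ∃ x t : ℝ, t ∈ Set.Ioo t₁ t₂ ∧ v x t ≠ 0) :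
    (∀ t ∈ Set.Ioo t₁ t₂, ∀ x₀ : ℝ, ¬ AccPt x₀ (Filter.principal {x : ℝ | v x t = 0})) ∧
    (∀ t'' ∈ Set.Ioo t₁ t₂, ∀ t' ∈ Set.Ioo t₁ t₂, t'' < t' →
      zeroNumber (fun x => v x t') ≤ zeroNumber (fun x => v x t'') ∧
      ∀ (m : ℕ) (ε : ℕ → ℝ), (∀ i < m, ε i = 1 ∨ ε i = -1) →
        RealizesPattern (fun x => v x t') m ε → RealizesPattern (fun x => v x t'') m ε) ∧
    (∀ x' : ℝ, ∀ t' ∈ Set.Ioo t₁ t₂, v x' t' = 0 → deriv (fun y => v y t') x' = 0 →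
      ∀ t ∈ Set.Ioo t₁ t', ∀ s ∈ Set.Ioo t' t₂,
        zeroNumber (fun x => v x t) ≠ ⊤ →
        (0 : WithBot ℕ∞) ≤ zeroNumber (fun x => v x s) ∧
        zeroNumber (fun x => v x s) + 2 ≤ zeroNumber (fun x => v x t)) := by
  obtain ⟨C, hC⟩ := hcbd
  obtain ⟨B, hB⟩ := hvbd
  obtain ⟨vt, vx, vxx, hdt, hdx, hdxx, hct, hcx, hcxx, heq⟩ := hsol
  obtain ⟨x₁, τ, hτ, hx₁⟩ := hne
  have h : ZeroNumber.BoundedSolution v vt vx vxx t₁ t₂ B |C| :=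
    { toHasParabolicDerivs := ⟨hdt, hdx, hdxx, hct, hcx, hcxx⟩
      abs_le := hB
      nonneg := abs_nonneg C
      abs_heat_le := fun x t ht => by
        rw [heq x t ht, add_sub_cancel_left, abs_mul]
        exact mul_le_mul_of_nonneg_right ((hC x t ht).trans (le_abs_self C)) (abs_nonneg _) }
  have hne : ∀ t ∈ Ioo t₁ t₂, ∃ x, v x t ≠ 0 := fun t ht => h.exists_ne_zero hτ ht ⟨x₁, hx₁⟩
  refine ⟨fun t ht => h.not_accPt_zeros ht (hne t ht), fun t'' ht'' t' ht' hlt =>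
    ⟨h.zeroNumber_le_of_lt ht''.1 ht'.2 hlt, fun m ε hε =>
      h.realizesPattern_of_lt ht''.1 ht'.2 hlt hε⟩, fun x' t' ht' hv hd t ht s hs _ => ?_⟩
  rw [(hdx x' t' ht').deriv] at hd
  exact ⟨ZeroNumber.zeroNumber_nonneg (hne s ⟨ht'.1.trans hs.1, hs.2⟩),
    h.zeroNumber_add_two_le ht' hv hd ht hs (hne t' ht')⟩

end
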